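/- arXiv:2309.13768 — 2 statements merged into one kernel-verified Lean document; each statement's English description precedes it below -/
import Mathlib

section
/- Let p, q be integers with min(p,q) ≥ 2. Let Ω = {Z ∈ M_{p×q}(ℂ) : I_p − Z Z^H is positive definite} be the type I classical domain with generic norm N(Z) = det(I_p − Z Z^H), and let Σ = {(Z,ξ) ∈ Ω × ℂ : |ξ|² = N(Z)} and D = {(Z,ξ) ∈ Ω × ℂ : |ξ|² < N(Z)}, subsets of M_{p×q}(ℂ) × ℂ. Let U ⊆ M_{p×q}(ℂ) × ℂ be a connected open set with U ∩ Σ ≠ ∅ and let F : U → M_{p×q}(ℂ) × ℂ be a nonconstant holomorphic map with F(U ∩ Σ) ⊆ Σ. Then there exist a biholomorphism ψ : Ω → Ω and a holomorphic function φ : Ω → ℂ with φ(Z) ≠ 0 for all Z ∈ Ω, such that det(I_p − ψ(Z)ψ(Z)^H) = |φ(Z)|²·det(I_p − Z Z^H) for all Z ∈ Ω, and the map (Z,ξ) ↦ (ψ(Z), ξ·φ(Z)) coincides with F on some nonempty open subset of U; in particular this map is a biholomorphism from D onto D. -/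
noncomputable section

open Complex Matrix
open scoped ComplexOrder

/-- `Biholo f s t`: `f` is a biholomorphism from `s` onto `t`. -/
def Biholo {E F : Type*} [NormedAddCommGroup E] [NormedSpace ℂ E]
    [NormedAddCommGroup F] [NormedSpace ℂ F]
    (f : E → F) (s : Set E) (t : Set F) : Prop :=
  DifferentiableOn ℂ f s ∧ Set.MapsTo f s t ∧
    ∃ g : F → E, DifferentiableOn ℂ g t ∧ Set.MapsTo g t s ∧
      Set.LeftInvOn g f s ∧ Set.RightInvOn g f t

/-- The type I classical domain `D^I_{p,q} = {Z : I_p − Z Zᴴ is positive definite}`,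
with `p × q` matrices identified with `Fin p → Fin q → ℂ`. -/
def typeIDomain (p q : ℕ) : Set (Fin p → Fin q → ℂ) :=
  {Z | ((1 : Matrix (Fin p) (Fin p) ℂ) - Matrix.of Z * (Matrix.of Z)ᴴ).PosDef}

/-- The generic norm `N(Z) = det(I_p − Z Zᴴ)` of the type I domain (its real part;
the determinant is real on the domain since `I_p − Z Zᴴ` is Hermitian). -/
def genNormI {p q : ℕ} (Z : Fin p → Fin q → ℂ) : ℝ :=
  (((1 : Matrix (Fin p) (Fin p) ℂ) - Matrix.of Z * (Matrix.of Z)ᴴ).det).re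

/-- The circle bundle `Σ = {(Z,ξ) ∈ Ω × ℂ : |ξ|² = N(Z)}`. -/
def circTypeI (p q : ℕ) : Set ((Fin p → Fin q → ℂ) × ℂ) :=
  {P | P.1 ∈ typeIDomain p q ∧ Complex.normSq P.2 = genNormI P.1}

/-- The disc bundle `D = {(Z,ξ) ∈ Ω × ℂ : |ξ|² < N(Z)}`. -/
def discTypeI (p q : ℕ) : Set ((Fin p → Fin q → ℂ) × ℂ) :=
  {P | P.1 ∈ typeIDomain p q ∧ Complex.normSq P.2 < genNormI P.1}

/-!
The equation `|ξ|² = N(Z)` is `u + conj u = log N(Z)` in the logarithmic fiber coordinate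
`u = log ξ`. Replacing `star Z` by an independent variable `W` polarizes it: the map `Φ` induced by
`F` satisfies the polarized equation and therefore carries the Segre varieties
`u = log det (1 - Z Wᵀ) + const` to Segre varieties. Their slopes `Wᵀ (1 - Z Wᵀ)⁻¹` fill an open
set of matrices, so if the image of the vertical direction is transversal to the contact
distribution somewhere, comparing second-order jets gives a quadratic identity in the slope which
then holds for all slopes. In rank at least two it forces the differential of `Φ` to fix the
vertical vector `(0, 1)`. Without transversality the differential vanishes identically and `F` is
constant. Hence `F (Z, ξ) = (f Z, ξ φ(Z))` near some point of the circle bundle, and then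
`N(f Z) = |φ Z|² N(Z)`.

It remains to extend `(f, φ)` to an automorphism. The fractional linear maps of pseudo-unitary
matrices act transitively on the domain and rescale `N`, so one may assume that `f` fixes the
origin. Polarizing again, `det (1 - f(Z) f̄(W)ᵀ) = det (1 - Z Wᵀ)`; the first derivatives in `W` at
`0` show that `f` is linear, and a linear map preserving the polarized norm preserves the domain.
-/

open Filter Topology

section SeveralVariables

open Metric

variable {E F : Type*} [NormedAddCommGroup E] [NormedSpace ℂ E]
  [NormedAddCommGroup F] [NormedSpace ℂ F]

lemma norm_fderiv_le_of_ball {f : E → F} {y : E} {ρ C : ℝ} (hρ : 0 < ρ)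
    (hf : DifferentiableOn ℂ f (ball y ρ)) (hC : ∀ x ∈ ball y ρ, ‖f x‖ ≤ C) :
    ‖fderiv ℂ f y‖ ≤ (C + C) / ρ :=
  norm_fderiv_le_div_of_mapsTo_ball hf (fun x hx => mem_closedBall_iff_norm.2
    ((norm_sub_le _ _).trans (add_le_add (hC x hx) (hC y (mem_ball_self hρ))))) hρ

lemma uniformCauchySeqOn_fderiv {ι : Type*} {l : Filter ι} {f : ι → E → F} {s U : Set E} {r : ℝ}
    (hr : 0 < r) (hs : ∀ y ∈ s, ball y r ⊆ U) (hf : ∀ᶠ i in l, DifferentiableOn ℂ (f i) U)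
    (hfc : UniformCauchySeqOn f l U) : UniformCauchySeqOn (fun i => fderiv ℂ (f i)) l s := by
  intro u hu
  obtain ⟨ε, hε, hεu⟩ := Metric.mem_uniformity_dist.1 hu
  have hclose := hfc _ (dist_mem_uniformity (by positivity : 0 < ε * r / 4))
  filter_upwards [hclose, hf.prod_mk hf] with ij hij hd y hy
  have hat : ∀ i, DifferentiableOn ℂ (f i) U → DifferentiableAt ℂ (f i) y := fun i hi =>
    (hi.mono (hs y hy)).differentiableAt (ball_mem_nhds y hr)
  refine hεu ?_
  rw [dist_eq_norm, ← fderiv_sub (hat _ hd.1) (hat _ hd.2)]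
  refine (norm_fderiv_le_of_ball hr ((hd.1.sub hd.2).mono (hs y hy)) fun z hz => ?_).trans_lt
    (?_ : (ε * r / 4 + ε * r / 4) / r < ε)
  · simpa [dist_eq_norm] using (hij z (hs y hy hz)).le
  · field_simp
    linarith

lemma differentiableOn_of_tendstoUniformlyOn [CompleteSpace F] {ι : Type*} {l : Filter ι} [l.NeBot]
    {f : ι → E → F} {g : E → F} {U : Set E} (hU : IsOpen U)
    (hf : ∀ᶠ i in l, DifferentiableOn ℂ (f i) U) (hfg : TendstoUniformlyOn f g l U) :
    DifferentiableOn ℂ g U := by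
  intro x hx
  obtain ⟨r, hr, hrU⟩ := Metric.isOpen_iff.1 hU x hx
  have hball : ball x (r / 2) ∈ 𝓝 x := ball_mem_nhds x (half_pos hr)
  have hsub : ∀ y ∈ ball x (r / 2), ball y (r / 2) ⊆ U := fun y hy =>
    (ball_subset_ball' (by linarith [mem_ball.1 hy])).trans hrU
  have hmem : ∀ y ∈ ball x (r / 2), y ∈ U := fun y hy => hsub y hy (mem_ball_self (half_pos hr))
  have hcauchy := uniformCauchySeqOn_fderiv (half_pos hr) hsub hf hfg.uniformCauchySeqOn
  choose! g' hg' using fun y (hy : y ∈ ball x (r / 2)) =>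
    CompleteSpace.complete (hcauchy.cauchy_map hy)
  have hderiv : HasFDerivAt g (g' x) x := by
    apply hasFDerivAt_of_tendstoUniformlyOnFilter (l := l) (f := f)
    · exact (hcauchy.tendstoUniformlyOn_of_tendsto hg').tendstoUniformlyOnFilter.mono_right
        (le_principal_iff.2 hball)
    · filter_upwards [hf.prod_mk hball] with iy h
      exact (h.1.differentiableAt (hU.mem_nhds (hmem _ h.2))).hasFDerivAt
    · filter_upwards [hball] with y hy using hfg.tendsto_at (hmem y hy)
  exact hderiv.differentiableAt.differentiableWithinAt

/-- The Schwarz lemma for maps vanishing to second order bounds the Taylor remainder. -/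
lemma norm_sub_sub_fderiv_le {f : E → F} {x v : E} {R C : ℝ}
    (hf : DifferentiableOn ℂ f (ball x R)) (hC : ∀ y ∈ ball x R, ‖f y‖ ≤ C) (hv : ‖v‖ < R) :
    ‖f (x + v) - f x - fderiv ℂ f x v‖ ≤ 4 * C * (‖v‖ / R) ^ 2 := by
  have hR : 0 < R := (norm_nonneg v).trans_lt hv
  have hx : DifferentiableAt ℂ f x := hf.differentiableAt (ball_mem_nhds x hR)
  have hfd := norm_fderiv_le_of_ball hR hf hC
  set g : E → F := fun y => f y - fderiv ℂ f x (y - x)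
  have hgx : g x = f x := by simp [g]
  have hg : DifferentiableOn ℂ g (ball x R) := hf.sub (by fun_prop)
  have hmaps : Set.MapsTo g (ball x R) (closedBall (g x) (4 * C)) := by
    intro y hy
    have hlin := (fderiv ℂ f x).le_of_opNorm_le hfd (y - x)
    have hconst : (C + C) / R * ‖y - x‖ ≤ C + C := by
      have hC0 : 0 ≤ C := (norm_nonneg _).trans (hC x (mem_ball_self hR))
      rw [div_mul_eq_mul_div, div_le_iff₀ hR]
      gcongr
      exact (mem_ball_iff_norm.1 hy).le
    rw [mem_closedBall_iff_norm, hgx]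
    calc ‖f y - fderiv ℂ f x (y - x) - f x‖ ≤ ‖f y‖ + ‖fderiv ℂ f x (y - x)‖ + ‖f x‖ :=
          (norm_sub_le _ _).trans (add_le_add_left (norm_sub_le _ _) _)
      _ ≤ 4 * C := by linarith [hC y hy, hC x (mem_ball_self hR)]
  have ho : (g · - g x) =o[𝓝 x] fun y => ‖y - x‖ ^ 1 := by
    simpa [hgx, g, sub_right_comm] using hx.hasFDerivAt.isLittleO.norm_right
  have := dist_le_mul_div_pow_of_mapsTo_ball_of_isLittleO hg hmaps ho
    (by simpa [mem_ball_iff_norm] using hv : x + v ∈ ball x R)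
  simpa [dist_eq_norm, hgx, g, sub_right_comm] using this

lemma tendstoUniformlyOn_differenceQuotient {f : E → F} {R C : ℝ} {s : Set E} (hR : 0 < R)
    (hf : ∀ x ∈ s, DifferentiableOn ℂ f (ball x R)) (hC : ∀ x ∈ s, ∀ y ∈ ball x R, ‖f y‖ ≤ C)
    (v : E) : TendstoUniformlyOn (fun (t : ℂ) x => t⁻¹ • (f (x + t • v) - f x))
      (fun x => fderiv ℂ f x v) (𝓝[≠] 0) s := by
  rw [Metric.tendstoUniformlyOn_iff]
  intro ε hε
  have hsmall : ∀ᶠ t : ℂ in 𝓝 0, ‖t • v‖ < R ∧ ‖t‖ * (4 * C * (‖v‖ / R) ^ 2) < ε := by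
    refine .and ?_ ?_
    · exact ((continuous_id.smul continuous_const).norm.tendsto' 0 0 (by simp)).eventually
        (gt_mem_nhds hR)
    · exact ((continuous_norm.mul continuous_const).tendsto' 0 0 (by simp)).eventually
        (gt_mem_nhds hε)
  filter_upwards [hsmall.filter_mono nhdsWithin_le_nhds, self_mem_nhdsWithin] with t ht ht0 x hx
  have ht0 : t ≠ 0 := ht0
  have hrem := norm_sub_sub_fderiv_le (hf x hx) (hC x hx) ht.1
  have hquot : t⁻¹ • (f (x + t • v) - f x) - fderiv ℂ f x v =
      t⁻¹ • (f (x + t • v) - f x - fderiv ℂ f x (t • v)) := by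
    rw [map_smul, smul_sub t⁻¹ (f (x + t • v) - f x), inv_smul_smul₀ ht0]
  rw [dist_comm, dist_eq_norm, hquot, norm_smul, norm_inv]
  calc ‖t‖⁻¹ * _ ≤ ‖t‖⁻¹ * (4 * C * (‖t • v‖ / R) ^ 2) := by gcongr
    _ = ‖t‖ * (4 * C * (‖v‖ / R) ^ 2) := by
      rw [norm_smul]
      field_simp [norm_ne_zero_iff.2 ht0]
    _ < ε := ht.2

lemma differentiableAt_fderiv_of_eventually [FiniteDimensional ℂ E] [CompleteSpace F]
    {f : E → F} {x₀ : E} (hf : ∀ᶠ x in 𝓝 x₀, DifferentiableAt ℂ f x) :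
    DifferentiableAt ℂ (fderiv ℂ f) x₀ := by
  let b := Module.finBasis ℂ E
  let e : (E →L[ℂ] F) ≃L[ℂ] (Fin (Module.finrank ℂ E) → F) :=
    (b.equivFunL.arrowCongr (.refl ℂ F)).trans (ContinuousLinearEquiv.piRing _)
  suffices h : ∀ v, DifferentiableAt ℂ (fun x => fderiv ℂ f x v) x₀ by
    rw [← e.comp_differentiableAt_iff, differentiableAt_pi]
    exact fun i => h _
  intro v
  have hbd : ∀ᶠ x in 𝓝 x₀, ‖f x‖ < ‖f x₀‖ + 1 :=
    hf.self_of_nhds.continuousAt.norm.eventually (gt_mem_nhds (lt_add_one _))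
  obtain ⟨r, hr, hball⟩ := Metric.eventually_nhds_iff_ball.1 (hf.and hbd)
  have hsub : ∀ x ∈ ball x₀ (r / 2), ball x (r / 2) ⊆ ball x₀ r := fun x hx =>
    ball_subset_ball' (by linarith [mem_ball.1 hx])
  refine (differentiableOn_of_tendstoUniformlyOn isOpen_ball ?_
    (tendstoUniformlyOn_differenceQuotient (half_pos hr)
      (fun x hx y hy => (hball y (hsub x hx hy)).1.differentiableWithinAt)
      (fun x hx y hy => (hball y (hsub x hx hy)).2.le) v)).differentiableAt
    (ball_mem_nhds x₀ (half_pos hr))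
  have hsmall : ∀ᶠ t : ℂ in 𝓝[≠] 0, ‖t • v‖ < r / 2 :=
    (((continuous_id.smul continuous_const).norm.tendsto' 0 0 (by simp)).eventually
      (gt_mem_nhds (half_pos hr))).filter_mono nhdsWithin_le_nhds
  filter_upwards [hsmall] with t ht x hx
  have hxt : DifferentiableAt ℂ f (x + t • v) :=
    (hball _ (hsub x hx (by simpa [mem_ball_iff_norm] using ht))).1
  have hx' : DifferentiableAt ℂ f x := (hball x (ball_subset_ball (by linarith) hx)).1
  have hshift : DifferentiableAt ℂ (fun y => f (y + t • v)) x :=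
    (differentiableAt_comp_add_right (t • v)).2 hxt
  exact ((hshift.sub hx').const_smul t⁻¹).differentiableWithinAt

lemma eqOn_zero_of_convex_of_eventually [CompleteSpace F] {B : Set E} (hB : Convex ℝ B)
    (hBo : IsOpen B) {G : E → F} (hG : DifferentiableOn ℂ G B) {y : E} (hy : y ∈ B)
    (h0 : ∀ᶠ x in 𝓝 y, G x = 0) : Set.EqOn G 0 B := by
  intro z hz
  let l : ℂ → E := fun t => t • (z - y) + y
  have hl : Differentiable ℂ l := by fun_prop
  have hl0 : l 0 = y := by simp [l]
  have hl1 : l 1 = z := by simp [l]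
  have hconn : IsPreconnected (l ⁻¹' B) := ((hB.translate_preimage_left y).linear_preimage
    ((LinearMap.toSpanSingleton ℂ E (z - y)).restrictScalars ℝ)).isPreconnected
  have hd : DifferentiableOn ℂ (G ∘ l) (l ⁻¹' B) :=
    hG.comp hl.differentiableOn fun t ht => ht
  have hev : ∀ᶠ t in 𝓝 (0 : ℂ), (G ∘ l) t = 0 :=
    (hl.continuous.tendsto' 0 y hl0).eventually h0
  have hana := hd.analyticOnNhd (hBo.preimage hl.continuous)
  have := hana.eqOn_zero_of_preconnected_of_eventuallyEq_zero hconn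
    (by simpa [hl0] using hy : (0 : ℂ) ∈ l ⁻¹' B) hev (by simpa [hl1] using hz : (1 : ℂ) ∈ l ⁻¹' B)
  simpa [hl1] using this

lemma eqOn_const_of_eventually [CompleteSpace F] {U : Set E} (hU : IsOpen U)
    (hUc : IsPreconnected U) {G : E → F} (hG : DifferentiableOn ℂ G U) {y : E} (hy : y ∈ U)
    {c : F} (h0 : ∀ᶠ x in 𝓝 y, G x = c) : Set.EqOn G (fun _ => c) U := by
  have hsub : U ⊆ {x | ∀ᶠ x' in 𝓝 x, G x' = c} := by
    apply hUc.subset_of_closure_inter_subset isOpen_setOfPred_eventually_nhds ⟨y, hy, h0⟩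
    rintro x ⟨hx, hxU⟩
    obtain ⟨r, hr, hrU⟩ := Metric.isOpen_iff.1 hU x hxU
    obtain ⟨w, hw, hwx⟩ := Metric.mem_closure_iff.1 hx r hr
    have hzero := eqOn_zero_of_convex_of_eventually (convex_ball x r) isOpen_ball
      ((hG.mono hrU).sub_const c) (mem_ball'.2 hwx) (hw.mono fun x' => sub_eq_zero.2)
    filter_upwards [ball_mem_nhds x hr] with z hz using sub_eq_zero.1 (hzero hz)
  exact fun x hx => (hsub hx).self_of_nhds

lemma eqOn_zero_of_eventually_ofReal_eq_zero [CompleteSpace F] {U : Set ℂ} (hU : IsOpen U)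
    (hUc : IsPreconnected U) {k : ℂ → F} (hk : DifferentiableOn ℂ k U) (h0 : 0 ∈ U)
    (hreal : ∀ᶠ t : ℝ in 𝓝 0, k t = 0) : Set.EqOn k 0 U := by
  have ht : Tendsto ((↑) : ℝ → ℂ) (𝓝[≠] 0) (𝓝[≠] 0) :=
    tendsto_nhdsWithin_iff.2 ⟨(continuous_ofReal.tendsto' 0 0 ofReal_zero).mono_left
      nhdsWithin_le_nhds, by filter_upwards [self_mem_nhdsWithin] with t ht using by simpa using ht⟩
  exact (hk.analyticOnNhd hU).eqOn_zero_of_preconnected_of_frequently_eq_zero hUc h0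
    (ht.frequently (hreal.filter_mono nhdsWithin_le_nhds).frequently)

lemma norm_half_smul_add_half_smul_lt {x y : E} {t : ℂ} {r : ℝ} (ht : ‖t‖ < 2)
    (hx : ‖x‖ < r / 4) (hy : ‖y‖ < r / 4) :
    ‖((1 - I * t) / 2) • x + ((1 + I * t) / 2) • y‖ < r := by
  have hIt : ‖I * t‖ < 2 := by simpa using ht
  have hsub : ‖(1 - I * t) / 2‖ ≤ 3 / 2 := by
    have := norm_sub_le 1 (I * t)
    rw [norm_one] at this
    rw [norm_div, RCLike.norm_ofNat]
    linarith
  have hadd : ‖(1 + I * t) / 2‖ ≤ 3 / 2 := by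
    have := norm_add_le 1 (I * t)
    rw [norm_one] at this
    rw [norm_div, RCLike.norm_ofNat]
    linarith
  calc ‖((1 - I * t) / 2) • x + ((1 + I * t) / 2) • y‖
      ≤ ‖((1 - I * t) / 2) • x‖ + ‖((1 + I * t) / 2) • y‖ := norm_add_le _ _
    _ ≤ 3 / 2 * ‖x‖ + 3 / 2 * ‖y‖ := by
      rw [norm_smul, norm_smul]
      gcongr
    _ < r := by linarith [norm_nonneg x]

/-- Fixed points of a conjugation form a maximally totally real set, hence a uniqueness set. -/
lemma eventually_eq_zero_of_fixed [CompleteSpace F] {σ : E ≃ₗᵢ⋆[ℂ] E} (hσ : Function.Involutive σ)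
    {x₀ : E} (hx₀ : σ x₀ = x₀) {K : E → F} (hK : ∀ᶠ x in 𝓝 x₀, DifferentiableAt ℂ K x)
    (h0 : ∀ᶠ x in 𝓝 x₀, σ x = x → K x = 0) : ∀ᶠ x in 𝓝 x₀, K x = 0 := by
  obtain ⟨r, hr, hball⟩ := Metric.eventually_nhds_iff_ball.1 (hK.and h0)
  filter_upwards [ball_mem_nhds x₀ (by positivity : 0 < r / 4)] with z hz
  -- The complex line `a + t b`, where `z = a + i b` with `a` and `b` fixed by `σ`.
  let l : ℂ → E := fun t => ((1 - I * t) / 2) • z + ((1 + I * t) / 2) • σ z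
  have hl : Differentiable ℂ l := by fun_prop
  have hlI : l I = z := by simp [l]
  have hlfix : ∀ t : ℝ, σ (l t) = l t := by
    intro t
    simp [l, map_smulₛₗ, hσ z, add_comm, conj_ofNat, sub_eq_add_neg]
  have hmem : ∀ t ∈ ball (0 : ℂ) 2, l t ∈ ball x₀ r := by
    intro t ht
    have hσz : σ z ∈ ball x₀ (r / 4) := by
      rwa [← hx₀, mem_ball_iff_norm, ← map_sub, LinearIsometryEquiv.norm_map, ← mem_ball_iff_norm]
    have hsub : l t - x₀ = ((1 - I * t) / 2) • (z - x₀) + ((1 + I * t) / 2) • (σ z - x₀) := by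
      simp only [l]
      module
    rw [mem_ball_iff_norm, hsub]
    exact norm_half_smul_add_half_smul_lt (by simpa using ht) (mem_ball_iff_norm.1 hz)
      (mem_ball_iff_norm.1 hσz)
  have hd : DifferentiableOn ℂ (K ∘ l) (ball 0 2) := fun t ht =>
    ((hball _ (hmem t ht)).1.comp t (hl t)).differentiableWithinAt
  have hreal : ∀ᶠ t : ℝ in 𝓝 0, (K ∘ l) t = 0 := by
    filter_upwards [ball_mem_nhds (0 : ℝ) two_pos] with t ht
    exact (hball _ (hmem t (by simpa using ht))).2 (hlfix t)
  simpa [hlI] using eqOn_zero_of_eventually_ofReal_eq_zero isOpen_ball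
    (convex_ball (0 : ℂ) 2).isPreconnected hd (by simp) hreal (by simp : I ∈ ball (0 : ℂ) 2)

end SeveralVariables

lemma linearMap_eq_zero_of_eventually {E F : Type*} [TopologicalSpace E] [AddCommGroup E]
    [Module ℂ E] [ContinuousAdd E] [ContinuousSMul ℂ E] [AddCommGroup F] [Module ℂ F]
    {f : E →ₗ[ℂ] F} {x₀ : E} {c : F} (h : ∀ᶠ x in 𝓝 x₀, f x = c) : f = 0 := by
  refine LinearMap.ext fun v => ?_
  have hline : Tendsto (fun t : ℂ => x₀ + t • v) (𝓝[≠] 0) (𝓝 x₀) :=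
    ((by fun_prop : Continuous fun t : ℂ => x₀ + t • v).tendsto' 0 x₀ (by simp)).mono_left
      nhdsWithin_le_nhds
  obtain ⟨t, ht, ht0⟩ := ((hline.eventually h).and self_mem_nhdsWithin).exists
  rw [map_add, h.self_of_nhds, map_smul, add_eq_left] at ht
  exact (smul_eq_zero.1 ht).resolve_left ht0

section TracePairing

variable {m n : Type*} [Fintype m] [Fintype n]

/-- The trace pairing `(v, S) ↦ tr (v S)` of tangent vectors with slopes. -/
def trPair : (m → n → ℂ) →ₗ[ℂ] Matrix n m ℂ →ₗ[ℂ] ℂ :=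
  LinearMap.mk₂ ℂ (fun v S => (of v * S).trace)
    (fun v w S => by rw [← of_add_of, Matrix.add_mul, trace_add])
    (fun c v S => by rw [← smul_of, Matrix.smul_mul, trace_smul])
    (fun v S T => by rw [Matrix.mul_add, trace_add])
    (fun c v S => by rw [Matrix.mul_smul, trace_smul])

lemma trPair_apply (v : m → n → ℂ) (S : Matrix n m ℂ) : trPair v S = (of v * S).trace := rfl

lemma trPair_eq_sum (v : m → n → ℂ) (S : Matrix n m ℂ) :
    trPair v S = ∑ i, ∑ j, v i j * S j i := by
  simp only [trPair_apply, Matrix.trace, Matrix.diag_apply, Matrix.mul_apply, of_apply]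

/-- The quadratic form `tr ((v S)²)`; up to sign it is the second derivative of `log det (1 + v S)`
along rays, which is why it occurs in the second-order jets of the circle bundle. -/
def trPairSq (v : m → n → ℂ) (S : Matrix n m ℂ) : ℂ := (of v * S * (of v * S)).trace

lemma trPairSq_smul_right (v : m → n → ℂ) (c : ℂ) (S : Matrix n m ℂ) :
    trPairSq v (c • S) = c ^ 2 * trPairSq v S := by
  simp only [trPairSq, Matrix.mul_smul, Matrix.smul_mul, trace_smul, smul_eq_mul]
  ring

/-- Twice the second elementary symmetric function of the eigenvalues of `v S`: the trace pairing of
the second compound matrices of `v` and `S`, up to the factor `2`. -/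
def minorPair (v : m → n → ℂ) (S : Matrix n m ℂ) : ℂ := trPair v S ^ 2 - trPairSq v S

lemma trPairSq_add_right (v : m → n → ℂ) (S R : Matrix n m ℂ) :
    trPairSq v (S + R) = trPairSq v S + trPairSq v R + 2 * (of v * S * (of v * R)).trace := by
  have hcomm : (of v * R * (of v * S)).trace = (of v * S * (of v * R)).trace := trace_mul_comm _ _
  simp only [trPairSq, Matrix.mul_add, Matrix.add_mul, trace_add, hcomm]
  ring

lemma minorPair_add_right (v : m → n → ℂ) (S R : Matrix n m ℂ) :
    minorPair v (S + R) = minorPair v S + minorPair v R +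
      2 * (trPair v S * trPair v R - (of v * S * (of v * R)).trace) := by
  simp only [minorPair, trPairSq_add_right, map_add]
  ring

section ElementaryMatrices

variable [DecidableEq m] [DecidableEq n]

/-- The elementary matrix with entry `1` at `(i, j)`, as a tangent vector. -/
def elem {m n : Type*} [DecidableEq m] [DecidableEq n] (i : m) (j : n) : m → n → ℂ :=
  Pi.single i (Pi.single j 1)

lemma of_elem {m n : Type*} [DecidableEq m] [DecidableEq n] (i : m) (j : n) :
    of (elem i j) = Matrix.single i j (1 : ℂ) := by
  ext a b
  simp [elem, Matrix.single_apply, Pi.single_apply, ite_apply, ite_and, eq_comm]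

lemma sum_smul_elem (v : m → n → ℂ) : ∑ i, ∑ j, v i j • elem i j = v := by
  ext a b
  simp [elem, Finset.sum_apply, Pi.single_apply, ite_apply, Finset.sum_ite_eq]

lemma trPair_elem (i : m) (j : n) (S : Matrix n m ℂ) : trPair (elem i j) S = S j i := by
  rw [trPair_apply, of_elem, trace_mul_comm, trace_mul_single]
  simp

lemma trPair_single (v : m → n → ℂ) (i : m) (j : n) (c : ℂ) :
    trPair v (Matrix.single j i c) = c * v i j := by
  simp [trPair_apply, trace_mul_single, mul_comm]

lemma trPairSq_elem (i : m) (j : n) (S : Matrix n m ℂ) : trPairSq (elem i j) S = S j i ^ 2 := by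
  rw [trPairSq, of_elem, ← Matrix.mul_assoc, trace_mul_comm, Matrix.single_mul_mul_single,
    Matrix.trace_mul_single]
  simp [pow_two]

lemma trPairSq_single_one (v : m → n → ℂ) (i : m) (j : n) :
    trPairSq v (Matrix.single j i 1) = v i j ^ 2 := by
  rw [trPairSq, Matrix.mul_assoc, ← Matrix.mul_assoc (Matrix.single j i (1 : ℂ)),
    Matrix.single_mul_mul_single, Matrix.trace_mul_single]
  simp [pow_two]

end ElementaryMatrices

lemma eq_zero_of_trPair_eq_zero {v : m → n → ℂ} (h : ∀ S, trPair v S = 0) : v = 0 := by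
  classical
  ext i j
  simpa [trPair_single] using h (Matrix.single j i 1)

lemma trPair_flip_bijective : Function.Bijective (trPair (m := m) (n := n)).flip := by
  classical
  refine ⟨fun S T h => ?_, fun l => ⟨of fun j i => l (elem i j), ?_⟩⟩
  · ext j i
    simpa only [LinearMap.flip_apply, trPair_elem] using LinearMap.congr_fun h (elem i j)
  · refine LinearMap.ext fun v => ?_
    rw [LinearMap.flip_apply, ← sum_smul_elem v]
    simp only [map_sum, map_smul, LinearMap.sum_apply, LinearMap.smul_apply, trPair_elem, of_apply]

/-- The identification of slopes with linear forms on tangent vectors by the trace pairing. -/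
def trDual : Matrix n m ℂ ≃ₗ[ℂ] Module.Dual ℂ (m → n → ℂ) :=
  LinearEquiv.ofBijective trPair.flip trPair_flip_bijective

lemma trDual_apply (S : Matrix n m ℂ) (v : m → n → ℂ) : trDual S v = trPair v S := rfl

lemma exists_trPair_eq (l : (m → n → ℂ) →ₗ[ℂ] ℂ) : ∃ S, ∀ v, trPair v S = l v :=
  ⟨trDual.symm l, fun v => by rw [← trDual_apply, LinearEquiv.apply_symm_apply]⟩

lemma exists_linearEquiv_trPair_eq (T : (m → n → ℂ) ≃ₗ[ℂ] (m → n → ℂ)) :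
    ∃ B : Matrix n m ℂ ≃ₗ[ℂ] Matrix n m ℂ, ∀ v S, trPair (T v) (B S) = trPair v S :=
  ⟨trDual ≪≫ₗ T.symm.dualMap ≪≫ₗ trDual.symm, fun v S => by
    rw [← trDual_apply, ← trDual_apply]
    simp⟩

end TracePairing

section SegreJets

variable {m n : Type*} [Fintype m] [Fintype n]

/-- The tangent vector over `v` of a graph with slope `-S`. -/
def graphVec (v : m → n → ℂ) (S : Matrix n m ℂ) : (m → n → ℂ) × ℂ := (v, -trPair v S)

lemma eq_graphVec_add (x : (m → n → ℂ) × ℂ) (S : Matrix n m ℂ) :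
    x = graphVec x.1 S + (x.2 + trPair x.1 S) • ((0, 1) : (m → n → ℂ) × ℂ) := by
  ext <;> simp [graphVec]

/-- A map with differential `L` and second differential `(Bf, BG)` carries the second-order jet of
the graph `u = log det (1 - w S)` to the one with slope `R`. In the logarithmic fibre coordinate,
the Segre varieties of the circle bundle are such graphs up to translation. -/
structure MapsSegreJet (L : ((m → n → ℂ) × ℂ) →ₗ[ℂ] ((m → n → ℂ) × ℂ))
    (Bf : ((m → n → ℂ) × ℂ) →ₗ[ℂ] ((m → n → ℂ) × ℂ) →ₗ[ℂ] (m → n → ℂ))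
    (BG : ((m → n → ℂ) × ℂ) →ₗ[ℂ] ((m → n → ℂ) × ℂ) →ₗ[ℂ] ℂ) (S R : Matrix n m ℂ) : Prop where
  first : ∀ v, (L (graphVec v S)).2 + trPair (L (graphVec v S)).1 R = 0
  second : ∀ v, BG (graphVec v S) (graphVec v S) - trPairSq v S * (L (0, 1)).2 +
    trPair (Bf (graphVec v S) (graphVec v S) - trPairSq v S • (L (0, 1)).1) R +
    trPairSq (L (graphVec v S)).1 R = 0

/-- The Segre jets with slopes near `S₀` are mapped to Segre jets, the image of the vertical
direction being transversal to the image jet. -/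
def PreservesSegreJets (L : ((m → n → ℂ) × ℂ) →ₗ[ℂ] ((m → n → ℂ) × ℂ))
    (Bf : ((m → n → ℂ) × ℂ) →ₗ[ℂ] ((m → n → ℂ) × ℂ) →ₗ[ℂ] (m → n → ℂ))
    (BG : ((m → n → ℂ) × ℂ) →ₗ[ℂ] ((m → n → ℂ) × ℂ) →ₗ[ℂ] ℂ) (S₀ : Matrix n m ℂ) : Prop :=
  ∀ᶠ S in 𝓝 S₀, ∃ R, MapsSegreJet L Bf BG S R ∧ (L (0, 1)).2 + trPair (L (0, 1)).1 R ≠ 0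

/-- The pullback under `L` of the linear form `D * x.2 + trPair x.1 E` is the annihilator
`x.2 + trPair x.1 S` of the graph vectors of slope `S`; for invertible `L` this determines `(D, E)`
as an affine function of `S`. -/
def SlopePullback (L : ((m → n → ℂ) × ℂ) →ₗ[ℂ] ((m → n → ℂ) × ℂ)) (S : Matrix n m ℂ) (D : ℂ)
    (E : Matrix n m ℂ) : Prop :=
  ∀ x, D * (L x).2 + trPair (L x).1 E = x.2 + trPair x.1 S

/-- The second-order condition of `MapsSegreJet` cleared of denominators, where the image slope is
`D⁻¹ • E`. -/
def jetDefect (L : ((m → n → ℂ) × ℂ) →ₗ[ℂ] ((m → n → ℂ) × ℂ))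
    (Bf : ((m → n → ℂ) × ℂ) →ₗ[ℂ] ((m → n → ℂ) × ℂ) →ₗ[ℂ] (m → n → ℂ))
    (BG : ((m → n → ℂ) × ℂ) →ₗ[ℂ] ((m → n → ℂ) × ℂ) →ₗ[ℂ] ℂ)
    (v : m → n → ℂ) (S : Matrix n m ℂ) (D : ℂ) (E : Matrix n m ℂ) : ℂ :=
  D ^ 2 * BG (graphVec v S) (graphVec v S) + D * trPair (Bf (graphVec v S) (graphVec v S)) E -
    D * trPairSq v S + trPairSq (L (graphVec v S)).1 E

variable {L : ((m → n → ℂ) × ℂ) →ₗ[ℂ] ((m → n → ℂ) × ℂ)}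
    {Bf : ((m → n → ℂ) × ℂ) →ₗ[ℂ] ((m → n → ℂ) × ℂ) →ₗ[ℂ] (m → n → ℂ)}
    {BG : ((m → n → ℂ) × ℂ) →ₗ[ℂ] ((m → n → ℂ) × ℂ) →ₗ[ℂ] ℂ}

namespace MapsSegreJet

variable {S R : Matrix n m ℂ}

lemma apply (h : MapsSegreJet L Bf BG S R) (x : (m → n → ℂ) × ℂ) :
    (L x).2 + trPair (L x).1 R =
      ((L (0, 1)).2 + trPair (L (0, 1)).1 R) * (x.2 + trPair x.1 S) := by
  have hfirst := h.first x.1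
  conv_lhs => rw [eq_graphVec_add x S]
  simp only [Prod.snd_add, Prod.fst_add, Prod.smul_snd, Prod.smul_fst, map_add, map_smul,
    LinearMap.add_apply, LinearMap.smul_apply, smul_eq_mul] at hfirst ⊢
  linear_combination hfirst

lemma slopePullback (h : MapsSegreJet L Bf BG S R)
    (hμ : (L (0, 1)).2 + trPair (L (0, 1)).1 R ≠ 0) :
    SlopePullback L S ((L (0, 1)).2 + trPair (L (0, 1)).1 R)⁻¹
      (((L (0, 1)).2 + trPair (L (0, 1)).1 R)⁻¹ • R) := fun x => by
  rw [map_smul, smul_eq_mul, ← mul_add, h.apply x, inv_mul_cancel_left₀ hμ]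

lemma jetDefect_eq_zero (h : MapsSegreJet L Bf BG S R)
    (hμ : (L (0, 1)).2 + trPair (L (0, 1)).1 R ≠ 0) (v : m → n → ℂ) :
    jetDefect L Bf BG v S ((L (0, 1)).2 + trPair (L (0, 1)).1 R)⁻¹
      (((L (0, 1)).2 + trPair (L (0, 1)).1 R)⁻¹ • R) = 0 := by
  have hsecond := h.second v
  simp only [map_sub, map_smul, LinearMap.sub_apply, LinearMap.smul_apply, smul_eq_mul] at hsecond
  simp only [jetDefect, map_smul, smul_eq_mul, trPairSq_smul_right]
  field_simp
  linear_combination hsecond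

end MapsSegreJet

namespace SlopePullback

variable {S S' : Matrix n m ℂ} {D D' : ℂ} {E E' : Matrix n m ℂ}

lemma add_smul_sub (h : SlopePullback L S D E) (h' : SlopePullback L S' D' E') (t : ℂ) :
    SlopePullback L (S + t • (S' - S)) (D + t * (D' - D)) (E + t • (E' - E)) := fun x => by
  simp only [map_add, map_smul, map_sub, smul_eq_mul]
  linear_combination (1 - t) * h x + t * h' x

lemma unique (hL : Function.Surjective L) (h : SlopePullback L S D E)
    (h' : SlopePullback L S D' E') : D = D' ∧ E = E' := by
  constructor
  · obtain ⟨x, hx⟩ := hL (0, 1)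
    simpa [hx] using (h x).trans (h' x).symm
  · refine trPair_flip_bijective.1 (LinearMap.ext fun w => ?_)
    obtain ⟨x, hx⟩ := hL (w, 0)
    simpa [hx] using (h x).trans (h' x).symm

end SlopePullback

lemma differentiable_jetDefect_add_smul (v : m → n → ℂ) (S S' : Matrix n m ℂ) (D D' : ℂ)
    (E E' : Matrix n m ℂ) :
    Differentiable ℂ fun t : ℂ => jetDefect L Bf BG v (S + t • S') (D + t * D') (E + t • E') := by
  have hg (t : ℂ) : graphVec v (S + t • S') = graphVec v S + t • (0, -trPair v S') := by
    ext1 <;> simp [graphVec, add_comm]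
  simp only [jetDefect, trPairSq, hg, map_add, map_smul, Prod.fst_add, Prod.smul_fst, ← of_add_of,
    ← smul_of, LinearMap.add_apply, LinearMap.smul_apply, Matrix.mul_add, Matrix.add_mul,
    Matrix.mul_smul, Matrix.smul_mul, trace_add, trace_smul, smul_eq_mul]
  fun_prop

namespace PreservesSegreJets

variable {S₀ : Matrix n m ℂ}

lemma injective (h : PreservesSegreJets L Bf BG S₀) : Function.Injective L := by
  refine (injective_iff_map_eq_zero L).2 fun x hx => ?_
  have hS : ∀ᶠ S in 𝓝 S₀, x.2 + trPair x.1 S = 0 := by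
    filter_upwards [h] with S ⟨R, hR, hμ⟩
    simpa [hx, hμ] using (hR.apply x).symm
  have hx1 : x.1 = 0 := eq_zero_of_trPair_eq_zero fun A => LinearMap.congr_fun
    (linearMap_eq_zero_of_eventually (hS.mono fun S => eq_neg_of_add_eq_zero_right)) A
  exact Prod.ext hx1 (by simpa [hx1] using hS.self_of_nhds)

lemma surjective (h : PreservesSegreJets L Bf BG S₀) : Function.Surjective L :=
  LinearMap.injective_iff_surjective.1 h.injective

/-- The defect is polynomial in the slope and vanishes near `S₀`, hence vanishes identically: the
transformation law extends to all slopes, in particular to those with image slope at infinity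
(`D = 0`). -/
lemma jetDefect_eq_zero (h : PreservesSegreJets L Bf BG S₀) {S E : Matrix n m ℂ} {D : ℂ}
    (hS : SlopePullback L S D E) (v : m → n → ℂ) : jetDefect L Bf BG v S D E = 0 := by
  obtain ⟨R, hR, hμ⟩ := h.self_of_nhds
  set μ := (L (0, 1)).2 + trPair (L (0, 1)).1 R
  let P (t : ℂ) : ℂ := jetDefect L Bf BG v (S₀ + t • (S - S₀)) (μ⁻¹ + t * (D - μ⁻¹))
    (μ⁻¹ • R + t • (E - μ⁻¹ • R))
  have hP : Differentiable ℂ P := differentiable_jetDefect_add_smul v _ _ _ _ _ _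
  have hP0 : ∀ᶠ t in 𝓝 0, P t = 0 := by
    have hT : Tendsto (fun t : ℂ => S₀ + t • (S - S₀)) (𝓝 0) (𝓝 S₀) :=
      (by fun_prop : Continuous fun t : ℂ => S₀ + t • (S - S₀)).tendsto' 0 S₀ (by simp)
    filter_upwards [hT.eventually h] with t ⟨R', hR', hμ'⟩
    obtain ⟨hD, hE⟩ := ((hR.slopePullback hμ).add_smul_sub hS t).unique h.surjective
      (hR'.slopePullback hμ')
    simp only [P, μ, hD, hE]
    exact hR'.jetDefect_eq_zero hμ' v
  have := eqOn_zero_of_convex_of_eventually convex_univ isOpen_univ hP.differentiableOn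
    (Set.mem_univ (0 : ℂ)) hP0 (Set.mem_univ (1 : ℂ))
  simpa [P] using this

end PreservesSegreJets

lemma exists_trPair_eq_one_and_trPairSq_eq_two [Nontrivial m] [Nontrivial n] {a : m → n → ℂ}
    (ha : a ≠ 0) : ∃ (w : m → n → ℂ) (E : Matrix n m ℂ),
      trPair a E = 1 ∧ trPair w E = 0 ∧ trPairSq w E = 2 := by
  classical
  obtain ⟨i, hi⟩ := Function.ne_iff.1 ha
  obtain ⟨j, hij⟩ := Function.ne_iff.1 hi
  rw [Pi.zero_apply, Pi.zero_apply] at hij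
  obtain ⟨k, hk⟩ := exists_ne i
  obtain ⟨l, hl⟩ := exists_ne j
  obtain ⟨b, hb0, hb⟩ : ∃ b : ℂ, b ≠ 0 ∧ 1 - b * a k l ≠ 0 := by
    by_cases hakl : a k l = 1
    · exact ⟨2, by norm_num, by norm_num [hakl]⟩
    · exact ⟨1, one_ne_zero, by rw [one_mul]; exact sub_ne_zero.2 (Ne.symm hakl)⟩
  let c : ℂ := (1 - b * a k l) / a i j
  have hc : c ≠ 0 := div_ne_zero hb hij
  let E : Matrix n m ℂ := Matrix.single j i c + Matrix.single l k b
  let w : m → n → ℂ := c⁻¹ • elem i j - b⁻¹ • elem k l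
  have hwE : of w * E = Matrix.single i i 1 - Matrix.single k k 1 := by
    simp [w, E, ← of_sub_of, ← smul_of, of_elem, Matrix.mul_add, Matrix.sub_mul, hl, hl.symm, hc,
      hb0, Matrix.single_mul_single_of_ne, ← sub_eq_add_neg]
  refine ⟨w, E, ?_, ?_, ?_⟩
  · simp only [E, map_add, trPair_single, c]
    field_simp
    ring
  · simp [trPair_apply, hwE]
  · simp only [trPairSq, hwE, Matrix.mul_sub, Matrix.sub_mul, single_mul_single_same, mul_one,
      ne_eq, hk, not_false_eq_true, single_mul_single_of_ne, sub_zero, hk.symm, zero_sub,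
      sub_neg_eq_add, trace_add, trace_single_eq_same]
    norm_num

/-- If the vertical direction were tilted by `a`, some slope would be sent to infinity, to an
arbitrary `E` with `tr (a E) = 1`; there the jet condition reads `tr ((w E)²) = 0` for all `w` with
`tr (w E) = 0`, which fails in rank at least two. -/
lemma PreservesSegreJets.fst_vertical_eq_zero [Nontrivial m] [Nontrivial n] {S₀ : Matrix n m ℂ}
    (h : PreservesSegreJets L Bf BG S₀) : (L (0, 1)).1 = 0 := by
  by_contra ha
  obtain ⟨w, E, haE, hwE, hwE2⟩ := exists_trPair_eq_one_and_trPairSq_eq_two ha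
  obtain ⟨S, hS⟩ := exists_trPair_eq
    (trPair.flip E ∘ₗ LinearMap.fst ℂ _ _ ∘ₗ L ∘ₗ LinearMap.inl ℂ (m → n → ℂ) ℂ)
  have hpull : SlopePullback L S 0 E := fun x => by
    have hx : x = (x.1, 0) + x.2 • ((0, 1) : (m → n → ℂ) × ℂ) := by ext <;> simp
    have hLx : (L x).1 = (L (x.1, 0)).1 + x.2 • (L (0, 1)).1 := by
      conv_lhs => rw [hx, map_add, map_smul, Prod.fst_add, Prod.smul_fst]
    simp [hS, hLx, haE, add_comm]
  obtain ⟨x, hx⟩ := h.surjective (w, 0)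
  have hg : graphVec x.1 S = x := by
    have := hpull x
    rw [hx, zero_mul, zero_add, hwE] at this
    exact Prod.ext rfl (by simp only [graphVec]; linear_combination this)
  have := h.jetDefect_eq_zero hpull x.1
  simp [jetDefect, hg, hx, hwE2] at this

end SegreJets

section VerticalDerivative

variable {m n : Type*} [Fintype m] [Fintype n]

lemma exists_nat_mul_eq_trace_of_mul_self_eq_smul {N : Matrix m m ℂ} {a : ℂ}
    (hN : N * N = a • N) : ∃ k : ℕ, a * k = N.trace := by
  classical
  rcases eq_or_ne a 0 with rfl | ha
  · have hnil : IsNilpotent N := ⟨2, by rw [pow_two, hN, zero_smul]⟩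
    exact ⟨0, by simpa using (Matrix.isNilpotent_trace_of_isNilpotent hnil).eq_zero.symm⟩
  · have hid : IsIdempotentElem (a⁻¹ • N) := by
      rw [IsIdempotentElem, Matrix.smul_mul, Matrix.mul_smul, hN, smul_smul a⁻¹ a,
        inv_mul_cancel₀ ha, one_smul]
    have hid' : IsIdempotentElem (Matrix.toLin' (a⁻¹ • N)) := by
      rw [IsIdempotentElem, Module.End.mul_eq_comp, ← Matrix.toLin'_mul, hid]
    have htr := LinearMap.IsProj.trace ((LinearMap.isProj_range_iff_isIdempotentElem _).2 hid')
    rw [Matrix.trace_toLin'_eq, trace_smul, smul_eq_mul] at htr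
    exact ⟨_, by rw [← htr, mul_inv_cancel_left₀ ha]⟩

lemma exists_mul_mul_eq_self_and_trPair_eq_two [Nontrivial m] [Nontrivial n] :
    ∃ (w : m → n → ℂ) (X : Matrix n m ℂ), of w * X * of w = of w ∧ trPair w X = 2 := by
  classical
  obtain ⟨i, k, hik⟩ := exists_pair_ne m
  obtain ⟨j, l, hjl⟩ := exists_pair_ne n
  have hw : of (elem i j + elem k l) = Matrix.single i j (1 : ℂ) + Matrix.single k l (1 : ℂ) := by
    rw [← of_add_of, of_elem, of_elem]
  have hwX : of (elem i j + elem k l) * (Matrix.single j i (1 : ℂ) + Matrix.single l k 1) =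
      Matrix.single i i (1 : ℂ) + Matrix.single k k 1 := by
    simp [hw, Matrix.mul_add, Matrix.add_mul, hjl, hjl.symm, Matrix.single_mul_single_of_ne]
  refine ⟨elem i j + elem k l, Matrix.single j i 1 + Matrix.single l k 1, ?_, ?_⟩
  · rw [hwX, hw]
    simp [Matrix.mul_add, Matrix.add_mul, hik, hik.symm, Matrix.single_mul_single_of_ne]
  · rw [trPair_apply, hwX, trace_add, trace_single_eq_same, trace_single_eq_same]
    norm_num

/-- A rank-two partial isometry `w` is pulled back to some `v` with `v Y v = (2 - c) v` and
`tr (v Y) = 2`, so `(2 - c)` times the rank of a projection is `2`. -/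
lemma exists_nat_two_sub_mul_eq_two [Nontrivial m] [Nontrivial n]
    {T : (m → n → ℂ) ≃ₗ[ℂ] (m → n → ℂ)} {B : Matrix n m ℂ ≃ₗ[ℂ] Matrix n m ℂ} {c : ℂ}
    (htr : ∀ v S, trPair (T v) (B S) = trPair v S)
    (hminor : ∀ v S, c * minorPair (T v) (B S) = minorPair v S) : ∃ k : ℕ, (2 - c) * k = 2 := by
  obtain ⟨w, X, hwXw, hwX⟩ := exists_mul_mul_eq_self_and_trPair_eq_two (m := m) (n := n)
  obtain ⟨v, rfl⟩ := T.surjective w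
  obtain ⟨Y, rfl⟩ := B.surjective X
  have hvY : trPair v Y = 2 := by rw [← htr, hwX]
  have hpol (S : Matrix n m ℂ) : (of v * Y * of v * S).trace = (2 - c) * trPair v S := by
    have h := hminor v (Y + S)
    have hw : (of (T v) * B Y * (of (T v) * B S)).trace = trPair v S := by
      rw [← Matrix.mul_assoc, hwXw, ← trPair_apply, htr]
    rw [map_add, minorPair_add_right, minorPair_add_right, htr, htr, hw] at h
    rw [Matrix.mul_assoc (of v * Y)]
    rw [hvY] at h
    linear_combination (h - hminor v Y - hminor v S) / 2
  have hvYv : of v * Y * of v = (2 - c) • of v := by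
    have : of.symm (of v * Y * of v - (2 - c) • of v) = 0 := by
      refine eq_zero_of_trPair_eq_zero fun S => ?_
      rw [trPair_apply, Equiv.apply_symm_apply, Matrix.sub_mul, trace_sub, hpol,
        Matrix.smul_mul, trace_smul, trPair_apply, smul_eq_mul, sub_self]
    exact sub_eq_zero.1 this
  obtain ⟨k, hk⟩ := exists_nat_mul_eq_trace_of_mul_self_eq_smul (N := of v * Y) (a := 2 - c)
    (by rw [← Matrix.mul_assoc, hvYv, Matrix.smul_mul])
  exact ⟨k, hk.trans hvY⟩

lemma eq_one_of_two_sub_mul_eq_two {c : ℂ} (hc : c ≠ 0) {k l : ℕ} (hk : (2 - c) * k = 2)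
    (hl : (2 - c⁻¹) * l = 2) : c = 1 := by
  have hkl : k * l * 3 + 4 = 4 * k + 4 * l := by
    have : (k : ℂ) * l * 3 + 4 = 4 * k + 4 * l := by
      linear_combination (2 * l - 2 : ℂ) * hk + c * k * hl + (k : ℂ) * l * mul_inv_cancel₀ hc
    exact_mod_cast this
  have hk0 : k ≠ 0 := by rintro rfl; simp at hk
  have hl0 : l ≠ 0 := by rintro rfl; simp at hl
  have hk2 : k = 2 := by
    have hk1 : k ≠ 1 := by rintro rfl; omega
    have hl1 : l ≠ 1 := by rintro rfl; omega
    obtain ⟨a, rfl⟩ : ∃ a, k = a + 2 := ⟨k - 2, by omega⟩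
    obtain ⟨b, rfl⟩ : ∃ b, l = b + 2 := ⟨l - 2, by omega⟩
    nlinarith
  rw [hk2] at hk
  push_cast at hk
  linear_combination -hk / 2

/-- Testing on vectors of rank one, where `tr ((v S)²) = (tr (v S))²`, determines `b`. -/
lemma eq_sub_one_of_trPairSq_relation [Nonempty m] [Nonempty n]
    {T : (m → n → ℂ) ≃ₗ[ℂ] (m → n → ℂ)} {B : Matrix n m ℂ ≃ₗ[ℂ] Matrix n m ℂ} {a b : ℂ}
    (htr : ∀ v S, trPair (T v) (B S) = trPair v S)
    (hsq : ∀ v S, b * trPair v S ^ 2 - a * trPairSq v S + trPairSq (T v) (B S) = 0) :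
    b = a - 1 := by
  classical
  obtain ⟨i⟩ := ‹Nonempty m›
  obtain ⟨j⟩ := ‹Nonempty n›
  have hne : T (elem i j) ≠ 0 := fun h0 => by
    have := congrFun (congrFun (T.map_eq_zero_iff.1 h0) i) j
    simp [elem] at this
  obtain ⟨i', hi'⟩ := Function.ne_iff.1 hne
  obtain ⟨j', hij⟩ := Function.ne_iff.1 hi'
  obtain ⟨S, hS⟩ := B.surjective (Matrix.single j' i' 1)
  have h := hsq (elem i j) S
  have hSij : S j i = T (elem i j) i' j' := by
    rw [← trPair_elem i j S, ← htr, hS, trPair_single, one_mul]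
  rw [hS, trPair_elem, trPairSq_elem, trPairSq_single_one, hSij] at h
  have h' : T (elem i j) i' j' ^ 2 * (b - (a - 1)) = 0 := by linear_combination h
  exact sub_eq_zero.1 ((mul_eq_zero.1 h').resolve_left (pow_ne_zero 2 hij))

namespace PreservesSegreJets

variable {L : ((m → n → ℂ) × ℂ) →ₗ[ℂ] ((m → n → ℂ) × ℂ)}
    {Bf : ((m → n → ℂ) × ℂ) →ₗ[ℂ] ((m → n → ℂ) × ℂ) →ₗ[ℂ] (m → n → ℂ)}
    {BG : ((m → n → ℂ) × ℂ) →ₗ[ℂ] ((m → n → ℂ) × ℂ) →ₗ[ℂ] ℂ} {S₀ : Matrix n m ℂ}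

lemma snd_vertical_ne_zero (h : PreservesSegreJets L Bf BG S₀) (hL : (L (0, 1)).1 = 0) :
    (L (0, 1)).2 ≠ 0 := by
  obtain ⟨R, -, hR⟩ := h.self_of_nhds
  simpa [hL] using hR

lemma exists_horizontal_equiv (h : PreservesSegreJets L Bf BG S₀) (hL : (L (0, 1)).1 = 0) :
    ∃ T : (m → n → ℂ) ≃ₗ[ℂ] (m → n → ℂ), ∀ x, (L x).1 = T x.1 := by
  have hx (x : (m → n → ℂ) × ℂ) : (L x).1 = (L (x.1, 0)).1 := by
    have hx : x = (x.1, 0) + x.2 • ((0, 1) : (m → n → ℂ) × ℂ) := by ext <;> simp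
    conv_lhs => rw [hx, map_add, map_smul, Prod.fst_add, Prod.smul_fst, hL, smul_zero, add_zero]
  let T₀ : (m → n → ℂ) →ₗ[ℂ] (m → n → ℂ) := LinearMap.fst ℂ _ _ ∘ₗ L ∘ₗ LinearMap.inl ℂ _ _
  have hT₀ : Function.Surjective T₀ := fun w => by
    obtain ⟨x, hxw⟩ := h.surjective (w, 0)
    exact ⟨x.1, (hx x).symm.trans (congrArg Prod.fst hxw)⟩
  exact ⟨.ofBijective T₀ ⟨LinearMap.injective_iff_surjective.2 hT₀, hT₀⟩, hx⟩

lemma exists_trPairSq_relation (h : PreservesSegreJets L Bf BG S₀) (hL : (L (0, 1)).1 = 0)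
    (hB1 : ∀ x, Bf (0, 1) x = 0) (hB2 : ∀ x, Bf x (0, 1) = 0) :
    ∃ (T : (m → n → ℂ) ≃ₗ[ℂ] (m → n → ℂ)) (B : Matrix n m ℂ ≃ₗ[ℂ] Matrix n m ℂ) (b : ℂ),
      (∀ v S, trPair (T v) (B S) = trPair v S) ∧
      ∀ v S, b * trPair v S ^ 2 - (L (0, 1)).2⁻¹ * trPairSq v S + trPairSq (T v) (B S) = 0 := by
  set c := (L (0, 1)).2
  have hc : c ≠ 0 := h.snd_vertical_ne_zero hL
  obtain ⟨T, hT⟩ := h.exists_horizontal_equiv hL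
  obtain ⟨B, hB⟩ := exists_linearEquiv_trPair_eq T
  obtain ⟨S₁, hS₁⟩ := exists_trPair_eq
    (LinearMap.snd ℂ _ _ ∘ₗ L ∘ₗ LinearMap.inl ℂ (m → n → ℂ) ℂ)
  have hdecomp (v : m → n → ℂ) (u : ℂ) : (v, u) = (v, 0) + u • ((0, 1) : (m → n → ℂ) × ℂ) := by
    ext <;> simp
  have hpull (S : Matrix n m ℂ) : SlopePullback L S c⁻¹ (B S - c⁻¹ • B S₁) := by
    rintro ⟨v, u⟩
    have hLx : (L (v, u)).2 = trPair v S₁ + u * c := by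
      rw [hdecomp, map_add, map_smul, Prod.snd_add, Prod.smul_snd, smul_eq_mul, hS₁]
      rfl
    rw [hLx, hT, map_sub, map_smul, hB, hB, smul_eq_mul]
    field_simp
    ring
  refine ⟨T, B, c⁻¹ ^ 2 * BG (0, 1) (0, 1), hB, fun v S => ?_⟩
  have hdefect (S : Matrix n m ℂ) := h.jetDefect_eq_zero (hpull S) v
  have hdefect0 := hdefect 0
  have hdefectS := hdefect S
  have hdefectNeg := hdefect (-S)
  simp only [jetDefect, hT, graphVec] at hdefect0 hdefectS hdefectNeg
  rw [hdecomp] at hdefect0 hdefectS hdefectNeg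
  simp only [map_add, map_sub, map_smul, map_neg, LinearMap.add_apply, LinearMap.smul_apply,
    smul_eq_mul, hB1, hB2, smul_zero, add_zero, Matrix.mul_sub, Matrix.sub_mul, trace_sub,
    trPairSq, Matrix.mul_neg, Matrix.neg_mul, trace_neg, map_zero, Matrix.mul_zero, trace_zero,
    neg_zero, zero_mul]
    at hdefect0 hdefectS hdefectNeg
  simp only [trPairSq]
  linear_combination (hdefectS + hdefectNeg - 2 * hdefect0) / 2

lemma snd_vertical_eq_one [Nontrivial m] [Nontrivial n] (h : PreservesSegreJets L Bf BG S₀)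
    (hB1 : ∀ x, Bf (0, 1) x = 0) (hB2 : ∀ x, Bf x (0, 1) = 0) : (L (0, 1)).2 = 1 := by
  have hL := h.fst_vertical_eq_zero
  have hc := h.snd_vertical_ne_zero hL
  obtain ⟨T, B, b, htr, hsq⟩ := h.exists_trPairSq_relation hL hB1 hB2
  set c := (L (0, 1)).2
  have hb : b = c⁻¹ - 1 := eq_sub_one_of_trPairSq_relation htr hsq
  have hminor (v : m → n → ℂ) (S : Matrix n m ℂ) :
      c * minorPair (T v) (B S) = minorPair v S := by
    simp only [minorPair, htr]
    linear_combination c * (trPair v S ^ 2) * hb - c * hsq v S +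
      (trPair v S ^ 2 - trPairSq v S) * mul_inv_cancel₀ hc
  obtain ⟨k, hk⟩ := exists_nat_two_sub_mul_eq_two htr hminor
  obtain ⟨l, hl⟩ := exists_nat_two_sub_mul_eq_two (T := T.symm) (B := B.symm) (c := c⁻¹)
    (fun v S => by rw [← htr]; simp)
    (fun v S => by
      have := hminor (T.symm v) (B.symm S)
      rw [LinearEquiv.apply_symm_apply, LinearEquiv.apply_symm_apply] at this
      rw [← this, inv_mul_cancel_left₀ hc])
  exact eq_one_of_two_sub_mul_eq_two hc hk hl

end PreservesSegreJets

end VerticalDerivative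

section PolarizedNorm

variable {m n : Type*} [Fintype m] [Fintype n]

section MatrixDerivatives

variable {E : Type*} [NormedAddCommGroup E] [NormedSpace ℂ E]

lemma differentiableAt_det [DecidableEq m] {A : E → Matrix m m ℂ} {x : E}
    (hA : ∀ i j, DifferentiableAt ℂ (fun y => A y i j) x) :
    DifferentiableAt ℂ (fun y => (A y).det) x := by
  simp only [det_apply']
  fun_prop

lemma differentiableAt_inv_apply [DecidableEq m] {A : E → Matrix m m ℂ} {x : E}
    (hA : ∀ i j, DifferentiableAt ℂ (fun y => A y i j) x) (h : (A x).det ≠ 0) (i j : m) :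
    DifferentiableAt ℂ (fun y => (A y)⁻¹ i j) x := by
  simp only [Matrix.inv_def, Ring.inverse_eq_inv', Matrix.smul_apply, smul_eq_mul, adjugate_apply]
  refine ((differentiableAt_det hA).inv h).mul (differentiableAt_det fun k l => ?_)
  simp only [updateRow_apply]
  split_ifs
  · fun_prop
  · exact hA k l

lemma hasDerivAt_det_one_add_smul [DecidableEq m] (M : Matrix m m ℂ) :
    HasDerivAt (fun s : ℂ => (1 + s • M).det) M.trace 0 := by
  have h := (det (1 + (Polynomial.X : Polynomial ℂ) • M.map Polynomial.C)).hasDerivAt 0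
  rw [derivative_det_one_add_X_smul] at h
  refine h.congr_of_eventuallyEq (.of_forall fun s => ?_)
  simp only [← Polynomial.coe_evalRingHom, RingHom.map_det]
  congr 1
  ext i j
  simp [Matrix.one_apply, apply_ite, -Polynomial.X_mul_C]

/-- The rule for functions whose increments factor, such as `A⁻¹ - B⁻¹ = A⁻¹ (B - A) B⁻¹`. -/
lemma hasDerivAt_apply_of_eventually_sub_eq {k l : Type*} {F : ℂ → Matrix k l ℂ}
    {G : ℂ → Matrix k m ℂ} {M : ℂ → Matrix m n ℂ} {M' : Matrix m n ℂ} {C : Matrix n l ℂ} {t : ℂ}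
    (hG : ∀ i j, DifferentiableAt ℂ (fun s => G s i j) t)
    (hM : ∀ i j, HasDerivAt (fun s => M s i j) (M' i j) t)
    (hF : ∀ᶠ s in 𝓝 t, F s - F t = G s * (M s - M t) * C) (i : k) (j : l) :
    HasDerivAt (fun s => F s i j) ((G t * M' * C) i j) t := by
  have hprod : HasDerivAt (fun s => (G s * (M s - M t) * C) i j) ((G t * M' * C) i j) t := by
    simp only [mul_apply, Matrix.sub_apply]
    refine HasDerivAt.fun_sum fun b _ => HasDerivAt.mul_const (HasDerivAt.fun_sum fun a _ => ?_) _
    simpa using (hG i a).hasDerivAt.fun_mul ((hM a b).sub_const (M t a b))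
  refine (hprod.const_add (F t i j)).congr_of_eventuallyEq ?_
  filter_upwards [hF] with s hs
  rw [← hs, Matrix.sub_apply, add_sub_cancel]

lemma hasDerivAt_trPair {w : ℂ → m → n → ℂ} {w' : m → n → ℂ} {S : ℂ → Matrix n m ℂ}
    {S' : Matrix n m ℂ} {t : ℂ} (hw : HasDerivAt w w' t)
    (hS : ∀ j i, HasDerivAt (fun s => S s j i) (S' j i) t) :
    HasDerivAt (fun s => trPair (w s) (S s)) (trPair w' (S t) + trPair (w t) S') t := by
  simp only [trPair_eq_sum, ← Finset.sum_add_distrib]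
  exact HasDerivAt.fun_sum fun i _ => HasDerivAt.fun_sum fun j _ =>
    (hasDerivAt_pi.1 (hasDerivAt_pi.1 hw i) j).mul (hS j i)

end MatrixDerivatives

section OfLogSlope

variable [DecidableEq n]

/-- The vector `W` with `logSlope Z W = S`, namely `Wᵀ = (1 + S Z)⁻¹ S`. -/
def ofLogSlope (Z : m → n → ℂ) (S : Matrix n m ℂ) : m → n → ℂ :=
  of.symm ((1 + S * of Z)⁻¹ * S)ᵀ

lemma transpose_of_ofLogSlope (Z : m → n → ℂ) (S : Matrix n m ℂ) :
    (of (ofLogSlope Z S))ᵀ = (1 + S * of Z)⁻¹ * S := rfl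

lemma continuousAt_ofLogSlope {Z : m → n → ℂ} {S : Matrix n m ℂ} (h : (1 + S * of Z).det ≠ 0) :
    ContinuousAt (ofLogSlope Z) S := by
  have hdet : Continuous fun S : Matrix n m ℂ => (1 + S * of Z).det := by fun_prop
  have hdetInv : ContinuousAt (fun S : Matrix n m ℂ => (1 + S * of Z).det⁻¹) S :=
    hdet.continuousAt.inv₀ h
  have hadj : Continuous fun S : Matrix n m ℂ => (1 + S * of Z).adjugate * S := by fun_prop
  have hmul : ContinuousAt (fun S => (1 + S * of Z).det⁻¹ • ((1 + S * of Z).adjugate * S)) S :=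
    hdetInv.smul hadj.continuousAt
  have hinv : ofLogSlope Z = fun S i j =>
      ((1 + S * of Z).det⁻¹ • ((1 + S * of Z).adjugate * S)) j i := by
    funext S i j
    simp only [ofLogSlope, Matrix.inv_def, Ring.inverse_eq_inv', Matrix.smul_mul]
    rfl
  rw [hinv]
  exact continuousAt_pi.2 fun i => continuousAt_pi.2 fun j =>
    continuousAt_pi.1 (continuousAt_pi.1 hmul j) i

end OfLogSlope

variable [DecidableEq m]

/-- The polarized generic norm `det (1 - Z Wᵀ)`, holomorphic in both variables; the generic norm is
its restriction to `W = star Z`. -/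
def polNorm (Z W : m → n → ℂ) : ℂ := (1 - of Z * (of W)ᵀ).det

/-- The negative logarithmic gradient `Wᵀ (1 - Z Wᵀ)⁻¹` of `polNorm` in the variable `Z`. -/
def logSlope (Z W : m → n → ℂ) : Matrix n m ℂ := (of W)ᵀ * (1 - of Z * (of W)ᵀ)⁻¹

lemma polNorm_comm (Z W : m → n → ℂ) : polNorm Z W = polNorm W Z := by
  rw [polNorm, polNorm, ← det_transpose]
  simp

lemma isUnit_det_left {Z W : m → n → ℂ} (h : polNorm Z W ≠ 0) :
    IsUnit (1 - of Z * (of W)ᵀ).det := isUnit_iff_ne_zero.2 h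

lemma trPair_star_logSlope_star (v Z W : m → n → ℂ) :
    trPair (star v) (logSlope (star Z) (star W)) = star (trPair v (logSlope Z W)) := by
  have hinv : (1 - of (star Z) * (of (star W))ᵀ)⁻¹ = ((1 - of Z * (of W)ᵀ)⁻¹)ᴴᵀ := by
    rw [conjTranspose_nonsing_inv, transpose_nonsing_inv]
    congr 1
    ext i j
    simp [mul_apply, Matrix.one_apply, eq_comm, mul_comm]
  simp [trPair_eq_sum, logSlope, hinv, mul_apply]

lemma logSlope_sub_logSlope_left {Z Z' W : m → n → ℂ} (h : polNorm Z W ≠ 0)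
    (h' : polNorm Z' W ≠ 0) :
    logSlope Z' W - logSlope Z W = logSlope Z' W * of (Z' - Z) * logSlope Z W := by
  have hu := isUnit_det_left h
  have hu' := isUnit_det_left h'
  have e : of (Z' - Z) * (of W)ᵀ = (1 - of Z * (of W)ᵀ) - (1 - of Z' * (of W)ᵀ) := by
    rw [← of_sub_of, Matrix.sub_mul]; abel
  simp only [logSlope]
  set X := 1 - of Z * (of W)ᵀ
  set X' := 1 - of Z' * (of W)ᵀ
  rw [Matrix.mul_assoc, ← Matrix.mul_assoc (of (Z' - Z)), e, Matrix.mul_assoc, ← Matrix.mul_sub,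
    Matrix.sub_mul, mul_nonsing_inv _ hu, Matrix.mul_sub X'⁻¹, ← Matrix.mul_assoc X'⁻¹ X',
    nonsing_inv_mul _ hu', Matrix.mul_one, Matrix.one_mul]

section Derivatives

variable {E : Type*} [NormedAddCommGroup E] [NormedSpace ℂ E]

lemma differentiableAt_polNorm {a b : E → m → n → ℂ} {x : E} (ha : DifferentiableAt ℂ a x)
    (hb : DifferentiableAt ℂ b x) : DifferentiableAt ℂ (fun y => polNorm (a y) (b y)) x := by
  refine differentiableAt_det fun i j => ?_
  simp only [Matrix.sub_apply, mul_apply, transpose_apply, of_apply]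
  fun_prop

lemma differentiableAt_logSlope_apply {a b : E → m → n → ℂ} {x : E} (ha : DifferentiableAt ℂ a x)
    (hb : DifferentiableAt ℂ b x) (h : polNorm (a x) (b x) ≠ 0) (j : n) (i : m) :
    DifferentiableAt ℂ (fun y => logSlope (a y) (b y) j i) x := by
  have hinv := differentiableAt_inv_apply (A := fun y => 1 - of (a y) * (of (b y))ᵀ) (x := x)
    (fun k l => by
      simp only [Matrix.sub_apply, mul_apply, transpose_apply, of_apply]
      fun_prop) h
  have hbj (k : m) : DifferentiableAt ℂ (fun y => b y k j) x := by fun_prop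
  simp only [logSlope, Matrix.mul_apply, transpose_apply, of_apply]
  exact DifferentiableAt.fun_sum fun k _ => (hbj k).mul (hinv k i)

lemma differentiableAt_trPair_logSlope {w a b : E → m → n → ℂ} {x : E}
    (hw : DifferentiableAt ℂ w x) (ha : DifferentiableAt ℂ a x) (hb : DifferentiableAt ℂ b x)
    (h : polNorm (a x) (b x) ≠ 0) :
    DifferentiableAt ℂ (fun y => trPair (w y) (logSlope (a y) (b y))) x := by
  have := differentiableAt_logSlope_apply ha hb h
  simp only [trPair_eq_sum]
  fun_prop

lemma polNorm_add_smul {Z W : m → n → ℂ} (h : polNorm Z W ≠ 0) (v : m → n → ℂ) (s : ℂ) :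
    polNorm (Z + s • v) W = (1 + s • -(of v * logSlope Z W)).det * polNorm Z W := by
  rw [polNorm, polNorm, ← det_mul, Matrix.add_mul, Matrix.one_mul, Matrix.smul_mul, Matrix.neg_mul,
    logSlope, Matrix.mul_assoc, Matrix.mul_assoc, nonsing_inv_mul _ (isUnit_det_left h),
    Matrix.mul_one, ← of_add_of, ← smul_of, Matrix.add_mul, Matrix.smul_mul, smul_neg]
  congr 1
  abel

lemma hasDerivAt_polNorm {a : ℂ → m → n → ℂ} {a' W : m → n → ℂ} {t : ℂ}
    (ha : HasDerivAt a a' t) (h : polNorm (a t) W ≠ 0) :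
    HasDerivAt (fun s => polNorm (a s) W)
      (-trPair a' (logSlope (a t) W) * polNorm (a t) W) t := by
  have hd : DifferentiableAt ℂ (fun Z => polNorm Z W) (a t) :=
    differentiableAt_polNorm differentiableAt_id (differentiableAt_const _)
  have hline : HasDerivAt (fun s : ℂ => polNorm (a t + s • a') W)
      (-trPair a' (logSlope (a t) W) * polNorm (a t) W) 0 := by
    simp only [polNorm_add_smul h]
    have hdet := hasDerivAt_det_one_add_smul (-(of a' * logSlope (a t) W))
    rw [trace_neg] at hdet
    exact hdet.mul_const (polNorm (a t) W)
  have hfd : fderiv ℂ (fun Z => polNorm Z W) (a t) a' =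
      -trPair a' (logSlope (a t) W) * polNorm (a t) W :=
    (hd.hasFDerivAt.hasLineDerivAt a').unique hline
  have hcomp := hd.hasFDerivAt.comp_hasDerivAt t ha
  rw [hfd] at hcomp
  exact hcomp

lemma hasDerivAt_log_polNorm {a : ℂ → m → n → ℂ} {a' W : m → n → ℂ} {t : ℂ}
    (ha : HasDerivAt a a' t) (h : polNorm (a t) W ∈ slitPlane) :
    HasDerivAt (fun s => log (polNorm (a s) W)) (-trPair a' (logSlope (a t) W)) t := by
  have hne := slitPlane_ne_zero h
  simpa only [mul_div_cancel_right₀ _ hne] using (hasDerivAt_polNorm ha hne).clog h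

lemma hasDerivAt_trPair_logSlope {w a : ℂ → m → n → ℂ} {w' a' W : m → n → ℂ} {t : ℂ}
    (hw : HasDerivAt w w' t) (ha : HasDerivAt a a' t) (h : polNorm (a t) W ≠ 0) :
    HasDerivAt (fun s => trPair (w s) (logSlope (a s) W))
      (trPair w' (logSlope (a t) W) +
        (of (w t) * logSlope (a t) W * (of a' * logSlope (a t) W)).trace) t := by
  have hev : ∀ᶠ s in 𝓝 t, polNorm (a s) W ≠ 0 :=
    (differentiableAt_polNorm ha.differentiableAt
      (differentiableAt_const W)).continuousAt.eventually_ne h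
  have hS := hasDerivAt_apply_of_eventually_sub_eq
    (differentiableAt_logSlope_apply ha.differentiableAt (differentiableAt_const W) h)
    (M := fun s => of (a s)) (M' := of a')
    (fun i j => hasDerivAt_pi.1 (hasDerivAt_pi.1 ha i) j)
    (hev.mono fun s hs => logSlope_sub_logSlope_left h hs)
  simpa only [trPair_apply, Matrix.mul_assoc] using hasDerivAt_trPair hw hS

end Derivatives

section Right

variable [DecidableEq n]

lemma isUnit_det_right {Z W : m → n → ℂ} (h : polNorm Z W ≠ 0) :
    IsUnit (1 - (of W)ᵀ * of Z).det := by
  rw [polNorm, det_one_sub_mul_comm] at h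
  exact isUnit_iff_ne_zero.2 h

lemma logSlope_eq_inv_mul {Z W : m → n → ℂ} (h : polNorm Z W ≠ 0) :
    logSlope Z W = (1 - (of W)ᵀ * of Z)⁻¹ * (of W)ᵀ := by
  have hcomm : (1 - (of W)ᵀ * of Z) * (of W)ᵀ = (of W)ᵀ * (1 - of Z * (of W)ᵀ) := by
    simp only [Matrix.sub_mul, Matrix.mul_sub, Matrix.mul_assoc, Matrix.one_mul, Matrix.mul_one]
  rw [logSlope, ← nonsing_inv_mul_cancel_left _ ((of W)ᵀ * _) (isUnit_det_right h),
    ← Matrix.mul_assoc _ _ _⁻¹, hcomm, mul_nonsing_inv_cancel_right _ _ (isUnit_det_left h)]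

lemma logSlope_sub_logSlope_right {Z W W' : m → n → ℂ} (h : polNorm Z W ≠ 0)
    (h' : polNorm Z W' ≠ 0) :
    logSlope Z W' - logSlope Z W =
      (1 - (of W')ᵀ * of Z)⁻¹ * ((of W')ᵀ - (of W)ᵀ) * (1 - of Z * (of W)ᵀ)⁻¹ := by
  have e : (of W')ᵀ - (of W)ᵀ =
      (of W')ᵀ * (1 - of Z * (of W)ᵀ) - (1 - (of W')ᵀ * of Z) * (of W)ᵀ := by
    simp [Matrix.sub_mul, Matrix.mul_sub, Matrix.mul_assoc]
  rw [e, Matrix.mul_sub, Matrix.sub_mul, logSlope_eq_inv_mul h', logSlope, ← Matrix.mul_assoc,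
    mul_nonsing_inv_cancel_right _ _ (isUnit_det_left h),
    nonsing_inv_mul_cancel_left _ _ (isUnit_det_right h')]

lemma hasDerivAt_trPair_logSlope_right {b : ℂ → m → n → ℂ} {w Z b' : m → n → ℂ} {t : ℂ}
    (hb : HasDerivAt b b' t) (h : polNorm Z (b t) ≠ 0) :
    HasDerivAt (fun s => trPair w (logSlope Z (b s)))
      (trPair w ((1 - (of (b t))ᵀ * of Z)⁻¹ * (of b')ᵀ * (1 - of Z * (of (b t))ᵀ)⁻¹)) t := by
  have hev : ∀ᶠ s in 𝓝 t, polNorm Z (b s) ≠ 0 :=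
    (differentiableAt_polNorm (differentiableAt_const Z)
      hb.differentiableAt).continuousAt.eventually_ne h
  have hb' := hb.differentiableAt
  have hinv := differentiableAt_inv_apply (A := fun s => 1 - (of (b s))ᵀ * of Z) (x := t)
    (fun i j => by
      simp only [Matrix.sub_apply, mul_apply, transpose_apply, of_apply]
      fun_prop) (isUnit_det_right h).ne_zero
  have hS := hasDerivAt_apply_of_eventually_sub_eq hinv (M := fun s => (of (b s))ᵀ)
    (M' := (of b')ᵀ) (fun i j => hasDerivAt_pi.1 (hasDerivAt_pi.1 hb j) i)
    (hev.mono fun s hs => logSlope_sub_logSlope_right h hs)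
  simpa only [map_zero, LinearMap.zero_apply, zero_add] using
    hasDerivAt_trPair (hasDerivAt_const t w) hS

lemma one_add_logSlope_mul {Z W : m → n → ℂ} (h : polNorm Z W ≠ 0) :
    1 + logSlope Z W * of Z = (1 - (of W)ᵀ * of Z)⁻¹ := by
  have hu := isUnit_det_right h
  refine (inv_eq_right_inv ?_).symm
  rw [logSlope_eq_inv_mul h, Matrix.mul_add, Matrix.mul_assoc _ _ (of Z),
    mul_nonsing_inv_cancel_left _ _ hu, Matrix.mul_one, sub_add_cancel]

lemma ofLogSlope_logSlope {Z W : m → n → ℂ} (h : polNorm Z W ≠ 0) :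
    ofLogSlope Z (logSlope Z W) = W := by
  have hu := isUnit_det_right h
  refine of.injective (transpose_injective ?_)
  rw [transpose_of_ofLogSlope, one_add_logSlope_mul h, nonsing_inv_nonsing_inv _ hu,
    logSlope_eq_inv_mul h, mul_nonsing_inv_cancel_left _ _ hu]

lemma logSlope_ofLogSlope {Z : m → n → ℂ} {S : Matrix n m ℂ} (h : (1 + S * of Z).det ≠ 0) :
    logSlope Z (ofLogSlope Z S) = S := by
  have hu : IsUnit (1 + S * of Z).det := isUnit_iff_ne_zero.2 h
  have hcomm : S * (1 + of Z * S) = (1 + S * of Z) * S := by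
    simp only [Matrix.add_mul, Matrix.mul_add, Matrix.mul_assoc, Matrix.one_mul, Matrix.mul_one]
  have hinv : (1 - of Z * (of (ofLogSlope Z S))ᵀ)⁻¹ = 1 + of Z * S := by
    refine inv_eq_right_inv ?_
    rw [transpose_of_ofLogSlope, Matrix.sub_mul, Matrix.mul_assoc (of Z), Matrix.mul_assoc _ S,
      hcomm, nonsing_inv_mul_cancel_left _ _ hu, Matrix.one_mul, add_sub_cancel_right]
  rw [logSlope, hinv, transpose_of_ofLogSlope, Matrix.mul_assoc, hcomm,
    nonsing_inv_mul_cancel_left _ _ hu]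

end Right

lemma eventually_exists_logSlope_eq {Z W₀ : m → n → ℂ} (h : polNorm Z W₀ ≠ 0)
    {P : (m → n → ℂ) → Prop} (hP : ∀ᶠ W in 𝓝 W₀, P W) :
    ∀ᶠ S in 𝓝 (logSlope Z W₀), ∃ W, P W ∧ logSlope Z W = S := by
  classical
  have hdet : (1 + logSlope Z W₀ * of Z).det ≠ 0 := by
    rw [one_add_logSlope_mul h]
    exact (isUnit_nonsing_inv_det _ (isUnit_det_right h)).ne_zero
  have hP' : ∀ᶠ S in 𝓝 (logSlope Z W₀), P (ofLogSlope Z S) := by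
    refine (continuousAt_ofLogSlope hdet).eventually ?_
    rwa [ofLogSlope_logSlope h]
  have hdet' : Continuous fun S : Matrix n m ℂ => (1 + S * of Z).det := by fun_prop
  filter_upwards [hP', hdet'.continuousAt.eventually_ne hdet] with S hS hd
  exact ⟨ofLogSlope Z S, hS, logSlope_ofLogSlope hd⟩

end PolarizedNorm

section LogCircle

variable {p q : ℕ}

lemma polNorm_star_eq_genNormI {Z : Fin p → Fin q → ℂ} (hZ : Z ∈ typeIDomain p q) :
    polNorm Z (star Z) = (genNormI Z : ℂ) := by
  have h : (0 : ℂ) < polNorm Z (star Z) := PosDef.det_pos hZ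
  apply Complex.ext
  · rfl
  · simpa using (Complex.pos_iff.1 h).2.symm

lemma genNormI_pos {Z : Fin p → Fin q → ℂ} (hZ : Z ∈ typeIDomain p q) : 0 < genNormI Z :=
  (Complex.pos_iff.1 (PosDef.det_pos hZ)).1

lemma polNorm_star_mem_slitPlane {Z : Fin p → Fin q → ℂ} (hZ : Z ∈ typeIDomain p q) :
    polNorm Z (star Z) ∈ slitPlane := by
  rw [polNorm_star_eq_genNormI hZ]
  exact ofReal_mem_slitPlane.2 (genNormI_pos hZ)

lemma log_polNorm_star {Z : Fin p → Fin q → ℂ} (hZ : Z ∈ typeIDomain p q) :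
    log (polNorm Z (star Z)) = (Real.log (genNormI Z) : ℂ) := by
  rw [polNorm_star_eq_genNormI hZ, ofReal_log (genNormI_pos hZ).le]

lemma posDef_iff_forall_mem_sphere {m : Type*} [Fintype m] {A : Matrix m m ℂ}
    (hA : A.IsHermitian) :
    A.PosDef ↔ ∀ x ∈ Metric.sphere (0 : m → ℂ) 1, 0 < (star x ⬝ᵥ (A *ᵥ x)).re := by
  refine ⟨fun h x hx => ?_, fun h => .of_dotProduct_mulVec_pos hA fun x hx => ?_⟩
  · have hx0 : x ≠ 0 := by rintro rfl; simp at hx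
    exact (Complex.pos_iff.1 (h.dotProduct_mulVec_pos hx0)).1
  · refine Complex.pos_iff.2 ⟨?_, (hA.im_star_dotProduct_mulVec_self x).symm⟩
    have hn : 0 < ‖x‖ := norm_pos_iff.2 hx
    have hunit := h ((‖x‖⁻¹ : ℂ) • x) (by simp [norm_smul, hn.ne'])
    rw [mulVec_smul, star_smul, smul_dotProduct, dotProduct_smul, smul_eq_mul, smul_eq_mul,
      ← ofReal_inv, star_def, conj_ofReal, re_ofReal_mul, re_ofReal_mul] at hunit
    exact pos_of_mul_pos_right (pos_of_mul_pos_right hunit (by positivity)) (by positivity)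

lemma isHermitian_one_sub (Z : Fin p → Fin q → ℂ) : (1 - of Z * (of Z)ᴴ).IsHermitian :=
  isHermitian_one.sub (isHermitian_mul_conjTranspose_self _)

lemma isOpen_typeIDomain : IsOpen (typeIDomain p q) := by
  refine isOpen_iff_mem_nhds.2 fun Z hZ => ?_
  let f : (Fin p → Fin q → ℂ) → (Fin p → ℂ) → ℝ :=
    fun Y x => (star x ⬝ᵥ ((1 - of Y * (of Y)ᴴ) *ᵥ x)).re
  have hf : Continuous fun y : (Fin p → Fin q → ℂ) × (Fin p → ℂ) => f y.1 y.2 := by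
    simp only [f, dotProduct, mulVec, Matrix.sub_apply, Matrix.mul_apply, conjTranspose_apply,
      of_apply, Pi.star_apply]
    fun_prop
  have hpos : ∀ x ∈ Metric.sphere (0 : Fin p → ℂ) 1, ∀ᶠ y in 𝓝 (Z, x), 0 < f y.1 y.2 :=
    fun x hx => hf.continuousAt.eventually
      (lt_mem_nhds ((posDef_iff_forall_mem_sphere (isHermitian_one_sub Z)).1 hZ x hx))
  filter_upwards [(isCompact_sphere (0 : Fin p → ℂ) 1).eventually_forall_of_forall_eventually
    (P := fun Y x => 0 < f Y x) hpos] with Y hY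
  exact (posDef_iff_forall_mem_sphere (isHermitian_one_sub Y)).2 hY

/-- The ambient space `V × ℂ` of the circle bundle. -/
abbrev BundleSpace (p q : ℕ) : Type := (Fin p → Fin q → ℂ) × ℂ

/-- Points `((Z, u), W)`, with `W` an independent variable taking the place of `star Z`. -/
abbrev PolarSpace (p q : ℕ) : Type := BundleSpace p q × (Fin p → Fin q → ℂ)

variable (p q) in
/-- The circle bundle in the logarithmic fiber coordinate `u = log ξ`. -/
def logCirc : Set (BundleSpace p q) :=
  {e | e.1 ∈ typeIDomain p q ∧ 2 * e.2.re = Real.log (genNormI e.1)}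

lemma log_polNorm_of_mem_logCirc {e : BundleSpace p q} (he : e ∈ logCirc p q) :
    log (polNorm e.1 (star e.1)) = e.2 + star e.2 := by
  rw [log_polNorm_star he.1, ← he.2, star_def, add_conj]

lemma differentiable_polNorm_fst_fst_snd :
    Differentiable ℂ fun y : PolarSpace p q => polNorm y.1.1 y.2 := fun _ =>
  differentiableAt_polNorm (by fun_prop) (by fun_prop)

lemma eventually_polNorm_mem_slitPlane {x : PolarSpace p q} (h : polNorm x.1.1 x.2 ∈ slitPlane) :
    ∀ᶠ y in 𝓝 x, polNorm y.1.1 y.2 ∈ slitPlane :=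
  differentiable_polNorm_fst_fst_snd.continuous.continuousAt.eventually
    (isOpen_slitPlane.mem_nhds h)

/-- Conjugation on `V × V × ℂ` exchanging the two copies of `V`. -/
def swapConj {V : Type*} [NormedAddCommGroup V] [StarAddMonoid V] [NormedStarGroup V]
    [NormedSpace ℂ V] [StarModule ℂ V] : ((V × V) × ℂ) ≃ₗᵢ⋆[ℂ] ((V × V) × ℂ) where
  toFun x := ((star x.1.2, star x.1.1), star x.2)
  invFun x := ((star x.1.2, star x.1.1), star x.2)
  map_add' x y := by simp
  map_smul' c x := by simp [star_smul]
  left_inv x := by simp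
  right_inv x := by simp
  norm_map' x := by simp [Prod.norm_def, max_comm]

/-- Coordinates `((Z, W), τ)` on `PolarSpace`, with `u = log (polNorm Z W) / 2 + i τ`. They turn
the points `((Z, u), star Z)` with `(Z, u) ∈ logCirc` into the fixed points of `swapConj`. -/
def polarChart : (((Fin p → Fin q → ℂ) × (Fin p → Fin q → ℂ)) × ℂ) ≃ PolarSpace p q where
  toFun x := ((x.1.1, log (polNorm x.1.1 x.1.2) / 2 + I * x.2), x.1.2)
  invFun y := ((y.1.1, y.2), -I * (y.1.2 - log (polNorm y.1.1 y.2) / 2))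
  left_inv x := by simp [← mul_assoc]
  right_inv y := by simp [← mul_assoc]

lemma polarChart_symm_of_mem_logCirc {e : BundleSpace p q} (he : e ∈ logCirc p q) :
    polarChart.symm (e, star e.1) = ((e.1, star e.1), (e.2.im : ℂ)) := by
  have him : e.2 - (e.2 + star e.2) / 2 = e.2.im * I := by
    rw [star_def, add_conj]
    push_cast
    linear_combination -re_add_im e.2
  simp only [polarChart, Equiv.coe_fn_symm_mk, log_polNorm_of_mem_logCirc he, him]
  congr 1
  linear_combination -(e.2.im : ℂ) * I_mul_I

lemma differentiableAt_polarChart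
    {x : ((Fin p → Fin q → ℂ) × (Fin p → Fin q → ℂ)) × ℂ} (hx : polNorm x.1.1 x.1.2 ∈ slitPlane) :
    DifferentiableAt ℂ polarChart x := by
  have hpol : DifferentiableAt ℂ (fun x : ((Fin p → Fin q → ℂ) × (Fin p → Fin q → ℂ)) × ℂ =>
      polNorm x.1.1 x.1.2) x := differentiableAt_polNorm (by fun_prop) (by fun_prop)
  have := hpol.clog hx
  simp only [polarChart, Equiv.coe_fn_mk]
  fun_prop

lemma differentiableAt_polarChart_symm {y : PolarSpace p q} (hy : polNorm y.1.1 y.2 ∈ slitPlane) :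
    DifferentiableAt ℂ polarChart.symm y := by
  have := (differentiable_polNorm_fst_fst_snd y).clog hy
  simp only [polarChart, Equiv.coe_fn_symm_mk]
  fun_prop

lemma polarChart_of_fixed {x : ((Fin p → Fin q → ℂ) × (Fin p → Fin q → ℂ)) × ℂ}
    (hx : x.1.1 ∈ typeIDomain p q) (hfix : swapConj x = x) :
    ∃ e ∈ logCirc p q, polarChart x = (e, star e.1) := by
  have hW : star x.1.1 = x.1.2 := congrArg (fun y => y.1.2) hfix
  have him : x.2.im = 0 := conj_eq_iff_im.1 (congrArg (fun y => y.2) hfix)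
  refine ⟨(polarChart x).1, ⟨hx, ?_⟩, ?_⟩
  · simp only [polarChart, Equiv.coe_fn_mk, ← hW, log_polNorm_star hx]
    rw [← ofReal_ofNat, ← ofReal_div, add_re, ofReal_re, mul_re, I_re, I_im, him]
    ring
  · simp only [polarChart, Equiv.coe_fn_mk, hW]

lemma eventually_eq_zero_of_logCirc {F : Type*} [NormedAddCommGroup F] [NormedSpace ℂ F]
    [CompleteSpace F] {e₀ : BundleSpace p q} (he₀ : e₀ ∈ logCirc p q) {K : PolarSpace p q → F}
    (hK : ∀ᶠ x in 𝓝 (e₀, star e₀.1), DifferentiableAt ℂ K x)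
    (h0 : ∀ᶠ e in 𝓝 e₀, e ∈ logCirc p q → K (e, star e.1) = 0) :
    ∀ᶠ x in 𝓝 (e₀, star e₀.1), K x = 0 := by
  let x₀ : ((Fin p → Fin q → ℂ) × (Fin p → Fin q → ℂ)) × ℂ := ((e₀.1, star e₀.1), e₀.2.im)
  have hsymm₀ : polarChart.symm (e₀, star e₀.1) = x₀ := polarChart_symm_of_mem_logCirc he₀
  have hchart₀ : polarChart x₀ = (e₀, star e₀.1) := by rw [← hsymm₀, Equiv.apply_symm_apply]
  have hslit₀ : polNorm e₀.1 (star e₀.1) ∈ slitPlane := polNorm_star_mem_slitPlane he₀.1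
  have hchart : Tendsto polarChart (𝓝 x₀) (𝓝 (e₀, star e₀.1)) :=
    hchart₀ ▸ (differentiableAt_polarChart (x := x₀) hslit₀).continuousAt
  have hslit : ∀ᶠ x in 𝓝 x₀, polNorm x.1.1 x.1.2 ∈ slitPlane :=
    hchart.eventually (eventually_polNorm_mem_slitPlane (x := (e₀, star e₀.1)) hslit₀)
  have hbase : Tendsto (fun x => (polarChart x).1) (𝓝 x₀) (𝓝 e₀) := hchart.fst_nhds
  have hdom : ∀ᶠ x in 𝓝 x₀, x.1.1 ∈ typeIDomain p q :=
    hbase.fst_nhds.eventually (isOpen_typeIDomain.mem_nhds he₀.1)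
  have hzero : ∀ᶠ x in 𝓝 x₀, K (polarChart x) = 0 := by
    refine eventually_eq_zero_of_fixed (σ := swapConj) (fun x => by simp [swapConj])
      (by simp [x₀, swapConj]) (K := fun x => K (polarChart x)) ?_ ?_
    · filter_upwards [hchart.eventually hK, hslit] with x hx hs
      exact hx.comp x (differentiableAt_polarChart hs)
    · filter_upwards [hbase.eventually h0, hdom] with x hx hxdom hfix
      obtain ⟨e, he, hxe⟩ := polarChart_of_fixed hxdom hfix
      rw [hxe] at hx ⊢
      exact hx he
  have hsymm : Tendsto polarChart.symm (𝓝 (e₀, star e₀.1)) (𝓝 x₀) :=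
    hsymm₀ ▸ (differentiableAt_polarChart_symm (y := (e₀, star e₀.1)) hslit₀).continuousAt
  exact (hsymm.eventually hzero).mono fun y hy => by rwa [Equiv.apply_symm_apply] at hy

end LogCircle

section LogMap

variable {p q : ℕ} {Φ : BundleSpace p q → BundleSpace p q} {e₀ : BundleSpace p q}
  {x : PolarSpace p q}

/-- The polarized complex conjugate of `(Z, u)`: on `logCirc`, the fiber equation
`u + conj u = log (polNorm Z W)` with `W = star Z` determines `conj u`. -/
def mirror (x : PolarSpace p q) : BundleSpace p q :=
  (x.2, log (polNorm x.1.1 x.2) - x.1.2)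

/-- The polarized complex conjugate of `Φ (Z, u)`; it is holomorphic wherever `Φ` and `mirror`
are. -/
def mirrorImage (Φ : BundleSpace p q → BundleSpace p q) (x : PolarSpace p q) : BundleSpace p q :=
  star (Φ (star (mirror x)))

lemma mirror_of_mem_logCirc {e : BundleSpace p q} (he : e ∈ logCirc p q) :
    mirror (e, star e.1) = star e := by
  simp only [mirror, log_polNorm_of_mem_logCirc he]
  ext <;> simp

lemma mirrorImage_of_mem_logCirc (Φ : BundleSpace p q → BundleSpace p q) {e : BundleSpace p q}
    (he : e ∈ logCirc p q) : mirrorImage Φ (e, star e.1) = star (Φ e) := by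
  rw [mirrorImage, mirror_of_mem_logCirc he, star_star]

lemma differentiableAt_mirror (h : polNorm x.1.1 x.2 ∈ slitPlane) :
    DifferentiableAt ℂ mirror x := by
  have := (differentiable_polNorm_fst_fst_snd x).clog h
  unfold mirror
  fun_prop

lemma tendsto_star_mirror (he₀ : e₀ ∈ logCirc p q) :
    Tendsto (fun x => star (mirror x)) (𝓝 (e₀, star e₀.1)) (𝓝 e₀) := by
  have h : star (mirror (e₀, star e₀.1)) = e₀ := by rw [mirror_of_mem_logCirc he₀, star_star]
  have hcont := (differentiableAt_mirror (x := (e₀, star e₀.1))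
    (polNorm_star_mem_slitPlane he₀.1)).continuousAt.star
  rwa [ContinuousAt, h] at hcont

lemma differentiableAt_mirrorImage (h : polNorm x.1.1 x.2 ∈ slitPlane)
    (hΦ : DifferentiableAt ℂ Φ (star (mirror x))) : DifferentiableAt ℂ (mirrorImage Φ) x := by
  have hconj := hΦ.star_star
  rw [star_star] at hconj
  exact hconj.comp x (differentiableAt_mirror h)

/-- `Φ` is holomorphic near a point `e₀` of the circle bundle, which it locally maps to itself, in
the logarithmic fiber coordinate. -/
structure IsLogMap (Φ : BundleSpace p q → BundleSpace p q) (e₀ : BundleSpace p q) : Prop where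
  mem : e₀ ∈ logCirc p q
  diff : ∀ᶠ e in 𝓝 e₀, DifferentiableAt ℂ Φ e
  maps : ∀ᶠ e in 𝓝 e₀, e ∈ logCirc p q → Φ e ∈ logCirc p q

/-- Near `x`, the conjugate variables being independent, `Φ` satisfies the polarization of the
equation saying that it maps the circle bundle to itself. -/
structure IsPolarized (Φ : BundleSpace p q → BundleSpace p q) (x : PolarSpace p q) : Prop where
  slit : polNorm x.1.1 x.2 ∈ slitPlane
  slit_map : polNorm (Φ x.1).1 (mirrorImage Φ x).1 ∈ slitPlane
  diff : ∀ᶠ e in 𝓝 x.1, DifferentiableAt ℂ Φ e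
  diff_mirror : DifferentiableAt ℂ (mirrorImage Φ) x
  eqn : ∀ᶠ y in 𝓝 x, (Φ y.1).2 + (mirrorImage Φ y).2 =
    log (polNorm (Φ y.1).1 (mirrorImage Φ y).1)

namespace IsLogMap

lemma eventually (h : IsLogMap Φ e₀) : ∀ᶠ e in 𝓝 e₀, e ∈ logCirc p q → IsLogMap Φ e := by
  filter_upwards [h.diff.eventually_nhds, h.maps.eventually_nhds] with e hdiff hmaps he
  exact ⟨he, hdiff, hmaps⟩

lemma eventually_differentiableAt_mirrorImage (h : IsLogMap Φ e₀) :
    ∀ᶠ x in 𝓝 (e₀, star e₀.1), DifferentiableAt ℂ (mirrorImage Φ) x := by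
  filter_upwards [(tendsto_star_mirror h.mem).eventually h.diff,
    eventually_polNorm_mem_slitPlane (x := (e₀, star e₀.1)) (polNorm_star_mem_slitPlane h.mem.1)]
    with x hx hslit
  exact differentiableAt_mirrorImage hslit hx

lemma eventually_differentiableAt_comp_fst (h : IsLogMap Φ e₀) :
    ∀ᶠ x in 𝓝 (e₀, star e₀.1), DifferentiableAt ℂ (fun y : PolarSpace p q => Φ y.1) x :=
  (tendsto_id.fst_nhds.eventually h.diff).mono fun x hx => hx.comp x differentiableAt_fst

lemma eventually_differentiableAt_polNorm (h : IsLogMap Φ e₀) :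
    ∀ᶠ x in 𝓝 (e₀, star e₀.1), DifferentiableAt ℂ
      (fun y : PolarSpace p q => polNorm (Φ y.1).1 (mirrorImage Φ y).1) x := by
  filter_upwards [h.eventually_differentiableAt_mirrorImage,
    h.eventually_differentiableAt_comp_fst] with x hmirror hΦ
  exact differentiableAt_polNorm hΦ.fst hmirror.fst

lemma eventually_polNorm_map_mem_slitPlane (h : IsLogMap Φ e₀) :
    ∀ᶠ x in 𝓝 (e₀, star e₀.1), polNorm (Φ x.1).1 (mirrorImage Φ x).1 ∈ slitPlane := by
  refine h.eventually_differentiableAt_polNorm.self_of_nhds.continuousAt.eventually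
    (isOpen_slitPlane.mem_nhds ?_)
  simp only [mirrorImage_of_mem_logCirc Φ h.mem]
  exact polNorm_star_mem_slitPlane (h.maps.self_of_nhds h.mem).1

lemma eventually_add_mirrorImage_eq_log (h : IsLogMap Φ e₀) :
    ∀ᶠ y in 𝓝 (e₀, star e₀.1),
      (Φ y.1).2 + (mirrorImage Φ y).2 = log (polNorm (Φ y.1).1 (mirrorImage Φ y).1) := by
  suffices H : ∀ᶠ y in 𝓝 (e₀, star e₀.1), (Φ y.1).2 + (mirrorImage Φ y).2 -
      log (polNorm (Φ y.1).1 (mirrorImage Φ y).1) = 0 from H.mono fun y => sub_eq_zero.1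
  refine eventually_eq_zero_of_logCirc (K := fun y => (Φ y.1).2 + (mirrorImage Φ y).2 -
    log (polNorm (Φ y.1).1 (mirrorImage Φ y).1)) h.mem ?_ ?_
  · filter_upwards [h.eventually_differentiableAt_mirrorImage,
      h.eventually_differentiableAt_comp_fst, h.eventually_differentiableAt_polNorm,
      h.eventually_polNorm_map_mem_slitPlane] with x hmirror hΦ hpol hslit
    exact (hΦ.snd.add hmirror.snd).sub (hpol.clog hslit)
  · filter_upwards [h.maps] with e he hmem
    rw [mirrorImage_of_mem_logCirc Φ hmem]
    exact sub_eq_zero.2 (log_polNorm_of_mem_logCirc (he hmem)).symm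

lemma eventually_isPolarized (h : IsLogMap Φ e₀) :
    ∀ᶠ x in 𝓝 (e₀, star e₀.1), IsPolarized Φ x := by
  filter_upwards [eventually_polNorm_mem_slitPlane (x := (e₀, star e₀.1))
      (polNorm_star_mem_slitPlane h.mem.1), h.eventually_polNorm_map_mem_slitPlane,
    tendsto_id.fst_nhds.eventually h.diff.eventually_nhds,
    h.eventually_differentiableAt_mirrorImage,
    h.eventually_add_mirrorImage_eq_log.eventually_nhds] with x hslit hslit' hΦ hmirror heqn
  exact ⟨hslit, hslit', hΦ, hmirror, heqn⟩

end IsLogMap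

/-- The slope of the image under `Φ` of the Segre variety through `x.1` with mirror point
`mirror x`. -/
def imageSlope (Φ : BundleSpace p q → BundleSpace p q) (x : PolarSpace p q) :
    Matrix (Fin q) (Fin p) ℂ :=
  logSlope (Φ x.1).1 (mirrorImage Φ x).1

/-- The `V`-component of the second differential of `Φ`. -/
def hessFst (Φ : BundleSpace p q → BundleSpace p q) (e : BundleSpace p q) :
    BundleSpace p q →ₗ[ℂ] BundleSpace p q →ₗ[ℂ] (Fin p → Fin q → ℂ) :=
  (fderiv ℂ (fderiv ℂ Φ) e).toLinearMap₁₂.compr₂ (LinearMap.fst ℂ _ _)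

/-- The fiber component of the second differential of `Φ`. -/
def hessSnd (Φ : BundleSpace p q → BundleSpace p q) (e : BundleSpace p q) :
    BundleSpace p q →ₗ[ℂ] BundleSpace p q →ₗ[ℂ] ℂ :=
  (fderiv ℂ (fderiv ℂ Φ) e).toLinearMap₁₂.compr₂ (LinearMap.snd ℂ _ _)

lemma hessFst_apply (Φ : BundleSpace p q → BundleSpace p q) (e x y : BundleSpace p q) :
    hessFst Φ e x y = (fderiv ℂ (fderiv ℂ Φ) e x y).1 := rfl

lemma hessSnd_apply (Φ : BundleSpace p q → BundleSpace p q) (e x y : BundleSpace p q) :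
    hessSnd Φ e x y = (fderiv ℂ (fderiv ℂ Φ) e x y).2 := rfl

/-- The curve over the line `x.1.1 + t • v` in the Segre variety through `x.1`, i.e. in the set of
points with the same mirror point as `x`. -/
def segreCurve (x : PolarSpace p q) (v : Fin p → Fin q → ℂ) (t : ℂ) : BundleSpace p q :=
  (x.1.1 + t • v, log (polNorm (x.1.1 + t • v) x.2) - (mirror x).2)

lemma segreCurve_zero (x : PolarSpace p q) (v : Fin p → Fin q → ℂ) : segreCurve x v 0 = x.1 := by
  simp [segreCurve, mirror]

lemma mirror_segreCurve (x : PolarSpace p q) (v : Fin p → Fin q → ℂ) (t : ℂ) :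
    mirror (segreCurve x v t, x.2) = mirror x := by
  simp [segreCurve, mirror]

lemma mirrorImage_segreCurve (Φ : BundleSpace p q → BundleSpace p q) (x : PolarSpace p q)
    (v : Fin p → Fin q → ℂ) (t : ℂ) :
    mirrorImage Φ (segreCurve x v t, x.2) = mirrorImage Φ x := by
  rw [mirrorImage, mirror_segreCurve, mirrorImage]

lemma hasDerivAt_fst {A B : Type*} [NormedAddCommGroup A] [NormedSpace ℂ A]
    [NormedAddCommGroup B] [NormedSpace ℂ B] {f : ℂ → A × B} {f' : A × B} {t : ℂ}
    (h : HasDerivAt f f' t) : HasDerivAt (fun s => (f s).1) f'.1 t :=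
  (ContinuousLinearMap.fst ℂ A B).hasFDerivAt.comp_hasDerivAt t h

lemma hasDerivAt_snd {A B : Type*} [NormedAddCommGroup A] [NormedSpace ℂ A]
    [NormedAddCommGroup B] [NormedSpace ℂ B] {f : ℂ → A × B} {f' : A × B} {t : ℂ}
    (h : HasDerivAt f f' t) : HasDerivAt (fun s => (f s).2) f'.2 t :=
  (ContinuousLinearMap.snd ℂ A B).hasFDerivAt.comp_hasDerivAt t h

lemma hasDerivAt_add_smul {V : Type*} [NormedAddCommGroup V] [NormedSpace ℂ V] (z v : V) (t : ℂ) :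
    HasDerivAt (fun s : ℂ => z + s • v) v t := by
  simpa using ((hasDerivAt_id t).smul_const v).const_add z

lemma hasDerivAt_segreCurve {v : Fin p → Fin q → ℂ} {t : ℂ}
    (h : polNorm (x.1.1 + t • v) x.2 ∈ slitPlane) :
    HasDerivAt (segreCurve x v) (graphVec v (logSlope (x.1.1 + t • v) x.2)) t := by
  have hline := hasDerivAt_add_smul x.1.1 v t
  exact hline.prodMk ((hasDerivAt_log_polNorm hline h).sub_const _)

lemma tendsto_segreCurve (h : polNorm x.1.1 x.2 ∈ slitPlane) (v : Fin p → Fin q → ℂ) :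
    Tendsto (segreCurve x v) (𝓝 0) (𝓝 x.1) := by
  have hcont := (hasDerivAt_segreCurve (v := v) (t := 0) (by simpa using h)).continuousAt
  rwa [ContinuousAt, segreCurve_zero] at hcont

lemma hasDerivAt_graphVec_logSlope (h : polNorm x.1.1 x.2 ≠ 0) (v : Fin p → Fin q → ℂ) :
    HasDerivAt (fun t : ℂ => graphVec v (logSlope (x.1.1 + t • v) x.2))
      (-trPairSq v (logSlope x.1.1 x.2) • ((0, 1) : BundleSpace p q)) 0 := by
  have hslope := hasDerivAt_trPair_logSlope (W := x.2) (hasDerivAt_const (0 : ℂ) v)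
    (hasDerivAt_add_smul x.1.1 v 0) (by simpa using h)
  have hgraph := (hasDerivAt_const (0 : ℂ) v).prodMk hslope.neg
  simp only [zero_smul, add_zero, map_zero, LinearMap.zero_apply, zero_add] at hgraph
  rw [Prod.smul_mk, smul_zero, smul_eq_mul, mul_one]
  exact hgraph

namespace IsPolarized

lemma eventually_tangency (h : IsPolarized Φ x) (v : Fin p → Fin q → ℂ) :
    ∀ᶠ t in 𝓝 (0 : ℂ),
      (fderiv ℂ Φ (segreCurve x v t) (graphVec v (logSlope (x.1.1 + t • v) x.2))).2 +
        trPair (fderiv ℂ Φ (segreCurve x v t) (graphVec v (logSlope (x.1.1 + t • v) x.2))).1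
          (logSlope (Φ (segreCurve x v t)).1 (mirrorImage Φ x).1) = 0 := by
  have hcurve : Tendsto (segreCurve x v) (𝓝 0) (𝓝 x.1) := tendsto_segreCurve h.slit v
  have hcurve' : Tendsto (fun t => (segreCurve x v t, x.2)) (𝓝 0) (𝓝 x) :=
    hcurve.prodMk_nhds tendsto_const_nhds
  have hslit : ∀ᶠ t in 𝓝 (0 : ℂ), polNorm (x.1.1 + t • v) x.2 ∈ slitPlane :=
    hcurve'.eventually (eventually_polNorm_mem_slitPlane h.slit)
  have hslit' : ∀ᶠ t in 𝓝 (0 : ℂ),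
      polNorm (Φ (segreCurve x v t)).1 (mirrorImage Φ x).1 ∈ slitPlane := by
    have hpol : ContinuousAt (fun Y => polNorm Y (mirrorImage Φ x).1) (Φ x.1).1 :=
      (differentiableAt_polNorm differentiableAt_id (differentiableAt_const _)).continuousAt
    exact (hpol.tendsto.comp (h.diff.self_of_nhds.continuousAt.fst.tendsto.comp hcurve)).eventually
      (isOpen_slitPlane.mem_nhds h.slit_map)
  filter_upwards [hslit, hslit', (hcurve'.eventually h.eqn).eventually_nhds,
    hcurve.eventually h.diff] with t hs hs' heqn hΦ
  have himage := hΦ.hasFDerivAt.comp_hasDerivAt t (hasDerivAt_segreCurve hs)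
  have hlog := hasDerivAt_log_polNorm (W := (mirrorImage Φ x).1) (hasDerivAt_fst himage) hs'
  have hsum := (hasDerivAt_snd himage).add_const (mirrorImage Φ x).2
  rw [hsum.unique (hlog.congr_of_eventuallyEq (heqn.mono fun s hs => by
    rw [mirrorImage_segreCurve] at hs
    exact hs))]
  exact neg_add_cancel _

lemma mapsSegreJet (h : IsPolarized Φ x) :
    MapsSegreJet (fderiv ℂ Φ x.1 : BundleSpace p q →ₗ[ℂ] BundleSpace p q) (hessFst Φ x.1)
      (hessSnd Φ x.1) (logSlope x.1.1 x.2) (imageSlope Φ x) := by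
  refine ⟨fun v => ?_, fun v => ?_⟩
  · have := (h.eventually_tangency v).self_of_nhds
    simp only [segreCurve_zero, zero_smul, add_zero] at this
    exact this
  -- The second-order condition is the derivative of the tangency condition along the curve.
  have hcurve := hasDerivAt_segreCurve (x := x) (v := v) (t := 0) (by simpa using h.slit)
  have hD : HasFDerivAt (fderiv ℂ Φ) (fderiv ℂ (fderiv ℂ Φ) x.1) (segreCurve x v 0) := by
    rw [segreCurve_zero]
    exact (differentiableAt_fderiv_of_eventually h.diff).hasFDerivAt
  have hΦ : HasFDerivAt Φ (fderiv ℂ Φ x.1) (segreCurve x v 0) := by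
    rw [segreCurve_zero]
    exact h.diff.self_of_nhds.hasFDerivAt
  have hvec := (hD.comp_hasDerivAt (0 : ℂ) hcurve).clm_apply
    (hasDerivAt_graphVec_logSlope (slitPlane_ne_zero h.slit) v)
  have hslope := hasDerivAt_trPair_logSlope (W := (mirrorImage Φ x).1) (hasDerivAt_fst hvec)
    (hasDerivAt_fst (hΦ.comp_hasDerivAt (0 : ℂ) hcurve)) (by
      rw [Function.comp_apply, segreCurve_zero]
      exact slitPlane_ne_zero h.slit_map)
  have hzero := ((hasDerivAt_snd hvec).add hslope).unique
    ((hasDerivAt_const (0 : ℂ) (0 : ℂ)).congr_of_eventuallyEq (h.eventually_tangency v))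
  simp only [Function.comp_apply, segreCurve_zero, zero_smul, add_zero, map_smul] at hzero
  simp only [hessFst_apply, hessSnd_apply, ContinuousLinearMap.coe_coe, imageSlope]
  rw [← hzero]
  simp only [trPairSq, Prod.fst_add, Prod.snd_add, Prod.fst_neg, Prod.snd_neg, Prod.smul_fst,
    Prod.smul_snd, smul_eq_mul, neg_smul, sub_eq_add_neg]
  ring

end IsPolarized

end LogMap

section PositiveMatrices

variable {m n : Type*} [Fintype m] [Fintype n]

open scoped MatrixOrder Matrix.Norms.L2Operator in
lemma exists_isUnit_eq_conjTranspose_mul_self [DecidableEq n] {A : Matrix n n ℂ} (hA : A.PosDef) :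
    ∃ c : Matrix n n ℂ, IsUnit c.det ∧ A = cᴴ * c := by
  obtain ⟨c, hc, hAc⟩ := CStarAlgebra.isStrictlyPositive_iff_eq_star_mul_self.1
    hA.isStrictlyPositive
  exact ⟨c, (isUnit_iff_isUnit_det c).1 hc, hAc⟩

lemma exists_mul_mul_conjTranspose_eq_one [DecidableEq n] {A : Matrix n n ℂ} (hA : A.PosDef) :
    ∃ b : Matrix n n ℂ, b * A * bᴴ = 1 := by
  obtain ⟨c, hc, rfl⟩ := exists_isUnit_eq_conjTranspose_mul_self hA
  refine ⟨(c⁻¹)ᴴ, ?_⟩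
  rw [conjTranspose_conjTranspose, ← Matrix.mul_assoc, ← conjTranspose_mul, mul_nonsing_inv _ hc,
    conjTranspose_one, Matrix.one_mul, mul_nonsing_inv _ hc]

variable [DecidableEq m] [DecidableEq n] in
lemma posDef_one_sub_conjTranspose_mul {Z : Matrix m n ℂ} (h : (1 - Z * Zᴴ).PosDef) :
    (1 - Zᴴ * Z).PosDef := by
  have hu : IsUnit (1 - Z * Zᴴ).det := isUnit_iff_ne_zero.2 h.det_pos.ne'
  have hpos : (1 + Zᴴ * (1 - Z * Zᴴ)⁻¹ * Z).PosDef :=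
    PosDef.one.add_posSemidef (h.inv.posSemidef.conjTranspose_mul_mul_same Z)
  have hcomm : (1 - Zᴴ * Z) * Zᴴ = Zᴴ * (1 - Z * Zᴴ) := by
    simp [Matrix.sub_mul, Matrix.mul_sub, Matrix.mul_assoc]
  have hinv : 1 - Zᴴ * Z = (1 + Zᴴ * (1 - Z * Zᴴ)⁻¹ * Z)⁻¹ := by
    refine (inv_eq_left_inv ?_).symm
    rw [Matrix.mul_add, ← Matrix.mul_assoc, ← Matrix.mul_assoc, hcomm, Matrix.mul_assoc Zᴴ,
      mul_nonsing_inv _ hu]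
    simp
  exact hinv ▸ hpos.inv

variable [DecidableEq m] [DecidableEq n] in
lemma posDef_one_sub_mul_conjTranspose_iff {Z : Matrix m n ℂ} :
    (1 - Z * Zᴴ).PosDef ↔ (1 - Zᴴ * Z).PosDef := by
  refine ⟨posDef_one_sub_conjTranspose_mul, fun h => ?_⟩
  have := posDef_one_sub_conjTranspose_mul (Z := Zᴴ) (by rwa [conjTranspose_conjTranspose])
  rwa [conjTranspose_conjTranspose] at this

lemma eq_zero_of_trace_mul_eq_zero {A : Matrix n n ℂ} {B : Matrix m m ℂ} (hA : A.PosDef)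
    (hB : B.PosDef) {a : Matrix m n ℂ} (h : (a * (A * aᴴ * B)).trace = 0) : a = 0 := by
  classical
  obtain ⟨c, hc, rfl⟩ := exists_isUnit_eq_conjTranspose_mul_self hA
  obtain ⟨b, hb, rfl⟩ := exists_isUnit_eq_conjTranspose_mul_self hB
  have hsq : (a * (cᴴ * c * aᴴ * (bᴴ * b))).trace = ((b * a * cᴴ) * (b * a * cᴴ)ᴴ).trace := by
    rw [conjTranspose_mul, conjTranspose_mul, conjTranspose_conjTranspose, Matrix.mul_assoc b,
      Matrix.mul_assoc b, trace_mul_comm b]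
    simp only [Matrix.mul_assoc]
  rw [hsq, trace_mul_conjTranspose_self_eq_zero_iff] at h
  have hcancel : b⁻¹ * (b * a * cᴴ) * (c⁻¹)ᴴ = a := by
    rw [Matrix.mul_assoc, Matrix.mul_assoc _ cᴴ, ← conjTranspose_mul, nonsing_inv_mul _ hc,
      conjTranspose_one, Matrix.mul_one, ← Matrix.mul_assoc, nonsing_inv_mul _ hb, Matrix.one_mul]
  rw [← hcancel, h, Matrix.mul_zero, Matrix.zero_mul]

end PositiveMatrices

section Dichotomy

variable {p q : ℕ} {Φ : BundleSpace p q → BundleSpace p q} {e e₀ : BundleSpace p q}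
  {x : PolarSpace p q}

/-- The factor by which `Φ` scales the contact form `(y : BundleSpace) ↦ y.2 + trPair y.1 S` of the
Segre variety with slope `S` through `x.1`. -/
def contactFactor (Φ : BundleSpace p q → BundleSpace p q) (x : PolarSpace p q) : ℂ :=
  (fderiv ℂ Φ x.1 (0, 1)).2 + trPair (fderiv ℂ Φ x.1 (0, 1)).1 (imageSlope Φ x)

lemma tendsto_prodMk_star (e₀ : BundleSpace p q) :
    Tendsto (fun e : BundleSpace p q => (e, star e.1)) (𝓝 e₀) (𝓝 (e₀, star e₀.1)) :=
  (by fun_prop : Continuous fun e : BundleSpace p q => (e, star e.1)).tendsto e₀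

namespace IsPolarized

lemma differentiableAt_fderiv_apply (h : IsPolarized Φ x) {g : PolarSpace p q → BundleSpace p q}
    (hg : DifferentiableAt ℂ g x) : DifferentiableAt ℂ (fun y => fderiv ℂ Φ y.1 (g y)) x := by
  have hfderiv : DifferentiableAt ℂ (fun y : PolarSpace p q => fderiv ℂ Φ y.1) x :=
    (differentiableAt_fderiv_of_eventually h.diff).comp x differentiableAt_fst
  exact hfderiv.clm_apply hg

lemma differentiableAt_contactFactor (h : IsPolarized Φ x) :
    DifferentiableAt ℂ (contactFactor Φ) x := by
  have hvert := h.differentiableAt_fderiv_apply (g := fun _ => (0, 1)) (differentiableAt_const _)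
  have hΦ : DifferentiableAt ℂ (fun y : PolarSpace p q => Φ y.1) x :=
    h.diff.self_of_nhds.comp x differentiableAt_fst
  exact hvert.snd.add (differentiableAt_trPair_logSlope hvert.fst hΦ.fst h.diff_mirror.fst
    (slitPlane_ne_zero h.slit_map))

lemma differentiableAt_fderiv_graphVec (h : IsPolarized Φ x) (v : Fin p → Fin q → ℂ) :
    DifferentiableAt ℂ (fun y : PolarSpace p q =>
      fderiv ℂ Φ y.1 (graphVec v (logSlope y.1.1 y.2))) x := by
  have hslope : DifferentiableAt ℂ (fun y : PolarSpace p q => trPair v (logSlope y.1.1 y.2)) x :=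
    differentiableAt_trPair_logSlope (differentiableAt_const v)
      (a := fun y : PolarSpace p q => y.1.1) (b := fun y => y.2)
      (by fun_prop) (by fun_prop) (slitPlane_ne_zero h.slit)
  exact h.differentiableAt_fderiv_apply ((differentiableAt_const v).prodMk hslope.neg)

end IsPolarized

lemma hasDerivAt_mirror (he : e ∈ logCirc p q) (v : Fin p → Fin q → ℂ) :
    HasDerivAt (fun t : ℂ => mirror (e, star e.1 + t • star v))
      (star (graphVec v (logSlope e.1 (star e.1)))) 0 := by
  have hline := hasDerivAt_add_smul (star e.1) (star v) 0
  have hslit : polNorm (star e.1 + (0 : ℂ) • star v) e.1 ∈ slitPlane := by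
    rw [zero_smul, add_zero, polNorm_comm]
    exact polNorm_star_mem_slitPlane he.1
  have hstar : star (graphVec v (logSlope e.1 (star e.1))) =
      (star v, -trPair (star v) (logSlope (star e.1 + (0 : ℂ) • star v) e.1)) := by
    have hpair := trPair_star_logSlope_star v e.1 (star e.1)
    rw [star_star] at hpair
    rw [zero_smul, add_zero, hpair]
    ext <;> simp [graphVec]
  rw [hstar]
  refine (hline.prodMk ((hasDerivAt_log_polNorm hline hslit).sub_const e.2)).congr_of_eventuallyEq
    (Eventually.of_forall fun t => ?_)
  simp only [mirror]
  rw [polNorm_comm]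

lemma hasDerivAt_mirrorImage (he : e ∈ logCirc p q) (hΦ : DifferentiableAt ℂ Φ e)
    (v : Fin p → Fin q → ℂ) :
    HasDerivAt (fun t : ℂ => mirrorImage Φ (e, star e.1 + t • star v))
      (star (fderiv ℂ Φ e (graphVec v (logSlope e.1 (star e.1))))) 0 := by
  have hbase : star e = mirror (e, star e.1 + (0 : ℂ) • star v) := by
    rw [zero_smul, add_zero, mirror_of_mem_logCirc he]
  have hconj := hΦ.hasFDerivAt.star_star
  rw [hbase] at hconj
  have hcomp := hconj.comp_hasDerivAt (0 : ℂ) (hasDerivAt_mirror he v)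
  refine hcomp.congr_deriv ?_
  simp

lemma IsLogMap.eventually_apply_eq_zero (h : IsLogMap Φ e₀)
    (h0 : ∀ᶠ e in 𝓝 e₀, e ∈ logCirc p q → contactFactor Φ (e, star e.1) = 0) :
    ∀ᶠ x in 𝓝 (e₀, star e₀.1), ∀ y,
      (fderiv ℂ Φ x.1 y).2 + trPair (fderiv ℂ Φ x.1 y).1 (imageSlope Φ x) = 0 := by
  have hpol := h.eventually_isPolarized
  filter_upwards [hpol, eventually_eq_zero_of_logCirc h.mem
    (hpol.mono fun x hx => hx.differentiableAt_contactFactor) h0] with x hx hcontact y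
  rw [contactFactor] at hcontact
  have happly := hx.mapsSegreJet.apply y
  rwa [ContinuousLinearMap.coe_coe, hcontact, zero_mul] at happly

/- With the point `e` fixed, the condition is differentiated in the conjugate variable `W`; the
derivative is a positive definite Hermitian form in the image of the graph vector. -/
lemma fderiv_graphVec_eq_zero (he : e ∈ logCirc p q) (hΦ : DifferentiableAt ℂ Φ e)
    (hmem : (Φ e).1 ∈ typeIDomain p q)
    (h0 : ∀ᶠ x in 𝓝 (e, star e.1), ∀ y,
      (fderiv ℂ Φ x.1 y).2 + trPair (fderiv ℂ Φ x.1 y).1 (imageSlope Φ x) = 0)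
    (v : Fin p → Fin q → ℂ) :
    fderiv ℂ Φ e (graphVec v (logSlope e.1 (star e.1))) = 0 := by
  have hmirror := hasDerivAt_fst (hasDerivAt_mirrorImage he hΦ v)
  generalize graphVec v (logSlope e.1 (star e.1)) = y at hmirror ⊢
  generalize hw : fderiv ℂ Φ e y = w at hmirror ⊢
  have hbase : (mirrorImage Φ (e, star e.1 + (0 : ℂ) • star v)).1 = star (Φ e).1 := by
    rw [zero_smul, add_zero, mirrorImage_of_mem_logCirc Φ he]
    rfl
  have hderiv := (hasDerivAt_trPair_logSlope_right (w := w.1) (Z := (Φ e).1) hmirror (by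
    rw [hbase]
    exact slitPlane_ne_zero (polNorm_star_mem_slitPlane hmem))).const_add w.2
  have hline : Tendsto (fun t : ℂ => (e, star e.1 + t • star v)) (𝓝 0) (𝓝 (e, star e.1)) :=
    (by fun_prop : Continuous fun t : ℂ => (e, star e.1 + t • star v)).tendsto' 0 _ (by simp)
  have hzero := hderiv.unique ((hasDerivAt_const (0 : ℂ) (0 : ℂ)).congr_of_eventuallyEq
    ((hline.eventually h0).mono fun t ht => hw ▸ ht y))
  rw [hbase] at hzero
  have hfst : w.1 = 0 := of.injective (eq_zero_of_trace_mul_eq_zero (a := of w.1)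
    (posDef_one_sub_conjTranspose_mul hmem).inv (PosDef.inv hmem) hzero)
  have hsnd := h0.self_of_nhds y
  rw [hw, hfst, map_zero, LinearMap.zero_apply, add_zero] at hsnd
  exact Prod.ext hfst hsnd

lemma eq_zero_of_eventually_graphVec {m n F : Type*} [Fintype m] [Fintype n] [DecidableEq m]
    [DecidableEq n] [Nonempty m] [Nonempty n] [AddCommGroup F] [Module ℂ F]
    {L : ((m → n → ℂ) × ℂ) →ₗ[ℂ] F} {S₀ : Matrix n m ℂ}
    (h : ∀ i j, ∀ᶠ S in 𝓝 S₀, L (graphVec (elem i j) S) = 0) : L = 0 := by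
  have hsplit (v : m → n → ℂ) (S : Matrix n m ℂ) :
      L (graphVec v S) = L (v, 0) - trPair v S • L (0, 1) := by
    rw [← map_smul, ← map_sub]
    simp [graphVec]
  have hvert (i : m) (j : n) (S : Matrix n m ℂ) : trPair (elem i j) S • L (0, 1) = 0 :=
    LinearMap.congr_fun (linearMap_eq_zero_of_eventually
      (f := (trPair (elem i j)).smulRight (L (0, 1)))
      ((h i j).mono fun S hS => (sub_eq_zero.1 (hsplit _ S ▸ hS)).symm)) S
  have hL : L (0, 1) = 0 := by
    obtain ⟨i⟩ := ‹Nonempty m›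
    obtain ⟨j⟩ := ‹Nonempty n›
    simpa [trPair_elem] using hvert i j (Matrix.single j i 1)
  have helem (i : m) (j : n) : L (elem i j, 0) = 0 := by
    simpa [hsplit, hL] using (h i j).self_of_nhds
  have hinl : L ∘ₗ LinearMap.inl ℂ _ _ = 0 := LinearMap.ext fun v => by
    rw [← sum_smul_elem v]
    simp only [map_sum, map_smul, LinearMap.comp_apply, LinearMap.inl_apply, helem, smul_zero,
      Finset.sum_const_zero, LinearMap.zero_apply]
  exact LinearMap.prod_ext hinl (LinearMap.ext_ring hL)

lemma IsLogMap.fderiv_eq_zero [Nonempty (Fin p)] [Nonempty (Fin q)] (h : IsLogMap Φ e₀)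
    (h0 : ∀ᶠ e in 𝓝 e₀, e ∈ logCirc p q → contactFactor Φ (e, star e.1) = 0) :
    ∀ᶠ e in 𝓝 e₀, fderiv ℂ Φ e = 0 := by
  have hpol := h.eventually_isPolarized
  have hgraph : ∀ᶠ x in 𝓝 (e₀, star e₀.1), ∀ i j,
      fderiv ℂ Φ x.1 (graphVec (elem i j) (logSlope x.1.1 x.2)) = 0 := by
    refine eventually_all.2 fun i => eventually_all.2 fun j => ?_
    refine eventually_eq_zero_of_logCirc (K := fun x =>
      fderiv ℂ Φ x.1 (graphVec (elem i j) (logSlope x.1.1 x.2))) h.mem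
      (hpol.mono fun x hx => hx.differentiableAt_fderiv_graphVec _) ?_
    filter_upwards [(tendsto_prodMk_star e₀).eventually
      (h.eventually_apply_eq_zero h0).eventually_nhds, h.diff, h.maps] with e hzero hΦ hmem he
    exact fderiv_graphVec_eq_zero he hΦ (hmem he).1 hzero _
  filter_upwards [(hgraph.and hpol).curry_nhds] with e he
  have hne : polNorm e.1 (star e₀.1) ≠ 0 := slitPlane_ne_zero he.self_of_nhds.2.slit
  refine ContinuousLinearMap.coe_injective (eq_zero_of_eventually_graphVec
    (S₀ := logSlope e.1 (star e₀.1)) fun i j => ?_)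
  filter_upwards [eventually_exists_logSlope_eq hne he] with S ⟨W, hW, hS⟩
  exact hS ▸ hW.1 i j

/-- The dichotomy: if the contact factor does not vanish identically on the circle bundle, the
differential of `Φ` preserves its Segre jets. -/
lemma IsLogMap.eventually_preservesSegreJets (h : IsLogMap Φ e₀)
    (h0 : contactFactor Φ (e₀, star e₀.1) ≠ 0) :
    ∀ᶠ e in 𝓝 e₀, e ∈ logCirc p q →
      PreservesSegreJets (fderiv ℂ Φ e : BundleSpace p q →ₗ[ℂ] BundleSpace p q) (hessFst Φ e)
        (hessSnd Φ e) (logSlope e.1 (star e.1)) := by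
  have hpol := h.eventually_isPolarized
  have hcontact : ∀ᶠ x in 𝓝 (e₀, star e₀.1), contactFactor Φ x ≠ 0 :=
    hpol.self_of_nhds.differentiableAt_contactFactor.continuousAt.eventually_ne h0
  filter_upwards [(tendsto_prodMk_star e₀).eventually (hpol.and hcontact).eventually_nhds]
    with e hnear he
  have hne := slitPlane_ne_zero (polNorm_star_mem_slitPlane he.1)
  filter_upwards [eventually_exists_logSlope_eq hne hnear.curry_nhds.self_of_nhds]
    with S ⟨W, ⟨hW, hW0⟩, hS⟩
  exact ⟨_, hS ▸ hW.mapsSegreJet, hW0⟩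

lemma IsLogMap.eventually_fst_fderiv_vertical [Nontrivial (Fin p)] [Nontrivial (Fin q)]
    (h : IsLogMap Φ e₀) (h0 : contactFactor Φ (e₀, star e₀.1) ≠ 0) :
    ∀ᶠ e in 𝓝 e₀, (fderiv ℂ Φ e (0, 1)).1 = 0 := by
  refine (eventually_eq_zero_of_logCirc (K := fun x => (fderiv ℂ Φ x.1 (0, 1)).1) h.mem
    (h.eventually_isPolarized.mono fun x hx =>
      (hx.differentiableAt_fderiv_apply (differentiableAt_const _)).fst) ?_).curry_nhds.mono
    fun e he => he.self_of_nhds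
  filter_upwards [h.eventually_preservesSegreJets h0] with e hjets he
  exact (hjets he).fst_vertical_eq_zero

lemma hessFst_comm (hΦ : ∀ᶠ y in 𝓝 e, DifferentiableAt ℂ Φ y) (y z : BundleSpace p q) :
    hessFst Φ e y z = hessFst Φ e z y := by
  rw [hessFst_apply, hessFst_apply, second_derivative_symmetric_of_eventually
    (hΦ.mono fun y hy => hy.hasFDerivAt) (differentiableAt_fderiv_of_eventually hΦ).hasFDerivAt]

lemma hessFst_vertical_eq_zero (hΦ : ∀ᶠ y in 𝓝 e, DifferentiableAt ℂ Φ y)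
    (hvert : ∀ᶠ y in 𝓝 e, (fderiv ℂ Φ y (0, 1)).1 = 0) (y : BundleSpace p q) :
    hessFst Φ e y (0, 1) = 0 := by
  have hderiv := ((differentiableAt_fderiv_of_eventually hΦ).hasFDerivAt.clm_apply
    (hasFDerivAt_const ((0, 1) : BundleSpace p q) e)).fst
  have hzero := hderiv.unique
    ((hasFDerivAt_const (0 : Fin p → Fin q → ℂ) e).congr_of_eventuallyEq hvert)
  simpa [hessFst_apply] using congrArg (fun T => T y) hzero

lemma IsLogMap.fderiv_vertical [Nontrivial (Fin p)] [Nontrivial (Fin q)] (h : IsLogMap Φ e₀)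
    (h0 : contactFactor Φ (e₀, star e₀.1) ≠ 0) :
    ∀ᶠ e in 𝓝 e₀, fderiv ℂ Φ e (0, 1) = (0, 1) := by
  have hfst := h.eventually_fst_fderiv_vertical h0
  have hsnd := (eventually_eq_zero_of_logCirc (K := fun x => (fderiv ℂ Φ x.1 (0, 1)).2 - 1) h.mem
    (h.eventually_isPolarized.mono fun x hx =>
      (hx.differentiableAt_fderiv_apply (differentiableAt_const _)).snd.sub_const _) (by
    filter_upwards [h.eventually_preservesSegreJets h0, hfst.eventually_nhds,
      h.diff.eventually_nhds] with e hjets hvert hΦ he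
    have hhess := hessFst_vertical_eq_zero hΦ hvert
    exact sub_eq_zero.2 ((hjets he).snd_vertical_eq_one
      (fun y => (hessFst_comm hΦ _ _).trans (hhess y)) hhess))).curry_nhds
  filter_upwards [hfst, hsnd] with e he he'
  exact Prod.ext he (sub_eq_zero.1 he'.self_of_nhds)

end Dichotomy

section FirstOrderEquations

variable {E G : Type*} [NormedAddCommGroup E] [NormedSpace ℂ E]
  [NormedAddCommGroup G] [NormedSpace ℂ G]

lemma eventually_eq_of_fderiv_eq_zero {f : E → G} {x₀ : E}
    (hd : ∀ᶠ x in 𝓝 x₀, DifferentiableAt ℂ f x) (h0 : ∀ᶠ x in 𝓝 x₀, fderiv ℂ f x = 0) :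
    ∀ᶠ x in 𝓝 x₀, f x = f x₀ := by
  obtain ⟨r, hr, hball⟩ := Metric.eventually_nhds_iff_ball.1 (hd.and h0)
  filter_upwards [Metric.ball_mem_nhds x₀ hr] with x hx
  exact Metric.isOpen_ball.is_const_of_fderiv_eq_zero (convex_ball x₀ r).isPreconnected
    (fun y hy => (hball y hy).1.differentiableWithinAt) (fun y hy => (hball y hy).2) hx
    (Metric.mem_ball_self hr)

lemma eventually_eq_add_smul_of_fderiv_vertical {f : E × ℂ → G} {e₀ : E × ℂ} {c : G}
    (hd : ∀ᶠ e in 𝓝 e₀, DifferentiableAt ℂ f e) (hc : ∀ᶠ e in 𝓝 e₀, fderiv ℂ f e (0, 1) = c) :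
    ∀ᶠ e in 𝓝 e₀, f e = f (e.1, e₀.2) + (e.2 - e₀.2) • c := by
  obtain ⟨r, hr, hball⟩ := Metric.eventually_nhds_iff_ball.1 (hd.and hc)
  filter_upwards [Metric.ball_mem_nhds e₀ hr] with e he
  rw [← ball_prod_same] at he
  have hderiv : ∀ u ∈ Metric.ball e₀.2 r,
      HasDerivAt (fun u : ℂ => f (e.1, u) - u • c) 0 u := by
    intro u hu
    obtain ⟨hdiff, hvert⟩ := hball (e.1, u) (ball_prod_same e₀.1 e₀.2 r ▸ ⟨he.1, hu⟩)
    have hline : HasDerivAt (fun u : ℂ => (e.1, u)) ((0 : E), (1 : ℂ)) u :=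
      (hasDerivAt_const u e.1).prodMk (hasDerivAt_id u)
    have hsub := (hdiff.hasFDerivAt.comp_hasDerivAt u hline).sub ((hasDerivAt_id u).smul_const c)
    rwa [hvert, one_smul, sub_self] at hsub
  have hconst : f e - e.2 • c = f (e.1, e₀.2) - e₀.2 • c :=
    Metric.isOpen_ball.is_const_of_deriv_eq_zero (convex_ball e₀.2 r).isPreconnected
      (fun u hu => (hderiv u hu).differentiableAt.differentiableWithinAt)
      (fun u hu => (hderiv u hu).deriv) he.2 (Metric.mem_ball_self hr)
  rw [sub_smul, ← add_sub_assoc, add_sub_right_comm, ← hconst, sub_add_cancel]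

end FirstOrderEquations

section LogarithmicFiber

variable {p q : ℕ} {e e₁ P : BundleSpace p q}

/-- The passage from the logarithmic fiber coordinate `u` to the fiber coordinate `ξ = exp u`. -/
def expFiber (e : BundleSpace p q) : BundleSpace p q :=
  (e.1, exp e.2)

/-- The inverse of `expFiber` near `expFiber e₁` that sends `expFiber e₁` back to `e₁`. -/
def logFiber (e₁ P : BundleSpace p q) : BundleSpace p q :=
  (P.1, log (P.2 / exp e₁.2) + e₁.2)

lemma differentiable_expFiber :
    Differentiable ℂ (expFiber : BundleSpace p q → BundleSpace p q) := by
  unfold expFiber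
  fun_prop

lemma expFiber_logFiber (hP : P.2 ≠ 0) : expFiber (logFiber e₁ P) = P := by
  refine Prod.ext rfl ?_
  simp only [expFiber, logFiber]
  rw [exp_add, exp_log (div_ne_zero hP (exp_ne_zero _)), div_mul_cancel₀ _ (exp_ne_zero _)]

lemma logFiber_expFiber_self : logFiber e₁ (expFiber e₁) = e₁ := by
  simp [logFiber, expFiber, exp_ne_zero]

lemma exists_expFiber_eq (hP : P.2 ≠ 0) : ∃ e, expFiber e = P :=
  ⟨logFiber 0 P, expFiber_logFiber hP⟩

lemma eventually_expFiber_logFiber :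
    ∀ᶠ P in 𝓝 (expFiber e₁), expFiber (logFiber e₁ P) = P :=
  (continuousAt_snd.eventually_ne (exp_ne_zero e₁.2)).mono fun _ => expFiber_logFiber

lemma eventually_differentiableAt_logFiber :
    ∀ᶠ P in 𝓝 (expFiber e₁), DifferentiableAt ℂ (logFiber e₁) P := by
  have hdiv : Differentiable ℂ fun P : BundleSpace p q => P.2 / exp e₁.2 :=
    differentiable_snd.mul_const (exp e₁.2)⁻¹
  have hslit : ∀ᶠ P : BundleSpace p q in 𝓝 (expFiber e₁), P.2 / exp e₁.2 ∈ slitPlane := by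
    refine hdiv.continuous.continuousAt.eventually (isOpen_slitPlane.mem_nhds ?_)
    simp only [expFiber, div_self (exp_ne_zero _)]
    exact one_mem_slitPlane
  filter_upwards [hslit] with P hP
  exact differentiableAt_fst.prodMk (((hdiv P).clog hP).add_const e₁.2)

lemma tendsto_logFiber : Tendsto (logFiber e₁) (𝓝 (expFiber e₁)) (𝓝 e₁) := by
  have hcont := eventually_differentiableAt_logFiber (e₁ := e₁).self_of_nhds.continuousAt.tendsto
  rwa [logFiber_expFiber_self] at hcont

lemma mem_logCirc_iff : e ∈ logCirc p q ↔ expFiber e ∈ circTypeI p q := by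
  refine and_congr_right fun he => ?_
  have hnorm : normSq (exp e.2) = Real.exp (2 * e.2.re) := by
    rw [normSq_eq_norm_sq, norm_exp, ← Real.exp_nat_mul, Nat.cast_ofNat]
  simp only [expFiber, hnorm]
  exact ⟨fun h => by rw [h, Real.exp_log (genNormI_pos he)], fun h => by rw [← h, Real.log_exp]⟩

lemma snd_ne_zero_of_mem_circTypeI (hP : P ∈ circTypeI p q) : P.2 ≠ 0 :=
  normSq_pos.1 (hP.2 ▸ genNormI_pos hP.1)

end LogarithmicFiber

section LocalForm

variable {p q : ℕ} {F Φ : BundleSpace p q → BundleSpace p q} {e₀ P₀ P₁ : BundleSpace p q}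
  {U : Set (BundleSpace p q)}

/-- Near `Z₁`, `f` and `φ` are holomorphic and `f` is a map into the type I domain multiplying the
generic norm by `|φ|²`. -/
structure IsNormGerm (f : (Fin p → Fin q → ℂ) → Fin p → Fin q → ℂ)
    (φ : (Fin p → Fin q → ℂ) → ℂ) (Z₁ : Fin p → Fin q → ℂ) : Prop where
  diff : ∀ᶠ Z in 𝓝 Z₁, DifferentiableAt ℂ f Z
  diff_factor : ∀ᶠ Z in 𝓝 Z₁, DifferentiableAt ℂ φ Z
  maps : ∀ᶠ Z in 𝓝 Z₁, f Z ∈ typeIDomain p q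
  norm_eq : ∀ᶠ Z in 𝓝 Z₁, genNormI (f Z) = normSq (φ Z) * genNormI Z

/-- The map over `f` that scales the fiber coordinate by `φ`: the bundle form of the theorem. -/
def bundleMap (f : (Fin p → Fin q → ℂ) → Fin p → Fin q → ℂ) (φ : (Fin p → Fin q → ℂ) → ℂ)
    (P : BundleSpace p q) : BundleSpace p q :=
  (f P.1, P.2 * φ P.1)

lemma exists_isLogMap (hP₀ : P₀ ∈ circTypeI p q) (hd : ∀ᶠ P in 𝓝 P₀, DifferentiableAt ℂ F P)
    (hm : ∀ᶠ P in 𝓝 P₀, P ∈ circTypeI p q → F P ∈ circTypeI p q) :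
    ∃ Φ e₀, IsLogMap Φ e₀ ∧ expFiber e₀ = P₀ ∧
      ∀ᶠ e in 𝓝 e₀, F (expFiber e) = expFiber (Φ e) := by
  obtain ⟨e₀, rfl⟩ := exists_expFiber_eq (snd_ne_zero_of_mem_circTypeI hP₀)
  obtain ⟨e₁, he₁⟩ := exists_expFiber_eq (snd_ne_zero_of_mem_circTypeI (hm.self_of_nhds hP₀))
  have hexp : Tendsto expFiber (𝓝 e₀) (𝓝 (expFiber e₀)) :=
    differentiable_expFiber.continuous.continuousAt
  have hF : Tendsto (fun e => F (expFiber e)) (𝓝 e₀) (𝓝 (expFiber e₁)) := by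
    rw [he₁]
    exact hd.self_of_nhds.continuousAt.tendsto.comp hexp
  have heq : ∀ᶠ e in 𝓝 e₀, F (expFiber e) = expFiber (logFiber e₁ (F (expFiber e))) :=
    (hF.eventually eventually_expFiber_logFiber).mono fun _ => Eq.symm
  refine ⟨fun e => logFiber e₁ (F (expFiber e)), e₀, ⟨mem_logCirc_iff.2 hP₀, ?_, ?_⟩, rfl, heq⟩
  · filter_upwards [hexp.eventually hd, hF.eventually eventually_differentiableAt_logFiber]
      with e hFe hlog
    exact hlog.comp e (hFe.comp e (differentiable_expFiber e))
  · filter_upwards [hexp.eventually hm, heq] with e hme heqe he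
    rw [mem_logCirc_iff, ← heqe]
    exact hme (mem_logCirc_iff.1 he)

lemma frequently_contactFactor_ne_zero [Nontrivial (Fin p)] [Nontrivial (Fin q)]
    (hU : IsOpen U) (hUc : IsPreconnected U)
    (hF : DifferentiableOn ℂ F U) (hFnc : ¬ ∃ c, Set.EqOn F (fun _ => c) U)
    (hΦ : IsLogMap Φ e₀) (he₀ : expFiber e₀ ∈ U)
    (heq : ∀ᶠ e in 𝓝 e₀, F (expFiber e) = expFiber (Φ e)) :
    ∃ᶠ e in 𝓝 e₀, e ∈ logCirc p q ∧ contactFactor Φ (e, star e.1) ≠ 0 := by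
  by_contra hfreq
  have h0 : ∀ᶠ e in 𝓝 e₀, e ∈ logCirc p q → contactFactor Φ (e, star e.1) = 0 := by
    simpa only [not_frequently, not_and_not_right] using hfreq
  have hconst := eventually_eq_of_fderiv_eq_zero hΦ.diff (hΦ.fderiv_eq_zero h0)
  refine hFnc ⟨expFiber (Φ e₀), eqOn_const_of_eventually hU hUc hF he₀ ?_⟩
  filter_upwards [tendsto_logFiber.eventually (heq.and hconst), eventually_expFiber_logFiber]
    with P ⟨hFP, hΦP⟩ hP
  rwa [hP, hΦP] at hFP

lemma exists_bundle_form_of_fderiv_vertical (hd : ∀ᶠ e in 𝓝 e₀, DifferentiableAt ℂ Φ e)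
    (hvert : ∀ᶠ e in 𝓝 e₀, fderiv ℂ Φ e (0, 1) = (0, 1))
    (heq : ∀ᶠ e in 𝓝 e₀, F (expFiber e) = expFiber (Φ e)) :
    ∃ (f : (Fin p → Fin q → ℂ) → Fin p → Fin q → ℂ) (φ : (Fin p → Fin q → ℂ) → ℂ),
      (∀ᶠ Z in 𝓝 e₀.1, DifferentiableAt ℂ f Z) ∧ (∀ᶠ Z in 𝓝 e₀.1, DifferentiableAt ℂ φ Z) ∧
      F =ᶠ[𝓝 (expFiber e₀)] bundleMap f φ := by
  have hslice : ∀ᶠ Z in 𝓝 e₀.1,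
      DifferentiableAt ℂ (fun Z : Fin p → Fin q → ℂ => Φ (Z, e₀.2)) Z :=
    ((Continuous.prodMk_left e₀.2).continuousAt.eventually hd).mono fun Z hZ =>
      hZ.comp Z (differentiableAt_id.prodMk (differentiableAt_const _))
  refine ⟨fun Z => (Φ (Z, e₀.2)).1, fun Z => exp ((Φ (Z, e₀.2)).2 - e₀.2),
    hslice.mono fun Z hZ => hZ.fst, hslice.mono fun Z hZ => (hZ.snd.sub_const _).cexp, ?_⟩
  have hadd := eventually_eq_add_smul_of_fderiv_vertical hd hvert
  filter_upwards [tendsto_logFiber.eventually (heq.and hadd), eventually_expFiber_logFiber]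
    with P ⟨hFP, hΦP⟩ hP
  rw [hP, hΦP] at hFP
  have hsnd : exp (logFiber e₀ P).2 = P.2 := congrArg Prod.snd hP
  rw [hFP]
  refine Prod.ext ?_ ?_
  · simp [bundleMap, expFiber, logFiber]
  · rw [bundleMap, ← hsnd, ← exp_add]
    simp only [expFiber, logFiber, Prod.snd_add, Prod.smul_mk, smul_eq_mul, mul_one]
    congr 1
    ring

lemma continuous_genNormI : Continuous (genNormI : (Fin p → Fin q → ℂ) → ℝ) :=
  continuous_re.comp (Continuous.matrix_det (continuous_const.sub
    (Continuous.matrix_mul continuous_id (Continuous.matrix_conjTranspose continuous_id))))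

lemma eventually_genNormI_eq_of_bundle_form {f : (Fin p → Fin q → ℂ) → Fin p → Fin q → ℂ}
    {φ : (Fin p → Fin q → ℂ) → ℂ} (hU : IsOpen U) (hP₁ : P₁ ∈ U ∩ circTypeI p q)
    (hFmap : Set.MapsTo F (U ∩ circTypeI p q) (circTypeI p q))
    (hform : F =ᶠ[𝓝 P₁] bundleMap f φ) :
    ∀ᶠ Z in 𝓝 P₁.1, f Z ∈ typeIDomain p q ∧ genNormI (f Z) = normSq (φ Z) * genNormI Z := by
  have hN := genNormI_pos hP₁.2.1
  -- a local section of the circle bundle through `P₁`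
  let s : (Fin p → Fin q → ℂ) → BundleSpace p q :=
    fun Z => (Z, (√(genNormI Z / genNormI P₁.1) : ℂ) * P₁.2)
  have hs : Tendsto s (𝓝 P₁.1) (𝓝 P₁) := by
    have hcont : Continuous s := by
      have := continuous_genNormI (p := p) (q := q)
      fun_prop
    have hbase : s P₁.1 = P₁ := by simp [s, div_self hN.ne']
    exact hcont.tendsto' _ _ hbase
  filter_upwards [hs.eventually (hform.and (hU.mem_nhds hP₁.1)),
    isOpen_typeIDomain.mem_nhds hP₁.2.1] with Z ⟨hFs, hsU⟩ hZ
  have hnorm : normSq (s Z).2 = genNormI Z := by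
    have hdiv : 0 ≤ genNormI Z / genNormI P₁.1 := (div_pos (genNormI_pos hZ) hN).le
    simp only [s, map_mul, normSq_ofReal, Real.mul_self_sqrt hdiv, hP₁.2.2]
    exact div_mul_cancel₀ _ hN.ne'
  obtain ⟨hdom, hnorm'⟩ := hFs ▸ hFmap ⟨hsU, hZ, hnorm⟩
  refine ⟨hdom, ?_⟩
  rw [mul_comm, ← hnorm, ← map_mul]
  exact hnorm'.symm

theorem exists_bundle_form [Nontrivial (Fin p)] [Nontrivial (Fin q)]
    (hU : IsOpen U) (hUc : IsPreconnected U) (hUS : (U ∩ circTypeI p q).Nonempty)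
    (hF : DifferentiableOn ℂ F U) (hFnc : ¬ ∃ c, Set.EqOn F (fun _ => c) U)
    (hFmap : Set.MapsTo F (U ∩ circTypeI p q) (circTypeI p q)) :
    ∃ (P₁ : BundleSpace p q) (f : (Fin p → Fin q → ℂ) → Fin p → Fin q → ℂ)
      (φ : (Fin p → Fin q → ℂ) → ℂ), P₁ ∈ U ∩ circTypeI p q ∧
      IsNormGerm f φ P₁.1 ∧ F =ᶠ[𝓝 P₁] bundleMap f φ := by
  obtain ⟨P₀, hP₀U, hP₀⟩ := hUS
  have hmemU : ∀ᶠ P in 𝓝 P₀, P ∈ U := hU.mem_nhds hP₀U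
  obtain ⟨Φ, e₀, hΦ, rfl, heq⟩ := exists_isLogMap hP₀
    (hmemU.mono fun P hP => hF.differentiableAt (hU.mem_nhds hP))
    (hmemU.mono fun P hP hP' => hFmap ⟨hP, hP'⟩)
  obtain ⟨e₁, ⟨hmem, hne⟩, hΦ₁, heq₁, hU₁⟩ :=
    ((frequently_contactFactor_ne_zero hU hUc hF hFnc hΦ hP₀U heq).and_eventually
      (hΦ.eventually.and (heq.eventually_nhds.and
        (differentiable_expFiber.continuous.continuousAt.eventually hmemU)))).exists
  replace hΦ₁ := hΦ₁ hmem
  obtain ⟨f, φ, hf, hφ, hform⟩ :=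
    exists_bundle_form_of_fderiv_vertical hΦ₁.diff (hΦ₁.fderiv_vertical hne) heq₁
  have hP₁ : expFiber e₁ ∈ U ∩ circTypeI p q := ⟨hU₁, mem_logCirc_iff.1 hmem⟩
  have hnorm := eventually_genNormI_eq_of_bundle_form hU hP₁ hFmap hform
  exact ⟨expFiber e₁, f, φ, hP₁,
    ⟨hf, hφ, hnorm.mono fun Z hZ => hZ.1, hnorm.mono fun Z hZ => hZ.2⟩, hform⟩

end LocalForm

section Automorphisms

variable {p q : ℕ}

/-- `ψ` is an automorphism of the type I domain with inverse `ψ'`, which multiplies the generic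
norm by `|φ|²` with `φ` holomorphic and zero free. -/
structure IsNormAut (ψ ψ' : (Fin p → Fin q → ℂ) → Fin p → Fin q → ℂ)
    (φ : (Fin p → Fin q → ℂ) → ℂ) : Prop where
  diff : DifferentiableOn ℂ ψ (typeIDomain p q)
  maps : Set.MapsTo ψ (typeIDomain p q) (typeIDomain p q)
  diff_inv : DifferentiableOn ℂ ψ' (typeIDomain p q)
  maps_inv : Set.MapsTo ψ' (typeIDomain p q) (typeIDomain p q)
  left_inv : Set.LeftInvOn ψ' ψ (typeIDomain p q)
  right_inv : Set.RightInvOn ψ' ψ (typeIDomain p q)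
  diff_factor : DifferentiableOn ℂ φ (typeIDomain p q)
  factor_ne_zero : ∀ Z ∈ typeIDomain p q, φ Z ≠ 0
  norm_eq : ∀ Z ∈ typeIDomain p q, genNormI (ψ Z) = normSq (φ Z) * genNormI Z

namespace IsNormAut

variable {ψ ψ' ψ₁ ψ₁' ψ₂ ψ₂' : (Fin p → Fin q → ℂ) → Fin p → Fin q → ℂ}
  {φ φ₁ φ₂ : (Fin p → Fin q → ℂ) → ℂ} {Z : Fin p → Fin q → ℂ}

lemma comp (h₁ : IsNormAut ψ₁ ψ₁' φ₁) (h₂ : IsNormAut ψ₂ ψ₂' φ₂) :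
    IsNormAut (ψ₁ ∘ ψ₂) (ψ₂' ∘ ψ₁') (fun Z => φ₁ (ψ₂ Z) * φ₂ Z) where
  diff := h₁.diff.comp h₂.diff h₂.maps
  maps := h₁.maps.comp h₂.maps
  diff_inv := h₂.diff_inv.comp h₁.diff_inv h₁.maps_inv
  maps_inv := h₂.maps_inv.comp h₁.maps_inv
  left_inv := h₂.left_inv.comp h₁.left_inv h₂.maps
  right_inv := h₂.right_inv.comp h₁.right_inv h₁.maps_inv
  diff_factor := (h₁.diff_factor.comp h₂.diff h₂.maps).mul h₂.diff_factor
  factor_ne_zero Z hZ := mul_ne_zero (h₁.factor_ne_zero _ (h₂.maps hZ)) (h₂.factor_ne_zero Z hZ)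
  norm_eq Z hZ := by
    rw [Function.comp_apply, h₁.norm_eq _ (h₂.maps hZ), h₂.norm_eq Z hZ, map_mul, mul_assoc]

lemma symm (h : IsNormAut ψ ψ' φ) : IsNormAut ψ' ψ (fun Z => (φ (ψ' Z))⁻¹) where
  diff := h.diff_inv
  maps := h.maps_inv
  diff_inv := h.diff
  maps_inv := h.maps
  left_inv := h.right_inv
  right_inv := h.left_inv
  diff_factor := (h.diff_factor.comp h.diff_inv h.maps_inv).inv
    fun Z hZ => h.factor_ne_zero _ (h.maps_inv hZ)
  factor_ne_zero Z hZ := inv_ne_zero (h.factor_ne_zero _ (h.maps_inv hZ))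
  norm_eq Z hZ := by
    have hnorm := h.norm_eq _ (h.maps_inv hZ)
    rw [h.right_inv hZ] at hnorm
    rw [hnorm, map_inv₀, inv_mul_cancel_left₀]
    exact (map_ne_zero normSq).2 (h.factor_ne_zero _ (h.maps_inv hZ))

lemma biholo (h : IsNormAut ψ ψ' φ) : Biholo ψ (typeIDomain p q) (typeIDomain p q) :=
  ⟨h.diff, h.maps, ψ', h.diff_inv, h.maps_inv, h.left_inv, h.right_inv⟩

lemma differentiableOn_bundleMap (h : IsNormAut ψ ψ' φ) :
    DifferentiableOn ℂ (bundleMap ψ φ) (discTypeI p q) := by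
  have hmaps : Set.MapsTo Prod.fst (discTypeI p q) (typeIDomain p q) := fun P hP => hP.1
  have hfst : DifferentiableOn ℂ (Prod.fst : BundleSpace p q → _) (discTypeI p q) :=
    differentiableOn_fst
  exact (h.diff.comp hfst hmaps).prodMk (differentiableOn_snd.mul (h.diff_factor.comp hfst hmaps))

lemma mapsTo_bundleMap (h : IsNormAut ψ ψ' φ) :
    Set.MapsTo (bundleMap ψ φ) (discTypeI p q) (discTypeI p q) := by
  rintro P ⟨hP, hlt⟩
  refine ⟨h.maps hP, ?_⟩
  simp only [bundleMap, map_mul, h.norm_eq _ hP]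
  rw [mul_comm]
  exact mul_lt_mul_of_pos_left hlt (normSq_pos.2 (h.factor_ne_zero _ hP))

lemma biholo_bundleMap (h : IsNormAut ψ ψ' φ) :
    Biholo (bundleMap ψ φ) (discTypeI p q) (discTypeI p q) := by
  refine ⟨h.differentiableOn_bundleMap, h.mapsTo_bundleMap, _, h.symm.differentiableOn_bundleMap,
    h.symm.mapsTo_bundleMap, fun P hP => ?_, fun P hP => ?_⟩
  · refine Prod.ext (h.left_inv hP.1) ?_
    simp only [bundleMap, h.left_inv hP.1]
    exact mul_inv_cancel_right₀ (h.factor_ne_zero _ hP.1) _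
  · exact Prod.ext (h.right_inv hP.1)
      (inv_mul_cancel_right₀ (h.factor_ne_zero _ (h.maps_inv hP.1)) _)

lemma isNormGerm (h : IsNormAut ψ ψ' φ) (hZ : Z ∈ typeIDomain p q) : IsNormGerm ψ φ Z where
  diff := (isOpen_typeIDomain.eventually_mem hZ).mono fun _ hY =>
    h.diff.differentiableAt (isOpen_typeIDomain.mem_nhds hY)
  diff_factor := (isOpen_typeIDomain.eventually_mem hZ).mono fun _ hY =>
    h.diff_factor.differentiableAt (isOpen_typeIDomain.mem_nhds hY)
  maps := (isOpen_typeIDomain.eventually_mem hZ).mono fun _ hY => h.maps hY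
  norm_eq := (isOpen_typeIDomain.eventually_mem hZ).mono h.norm_eq

end IsNormAut

namespace IsNormGerm

variable {f g : (Fin p → Fin q → ℂ) → Fin p → Fin q → ℂ} {φ γ : (Fin p → Fin q → ℂ) → ℂ}
  {Z₁ : Fin p → Fin q → ℂ}

lemma tendsto (hf : IsNormGerm f φ Z₁) : Tendsto f (𝓝 Z₁) (𝓝 (f Z₁)) :=
  hf.diff.self_of_nhds.continuousAt

lemma comp (hg : IsNormGerm g γ (f Z₁)) (hf : IsNormGerm f φ Z₁) :
    IsNormGerm (g ∘ f) (fun Z => γ (f Z) * φ Z) Z₁ where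
  diff := by
    filter_upwards [hf.tendsto.eventually hg.diff, hf.diff] with Z hgZ hfZ
    exact hgZ.comp Z hfZ
  diff_factor := by
    filter_upwards [hf.tendsto.eventually hg.diff_factor, hf.diff, hf.diff_factor]
      with Z hγZ hfZ hφZ
    exact (hγZ.comp Z hfZ).mul hφZ
  maps := hf.tendsto.eventually hg.maps
  norm_eq := by
    filter_upwards [hf.tendsto.eventually hg.norm_eq, hf.norm_eq] with Z hgZ hfZ
    rw [Function.comp_apply, hgZ, hfZ, map_mul, mul_assoc]

end IsNormGerm

/-- The block matrix with blocks `a, b, c, d` preserves the Hermitian form of signature `(p, q)`. -/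
structure IsPseudoUnitary (a : Matrix (Fin p) (Fin p) ℂ) (b : Matrix (Fin p) (Fin q) ℂ)
    (c : Matrix (Fin q) (Fin p) ℂ) (d : Matrix (Fin q) (Fin q) ℂ) : Prop where
  left : aᴴ * a - cᴴ * c = 1
  mid : aᴴ * b = cᴴ * d
  right : dᴴ * d - bᴴ * b = 1

/-- The linear fractional action of a block matrix on `p × q` matrices. -/
def linFrac (a : Matrix (Fin p) (Fin p) ℂ) (b : Matrix (Fin p) (Fin q) ℂ)
    (c : Matrix (Fin q) (Fin p) ℂ) (d : Matrix (Fin q) (Fin q) ℂ) (Z : Fin p → Fin q → ℂ) :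
    Fin p → Fin q → ℂ :=
  of.symm ((a * of Z + b) * (c * of Z + d)⁻¹)

lemma mem_typeIDomain_iff {Z : Fin p → Fin q → ℂ} :
    Z ∈ typeIDomain p q ↔ (1 - (of Z)ᴴ * of Z).PosDef :=
  posDef_one_sub_mul_conjTranspose_iff

lemma genNormI_eq_re_det_conjTranspose_mul (Z : Fin p → Fin q → ℂ) :
    genNormI Z = ((1 - (of Z)ᴴ * of Z).det).re := by
  rw [genNormI, det_one_sub_mul_comm]

lemma differentiableAt_mul_of_add_apply {m : Type*} (a : Matrix m (Fin p) ℂ)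
    (b : Matrix m (Fin q) ℂ) (Z : Fin p → Fin q → ℂ) (i : m) (j : Fin q) :
    DifferentiableAt ℂ (fun Y : Fin p → Fin q → ℂ => (a * of Y + b) i j) Z := by
  simp only [Matrix.add_apply, Matrix.mul_apply, of_apply]
  fun_prop

namespace IsPseudoUnitary

variable {a : Matrix (Fin p) (Fin p) ℂ} {b : Matrix (Fin p) (Fin q) ℂ}
  {c : Matrix (Fin q) (Fin p) ℂ} {d : Matrix (Fin q) (Fin q) ℂ} {Z : Fin p → Fin q → ℂ}

lemma conjTranspose_mid (h : IsPseudoUnitary a b c d) : bᴴ * a = dᴴ * c := by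
  simpa using congrArg conjTranspose h.mid

-- A left inverse of a square matrix, here of the block matrix, is also a right inverse.
lemma symm (h : IsPseudoUnitary a b c d) : IsPseudoUnitary aᴴ (-cᴴ) (-bᴴ) dᴴ := by
  have hinv : fromBlocks aᴴ (-cᴴ) (-bᴴ) dᴴ * fromBlocks a b c d = 1 := by
    rw [fromBlocks_multiply, ← fromBlocks_one]
    congr 1
    · rw [← h.left]; simp [sub_eq_add_neg]
    · rw [h.mid]; simp
    · rw [Matrix.neg_mul, h.conjTranspose_mid]; simp
    · rw [← h.right]; simp [sub_eq_neg_add]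
  rw [mul_eq_one_comm, fromBlocks_multiply, ← fromBlocks_one, fromBlocks_inj] at hinv
  obtain ⟨hleft, hmid, -, hright⟩ := hinv
  refine ⟨?_, ?_, ?_⟩
  · simpa [sub_eq_add_neg] using hleft
  · rw [Matrix.mul_neg, neg_add_eq_zero] at hmid
    simpa using hmid
  · simpa [sub_eq_neg_add] using hright

lemma conjTranspose_mul_sub (h : IsPseudoUnitary a b c d) (Z : Matrix (Fin p) (Fin q) ℂ) :
    aᴴ * (a * Z + b) - cᴴ * (c * Z + d) = Z := by
  calc aᴴ * (a * Z + b) - cᴴ * (c * Z + d)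
      = (aᴴ * a - cᴴ * c) * Z + (aᴴ * b - cᴴ * d) := by
        simp only [Matrix.mul_add, Matrix.sub_mul, Matrix.mul_assoc]
        abel
    _ = Z := by rw [h.left, h.mid, Matrix.one_mul, sub_self, add_zero]

lemma conjTranspose_mul_sub' (h : IsPseudoUnitary a b c d) (Z : Matrix (Fin p) (Fin q) ℂ) :
    dᴴ * (c * Z + d) - bᴴ * (a * Z + b) = 1 := by
  calc dᴴ * (c * Z + d) - bᴴ * (a * Z + b)
      = (dᴴ * c - bᴴ * a) * Z + (dᴴ * d - bᴴ * b) := by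
        simp only [Matrix.mul_add, Matrix.sub_mul, Matrix.mul_assoc]
        abel
    _ = 1 := by rw [h.right, h.conjTranspose_mid, sub_self, Matrix.zero_mul, zero_add]

lemma conjTranspose_mul_self_sub (h : IsPseudoUnitary a b c d) (Z : Matrix (Fin p) (Fin q) ℂ) :
    (c * Z + d)ᴴ * (c * Z + d) - (a * Z + b)ᴴ * (a * Z + b) = 1 - Zᴴ * Z := by
  calc (c * Z + d)ᴴ * (c * Z + d) - (a * Z + b)ᴴ * (a * Z + b)
      = (dᴴ * (c * Z + d) - bᴴ * (a * Z + b)) - Zᴴ * (aᴴ * (a * Z + b) - cᴴ * (c * Z + d)) := by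
        simp only [conjTranspose_add, conjTranspose_mul, Matrix.add_mul, Matrix.mul_sub,
          Matrix.mul_assoc]
        abel
    _ = 1 - Zᴴ * Z := by rw [h.conjTranspose_mul_sub, h.conjTranspose_mul_sub']

lemma isUnit_det (h : IsPseudoUnitary a b c d) (hZ : Z ∈ typeIDomain p q) :
    IsUnit (c * of Z + d).det := by
  have hpos : ((c * of Z + d)ᴴ * (c * of Z + d)).PosDef := by
    rw [sub_eq_iff_eq_add.1 (h.conjTranspose_mul_self_sub (of Z))]
    exact (mem_typeIDomain_iff.1 hZ).add_posSemidef (posSemidef_conjTranspose_mul_self _)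
  have hdet := hpos.det_pos.ne'
  rw [det_mul] at hdet
  exact isUnit_iff_ne_zero.2 (right_ne_zero_of_mul hdet)

lemma one_sub_linFrac (h : IsPseudoUnitary a b c d) (hZ : Z ∈ typeIDomain p q) :
    1 - (of (linFrac a b c d Z))ᴴ * of (linFrac a b c d Z) =
      ((c * of Z + d)⁻¹)ᴴ * (1 - (of Z)ᴴ * of Z) * (c * of Z + d)⁻¹ := by
  have hinv := mul_nonsing_inv _ (h.isUnit_det hZ)
  have hinv' : ((c * of Z + d)⁻¹)ᴴ * (c * of Z + d)ᴴ = 1 := by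
    rw [← conjTranspose_mul, hinv, conjTranspose_one]
  rw [linFrac, Equiv.apply_symm_apply, ← h.conjTranspose_mul_self_sub (of Z), Matrix.mul_sub,
    Matrix.sub_mul, ← Matrix.mul_assoc _ (c * of Z + d)ᴴ, hinv', Matrix.one_mul, hinv,
    conjTranspose_mul]
  simp only [Matrix.mul_assoc]

lemma mapsTo_linFrac (h : IsPseudoUnitary a b c d) :
    Set.MapsTo (linFrac a b c d) (typeIDomain p q) (typeIDomain p q) := by
  intro Z hZ
  rw [mem_typeIDomain_iff, h.one_sub_linFrac hZ]
  have hu : IsUnit (c * of Z + d)⁻¹ :=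
    (isUnit_iff_isUnit_det _).2 (isUnit_nonsing_inv_det _ (h.isUnit_det hZ))
  exact (IsUnit.posDef_star_left_conjugate_iff hu).2 (mem_typeIDomain_iff.1 hZ)

lemma genNormI_linFrac (h : IsPseudoUnitary a b c d) (hZ : Z ∈ typeIDomain p q) :
    genNormI (linFrac a b c d Z) = normSq (c * of Z + d).det⁻¹ * genNormI Z := by
  rw [genNormI_eq_re_det_conjTranspose_mul, h.one_sub_linFrac hZ, det_mul, det_mul,
    det_conjTranspose, mul_right_comm, det_nonsing_inv, Ring.inverse_eq_inv', star_def,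
    ← normSq_eq_conj_mul_self, re_ofReal_mul, ← genNormI_eq_re_det_conjTranspose_mul]

lemma linFrac_linFrac (h : IsPseudoUnitary a b c d) (hZ : Z ∈ typeIDomain p q) :
    linFrac aᴴ (-cᴴ) (-bᴴ) dᴴ (linFrac a b c d Z) = Z := by
  have hnum := h.conjTranspose_mul_sub (of Z)
  have hden := h.conjTranspose_mul_sub' (of Z)
  have hu := h.isUnit_det hZ
  rw [linFrac, linFrac, Equiv.apply_symm_apply]
  set Y := c * of Z + d
  set X := a * of Z + b
  have hnum' : aᴴ * (X * Y⁻¹) + -cᴴ = of Z * Y⁻¹ := by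
    rw [← hnum, Matrix.sub_mul, Matrix.mul_assoc cᴴ, mul_nonsing_inv _ hu, Matrix.mul_assoc,
      Matrix.mul_one, sub_eq_add_neg]
  have hden' : -bᴴ * (X * Y⁻¹) + dᴴ = Y⁻¹ := by
    calc -bᴴ * (X * Y⁻¹) + dᴴ = (dᴴ * Y - bᴴ * X) * Y⁻¹ := by
          rw [Matrix.sub_mul, Matrix.mul_assoc dᴴ, mul_nonsing_inv _ hu, Matrix.mul_assoc bᴴ,
            Matrix.mul_one, Matrix.neg_mul, neg_add_eq_sub]
      _ = Y⁻¹ := by rw [hden, Matrix.one_mul]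
  rw [hnum', hden', Matrix.mul_assoc, mul_nonsing_inv _ (isUnit_nonsing_inv_det _ hu),
    Matrix.mul_one, Equiv.symm_apply_apply]

lemma differentiableAt_linFrac (h : IsPseudoUnitary a b c d) (hZ : Z ∈ typeIDomain p q) :
    DifferentiableAt ℂ (linFrac a b c d) Z := by
  refine differentiableAt_pi.2 fun i => differentiableAt_pi.2 fun j => ?_
  simp only [linFrac, of_symm_apply, Matrix.mul_apply]
  exact DifferentiableAt.fun_sum fun k _ => (differentiableAt_mul_of_add_apply a b Z i k).fun_mul
    (differentiableAt_inv_apply (A := fun Y => c * of Y + d)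
      (differentiableAt_mul_of_add_apply c d Z) (h.isUnit_det hZ).ne_zero k j)

lemma isNormAut (h : IsPseudoUnitary a b c d) :
    IsNormAut (linFrac a b c d) (linFrac aᴴ (-cᴴ) (-bᴴ) dᴴ) (fun Z => (c * of Z + d).det⁻¹) where
  diff Z hZ := (h.differentiableAt_linFrac hZ).differentiableWithinAt
  maps := h.mapsTo_linFrac
  diff_inv Z hZ := (h.symm.differentiableAt_linFrac hZ).differentiableWithinAt
  maps_inv := h.symm.mapsTo_linFrac
  left_inv Z hZ := h.linFrac_linFrac hZ
  right_inv Z hZ := by simpa using h.symm.linFrac_linFrac hZ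
  diff_factor Z hZ := ((differentiableAt_det (A := fun Y => c * of Y + d)
    (differentiableAt_mul_of_add_apply c d Z)).inv
      (h.isUnit_det hZ).ne_zero).differentiableWithinAt
  factor_ne_zero Z hZ := inv_ne_zero (h.isUnit_det hZ).ne_zero
  norm_eq Z hZ := h.genNormI_linFrac hZ

end IsPseudoUnitary

lemma exists_isNormAut_apply_eq_zero {A : Fin p → Fin q → ℂ} (hA : A ∈ typeIDomain p q) :
    ∃ (ψ ψ' : (Fin p → Fin q → ℂ) → Fin p → Fin q → ℂ) (φ : (Fin p → Fin q → ℂ) → ℂ),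
      IsNormAut ψ ψ' φ ∧ ψ A = 0 := by
  obtain ⟨a, ha⟩ := exists_mul_mul_conjTranspose_eq_one hA
  obtain ⟨d, hd⟩ := exists_mul_mul_conjTranspose_eq_one (mem_typeIDomain_iff.1 hA)
  have h : IsPseudoUnitary aᴴ (-(-(d * (of A)ᴴ))ᴴ) (-(-(a * of A))ᴴ) dᴴ := by
    refine ⟨?_, ?_, ?_⟩
    · rw [← ha]
      simp [Matrix.mul_sub, Matrix.sub_mul, Matrix.mul_assoc]
    · simp [Matrix.mul_assoc]
    · rw [← hd]
      simp [Matrix.mul_sub, Matrix.sub_mul, Matrix.mul_assoc]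
  refine ⟨_, _, _, h.symm.isNormAut, ?_⟩
  simp [linFrac]

end Automorphisms

section Polarization

/-- The conjugate map of `f`; it is holomorphic when `f` is. -/
def conjMap {E F : Type*} [Star E] [Star F] (f : E → F) (x : E) : F := star (f (star x))

lemma eventually_and_star {E : Type*} [TopologicalSpace E] [InvolutiveStar E] [ContinuousStar E]
    {P : E → Prop} {z₀ : E} (h : ∀ᶠ z in 𝓝 z₀, P z) :
    ∀ᶠ x in 𝓝 (z₀, star z₀), P x.1 ∧ P (star x.2) := by
  have hstar : Tendsto (fun x : E × E => star x.2) (𝓝 (z₀, star z₀)) (𝓝 z₀) :=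
    (continuous_star.comp continuous_snd).tendsto' _ _ (star_star z₀)
  exact (continuousAt_fst.eventually h).and (hstar.eventually h)

variable {E F : Type*} [NormedAddCommGroup E] [NormedSpace ℂ E] [StarAddMonoid E]
  [NormedStarGroup E] [StarModule ℂ E] [NormedAddCommGroup F] [NormedSpace ℂ F]

lemma differentiableAt_conjMap [StarAddMonoid F] [NormedStarGroup F] [StarModule ℂ F] {f : E → F}
    {x : E} (h : DifferentiableAt ℂ f (star x)) : DifferentiableAt ℂ (conjMap f) x := by
  have hstar := h.star_star
  rwa [star_star] at hstar

lemma eventually_eq_zero_of_antidiagonal [CompleteSpace F] {z₀ : E} {K : E × E → F}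
    (hK : ∀ᶠ x in 𝓝 (z₀, star z₀), DifferentiableAt ℂ K x)
    (h0 : ∀ᶠ z in 𝓝 z₀, K (z, star z) = 0) : ∀ᶠ x in 𝓝 (z₀, star z₀), K x = 0 := by
  have hfst : Tendsto Prod.fst (𝓝 ((z₀, star z₀), (0 : ℂ))) (𝓝 (z₀, star z₀)) := tendsto_id.fst_nhds
  have hext : ∀ᶠ x in 𝓝 ((z₀, star z₀), (0 : ℂ)), K x.1 = 0 := by
    refine eventually_eq_zero_of_fixed (σ := swapConj) (fun x => by simp [swapConj])
      (by simp [swapConj]) ((hfst.eventually hK).mono fun x hx => hx.comp x differentiableAt_fst) ?_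
    filter_upwards [hfst.fst_nhds.eventually h0] with x hx hfix
    rwa [show star x.1.1 = x.1.2 from congrArg (fun y => y.1.2) hfix] at hx
  exact (Continuous.prodMk_left (0 : ℂ)).continuousAt.eventually hext

end Polarization

section OriginRigidity

variable {m n : Type*} [Fintype m] [Fintype n]

/-- The linear form `v ↦ tr (v wᴴ)`. -/
def traceForm (w : m → n → ℂ) : (m → n → ℂ) →L[ℂ] ℂ :=
  LinearMap.toContinuousLinearMap (trDual (of (star w))ᵀ)

lemma traceForm_apply (w v : m → n → ℂ) : traceForm w v = trPair v (of (star w))ᵀ := rfl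

lemma eq_zero_of_traceForm_eq_zero {v : m → n → ℂ} (h : ∀ w, traceForm w v = 0) : v = 0 := by
  refine eq_zero_of_trPair_eq_zero fun S => ?_
  have hS := h (star (of.symm Sᵀ))
  rwa [traceForm_apply, star_star] at hS

lemma traceForm_apply_eq_trPair_star (w v : m → n → ℂ) :
    traceForm w v = trPair (star w) (of v)ᵀ := by
  simp [traceForm_apply, trPair_eq_sum, mul_comm]

variable [DecidableEq m]

lemma polNorm_zero_left (W : m → n → ℂ) : polNorm 0 W = 1 := by
  simp [polNorm]

lemma polNorm_zero_right (Z : m → n → ℂ) : polNorm Z 0 = 1 := by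
  simp [polNorm]

lemma logSlope_zero_left (W : m → n → ℂ) : logSlope 0 W = (of W)ᵀ := by
  simp [logSlope]

/-- `f` preserves the polarized generic norm near the origin, which it fixes. -/
structure PreservesPolNorm (f : (m → n → ℂ) → m → n → ℂ) : Prop where
  map_zero : f 0 = 0
  diff : DifferentiableAt ℂ f 0
  polNorm_eq : ∀ᶠ x in 𝓝 ((0 : m → n → ℂ), (0 : m → n → ℂ)),
    polNorm (f x.1) (conjMap f x.2) = polNorm x.1 x.2

namespace PreservesPolNorm

variable {f : (m → n → ℂ) → m → n → ℂ}

lemma hasDerivAt_conjMap (h : PreservesPolNorm f) (w : m → n → ℂ) :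
    HasDerivAt (fun t : ℂ => conjMap f (t • w)) (star (fderiv ℂ f 0 (star w))) 0 := by
  have hline : HasDerivAt (fun t : ℂ => t • w) w 0 := by
    simpa using (hasDerivAt_id (0 : ℂ)).smul_const w
  have hconj := h.diff.hasFDerivAt.star_star
  rw [show star (0 : m → n → ℂ) = (0 : ℂ) • w by simp] at hconj
  refine (hconj.comp_hasDerivAt (0 : ℂ) hline).congr_deriv ?_
  simp

lemma eventually_traceForm_fderiv (h : PreservesPolNorm f) :
    ∀ᶠ Z in 𝓝 0, ∀ w, traceForm (fderiv ℂ f 0 w) (f Z) = traceForm w Z := by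
  classical
  filter_upwards [h.polNorm_eq.curry_nhds] with Z hZ w
  have hline : HasDerivAt (fun t : ℂ => t • star w) (star w) 0 := by
    simpa using (hasDerivAt_id (0 : ℂ)).smul_const (star w)
  have hline0 : (0 : ℂ) • star w = 0 := zero_smul _ _
  have hconj := h.hasDerivAt_conjMap (star w)
  have hconj0 : conjMap f ((0 : ℂ) • star w) = 0 := by simp [conjMap, h.map_zero]
  have hderiv := hasDerivAt_log_polNorm (W := f Z) hconj
    (by rw [hconj0, polNorm_zero_left]; exact one_mem_slitPlane)
  have hderiv' := hasDerivAt_log_polNorm (W := Z) hline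
    (by rw [hline0, polNorm_zero_left]; exact one_mem_slitPlane)
  have heq : (fun t : ℂ => log (polNorm (conjMap f (t • star w)) (f Z))) =ᶠ[𝓝 0]
      fun t => log (polNorm (t • star w) Z) := by
    have hlim : Tendsto (fun t : ℂ => t • star w) (𝓝 0) (𝓝 0) := by
      simpa using hline.continuousAt.tendsto
    filter_upwards [hlim.eventually hZ] with t ht
    rw [polNorm_comm, ht, polNorm_comm]
  have huniq := hderiv.unique (hderiv'.congr_of_eventuallyEq heq)
  rw [hconj0, hline0, logSlope_zero_left, logSlope_zero_left, neg_inj, star_star] at huniq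
  rw [traceForm_apply_eq_trPair_star, huniq, traceForm_apply_eq_trPair_star]

lemma traceForm_fderiv_fderiv (h : PreservesPolNorm f) (w v : m → n → ℂ) :
    traceForm (fderiv ℂ f 0 w) (fderiv ℂ f 0 v) = traceForm w v := by
  have hcomp := (traceForm (fderiv ℂ f 0 w)).hasFDerivAt.comp 0 h.diff.hasFDerivAt
  exact DFunLike.congr_fun (hcomp.unique ((traceForm w).hasFDerivAt.congr_of_eventuallyEq
    (h.eventually_traceForm_fderiv.mono fun Z hZ => hZ w))) v

lemma fderiv_injective (h : PreservesPolNorm f) : Function.Injective (fderiv ℂ f 0) := by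
  refine (injective_iff_map_eq_zero _).2 fun v hv => eq_zero_of_traceForm_eq_zero fun w => ?_
  rw [← h.traceForm_fderiv_fderiv, hv, _root_.map_zero]

lemma exists_linearEquiv_eventually_eq (h : PreservesPolNorm f) :
    ∃ T : (m → n → ℂ) ≃ₗ[ℂ] (m → n → ℂ), ∀ᶠ Z in 𝓝 0, f Z = T Z := by
  let T := LinearEquiv.ofInjectiveEndo (fderiv ℂ f 0 : (m → n → ℂ) →ₗ[ℂ] (m → n → ℂ))
    h.fderiv_injective
  refine ⟨T, h.eventually_traceForm_fderiv.mono fun Z hZ => ?_⟩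
  refine sub_eq_zero.1 (eq_zero_of_traceForm_eq_zero fun w => ?_)
  obtain ⟨u, rfl⟩ := T.surjective w
  exact (map_sub _ _ _).trans (sub_eq_zero.2 ((hZ u).trans (h.traceForm_fderiv_fderiv u Z).symm))

end PreservesPolNorm

variable {T : (m → n → ℂ) ≃ₗ[ℂ] (m → n → ℂ)}

lemma polNorm_conjMap_of_eventually (h : ∀ᶠ x in 𝓝 ((0 : m → n → ℂ), (0 : m → n → ℂ)),
    polNorm (T x.1) (conjMap T x.2) = polNorm x.1 x.2) (Z W : m → n → ℂ) :
    polNorm (T Z) (conjMap T W) = polNorm Z W := by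
  have hT : Differentiable ℂ T := T.toContinuousLinearEquiv.differentiable
  have hconj : Differentiable ℂ (conjMap T) := fun _ => differentiableAt_conjMap (hT _)
  have hdiff : Differentiable ℂ fun x : (m → n → ℂ) × (m → n → ℂ) =>
      polNorm (T x.1) (conjMap T x.2) - polNorm x.1 x.2 := fun x =>
    (differentiableAt_polNorm (hT.comp differentiable_fst x)
      (hconj.comp differentiable_snd x)).sub
      (differentiableAt_polNorm differentiableAt_fst differentiableAt_snd)
  have hzero : Set.EqOn (fun x : (m → n → ℂ) × (m → n → ℂ) =>
      polNorm (T x.1) (conjMap T x.2) - polNorm x.1 x.2) (fun _ => 0) Set.univ :=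
    eqOn_const_of_eventually isOpen_univ isPreconnected_univ hdiff.differentiableOn
      (Set.mem_univ (0, 0)) (h.mono fun x hx => sub_eq_zero.2 hx)
  simpa only [sub_eq_zero] using hzero (Set.mem_univ (Z, W))

lemma posDef_one_sub_smul {k : Type*} [DecidableEq k] {H : Matrix k k ℂ} (h : (1 - H).PosDef)
    {t : ℝ} (ht : t ∈ Set.Icc (0 : ℝ) 1) : (1 - (t : ℂ) • H).PosDef := by
  obtain ⟨ht0, ht1⟩ := ht
  have hconvex : 1 - (t : ℂ) • H = (t : ℂ) • (1 - H) + ((1 - t : ℝ) : ℂ) • 1 := by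
    push_cast
    module
  rcases ht0.eq_or_lt with rfl | ht
  · simpa using PosDef.one
  · rw [hconvex]
    exact (h.smul (mod_cast ht)).add_posSemidef (PosSemidef.one.smul (mod_cast sub_nonneg.2 ht1))

lemma exists_det_one_sub_smul_eq_zero {H : Matrix m m ℂ} (hH : H.IsHermitian)
    (h : ¬ (1 - H).PosDef) : ∃ t ∈ Set.Icc (0 : ℝ) 1, (1 - (t : ℂ) • H).det = 0 := by
  have hH' : (1 - H).IsHermitian := isHermitian_one.sub hH
  simp only [hH'.posDef_iff_eigenvalues_pos, not_forall, not_lt] at h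
  obtain ⟨i, hi⟩ := h
  set μ := hH'.eigenvalues i
  have hμ : 0 < 1 - μ := by linarith
  have heig := hH'.mulVec_eigenvectorBasis i
  set x := (hH'.eigenvectorBasis i).ofLp
  have hx : x ≠ 0 := fun h0 =>
    hH'.eigenvectorBasis.orthonormal.ne_zero i (WithLp.ofLp_injective 2 h0)
  have hHx : H *ᵥ x = ((1 - μ : ℝ) : ℂ) • x := by
    rw [sub_mulVec, one_mulVec, sub_eq_iff_eq_add', ← sub_eq_iff_eq_add] at heig
    rw [← heig]
    ext j
    simp [sub_mul, μ]
  refine ⟨(1 - μ)⁻¹, ⟨by positivity, inv_le_one_of_one_le₀ (by linarith)⟩,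
    exists_mulVec_eq_zero_iff.1 ⟨x, hx, ?_⟩⟩
  rw [sub_mulVec, one_mulVec, smul_mulVec, hHx, smul_smul, ← ofReal_mul, inv_mul_cancel₀ hμ.ne',
    ofReal_one, one_smul, sub_self]

lemma posDef_one_sub_iff {H : Matrix m m ℂ} (hH : H.IsHermitian) :
    (1 - H).PosDef ↔ ∀ t ∈ Set.Icc (0 : ℝ) 1, (1 - (t : ℂ) • H).det ≠ 0 := by
  refine ⟨fun h t ht => (posDef_one_sub_smul h ht).det_pos.ne', fun h => ?_⟩
  by_contra hpos
  obtain ⟨t, ht, hdet⟩ := exists_det_one_sub_smul_eq_zero hH hpos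
  exact h t ht hdet

lemma polNorm_smul_star (t : ℂ) (Z : m → n → ℂ) :
    polNorm (t • Z) (star Z) = (1 - t • (of Z * (of Z)ᴴ)).det := by
  rw [← Matrix.smul_mul]
  rfl

variable {p q : ℕ} {f : (Fin p → Fin q → ℂ) → Fin p → Fin q → ℂ} {φ : (Fin p → Fin q → ℂ) → ℂ}
  {Z₁ : Fin p → Fin q → ℂ}

lemma mem_typeIDomain_iff_polNorm_ne_zero {Z : Fin p → Fin q → ℂ} :
    Z ∈ typeIDomain p q ↔ ∀ t ∈ Set.Icc (0 : ℝ) 1, polNorm ((t : ℂ) • Z) (star Z) ≠ 0 := by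
  simp only [polNorm_smul_star]
  exact posDef_one_sub_iff (isHermitian_mul_conjTranspose_self _)

lemma mapsTo_typeIDomain_of_polNorm {T : (Fin p → Fin q → ℂ) ≃ₗ[ℂ] (Fin p → Fin q → ℂ)}
    (h : ∀ Z W, polNorm (T Z) (conjMap T W) = polNorm Z W) :
    Set.MapsTo T (typeIDomain p q) (typeIDomain p q) := by
  intro Z hZ
  rw [mem_typeIDomain_iff_polNorm_ne_zero] at hZ ⊢
  intro t ht
  have hpol := h ((t : ℂ) • Z) (star Z)
  rw [map_smul, conjMap, star_star] at hpol
  rw [hpol]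
  exact hZ t ht

lemma isNormAut_of_polNorm {T : (Fin p → Fin q → ℂ) ≃ₗ[ℂ] (Fin p → Fin q → ℂ)}
    (h : ∀ Z W, polNorm (T Z) (conjMap T W) = polNorm Z W) {κ : ℂ} (hκ : normSq κ = 1) :
    IsNormAut T T.symm (fun _ => κ) where
  diff := T.toContinuousLinearEquiv.differentiable.differentiableOn
  maps := mapsTo_typeIDomain_of_polNorm h
  diff_inv := T.symm.toContinuousLinearEquiv.differentiable.differentiableOn
  maps_inv := mapsTo_typeIDomain_of_polNorm fun Z W => by
    simpa [conjMap] using (h (T.symm Z) (conjMap T.symm W)).symm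
  left_inv Z _ := T.symm_apply_apply Z
  right_inv Z _ := T.apply_symm_apply Z
  diff_factor := differentiableOn_const κ
  factor_ne_zero _ _ := normSq_pos.1 (hκ ▸ one_pos)
  norm_eq Z _ := by
    have hpol := h Z (star Z)
    rw [conjMap, star_star] at hpol
    rw [hκ, one_mul]
    exact congrArg re hpol

lemma zero_mem_typeIDomain : (0 : Fin p → Fin q → ℂ) ∈ typeIDomain p q := by
  simpa [typeIDomain] using PosDef.one

namespace IsNormGerm

lemma eventually_polNorm_eq (h : IsNormGerm f φ Z₁) (hZ₁ : Z₁ ∈ typeIDomain p q) :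
    ∀ᶠ x in 𝓝 (Z₁, star Z₁), polNorm (f x.1) (conjMap f x.2) =
      φ x.1 * conjMap φ x.2 * polNorm x.1 x.2 := by
  refine (eventually_eq_zero_of_antidiagonal (K := fun x => polNorm (f x.1) (conjMap f x.2) -
    φ x.1 * conjMap φ x.2 * polNorm x.1 x.2) ?_ ?_).mono fun x hx => sub_eq_zero.1 hx
  · filter_upwards [eventually_and_star (h.diff.and h.diff_factor)] with x ⟨⟨hf, hφ⟩, hf', hφ'⟩
    exact (differentiableAt_polNorm (hf.comp x differentiableAt_fst)
        ((differentiableAt_conjMap hf').comp x differentiableAt_snd)).sub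
      (((hφ.comp x differentiableAt_fst).mul
        ((differentiableAt_conjMap hφ').comp x differentiableAt_snd)).mul
        (differentiableAt_polNorm differentiableAt_fst differentiableAt_snd))
  · filter_upwards [h.maps, h.norm_eq, isOpen_typeIDomain.eventually_mem hZ₁] with Z hmem hnorm hZ
    rw [sub_eq_zero, conjMap, conjMap, star_star, polNorm_star_eq_genNormI hmem,
      polNorm_star_eq_genNormI hZ, hnorm, star_def, mul_conj, ofReal_mul]

lemma eventually_factor_eq (h : IsNormGerm f φ 0) (h0 : f 0 = 0) :
    normSq (φ 0) = 1 ∧ ∀ᶠ Z in 𝓝 0, φ Z = φ 0 := by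
  have hmul : ∀ᶠ Z in 𝓝 0, 1 = φ Z * star (φ 0) := by
    have hpol := h.eventually_polNorm_eq zero_mem_typeIDomain
    rw [star_zero] at hpol
    filter_upwards [(Continuous.prodMk_left 0).continuousAt.eventually hpol] with Z hZ
    simpa [conjMap, h0, polNorm_zero_right] using hZ
  have hmul0 := hmul.self_of_nhds
  refine ⟨?_, hmul.mono fun Z hZ => mul_right_cancel₀
    (right_ne_zero_of_mul (hmul0 ▸ one_ne_zero)) (hZ.symm.trans hmul0)⟩
  rw [star_def, mul_conj] at hmul0
  exact_mod_cast hmul0.symm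

lemma preservesPolNorm (h : IsNormGerm f φ 0) (h0 : f 0 = 0) : PreservesPolNorm f := by
  obtain ⟨hnorm, hφ⟩ := h.eventually_factor_eq h0
  refine ⟨h0, h.diff.self_of_nhds, ?_⟩
  have hpol := h.eventually_polNorm_eq zero_mem_typeIDomain
  have hφ := eventually_and_star hφ
  rw [star_zero] at hpol hφ
  filter_upwards [hpol, hφ] with x hx ⟨hφ₁, hφ₂⟩
  rw [hx, conjMap, hφ₁, hφ₂, star_def, mul_conj, hnorm, ofReal_one, one_mul]

lemma exists_isNormAut_of_map_zero (h : IsNormGerm f φ 0) (h0 : f 0 = 0) :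
    ∃ ψ ψ' φ', IsNormAut ψ ψ' φ' ∧ ∀ᶠ Z in 𝓝 0, f Z = ψ Z ∧ φ Z = φ' Z := by
  have hf := h.preservesPolNorm h0
  obtain ⟨hκ, hφ⟩ := h.eventually_factor_eq h0
  obtain ⟨T, hT⟩ := hf.exists_linearEquiv_eventually_eq
  have hTstar := eventually_and_star hT
  rw [star_zero] at hTstar
  have hTpol : ∀ᶠ x in 𝓝 ((0 : Fin p → Fin q → ℂ), (0 : Fin p → Fin q → ℂ)),
      polNorm (T x.1) (conjMap T x.2) = polNorm x.1 x.2 := by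
    filter_upwards [hf.polNorm_eq, hTstar] with x hx ⟨hT₁, hT₂⟩
    rwa [conjMap, ← hT₁, ← hT₂]
  exact ⟨T, T.symm, _, isNormAut_of_polNorm (polNorm_conjMap_of_eventually hTpol) hκ, hT.and hφ⟩

/-- The automorphism group being transitive, both `Z₁` and `f Z₁` may be moved to the origin. -/
theorem exists_isNormAut (h : IsNormGerm f φ Z₁) (hZ₁ : Z₁ ∈ typeIDomain p q) :
    ∃ ψ ψ' φ', IsNormAut ψ ψ' φ' ∧ ∀ᶠ Z in 𝓝 Z₁, f Z = ψ Z ∧ φ Z = φ' Z := by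
  have hfZ₁ := h.maps.self_of_nhds
  obtain ⟨α, α', a, hα, hα0⟩ := exists_isNormAut_apply_eq_zero hfZ₁
  obtain ⟨β, β', b, hβ, hβ0⟩ := exists_isNormAut_apply_eq_zero hZ₁
  have hβ'0 : β' 0 = Z₁ := by rw [← hβ0, hβ.left_inv hZ₁]
  have hfβ' : IsNormGerm (f ∘ β') (fun Z => φ (β' Z) * (b (β' Z))⁻¹) 0 :=
    IsNormGerm.comp (hβ'0.symm ▸ h) (hβ.symm.isNormGerm zero_mem_typeIDomain)
  have hgerm := IsNormGerm.comp (hα.isNormGerm hfβ'.maps.self_of_nhds) hfβ'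
  obtain ⟨ψ, ψ', κ, hψ, heq⟩ := hgerm.exists_isNormAut_of_map_zero (by simp [hβ'0, hα0])
  refine ⟨_, _, _, (hα.symm.comp hψ).comp hβ, ?_⟩
  have hβt : Tendsto β (𝓝 Z₁) (𝓝 0) := hβ0 ▸ (hβ.isNormGerm hZ₁).tendsto
  filter_upwards [hβt.eventually heq, h.maps, isOpen_typeIDomain.eventually_mem hZ₁]
    with Z ⟨hψZ, hκZ⟩ hfZ hZ
  simp only [Function.comp_apply, hβ.left_inv hZ] at hψZ hκZ ⊢
  rw [← hψZ, hα.left_inv hfZ, ← hκZ]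
  have := hα.factor_ne_zero _ hfZ
  have := hβ.factor_ne_zero _ hZ
  exact ⟨rfl, by field_simp⟩

end IsNormGerm

end OriginRigidity

/-- Parts (1) and (3) of the main theorem for `Ω₁ = Ω₂ = D^I_{p,q}` with
`min(p,q) ≥ 2`: a nonconstant holomorphic map defined near a piece of the circle bundle
`Σ` and sending it into `Σ` coincides, on a nonempty open set, with a norm-preserving
holomorphic isomorphism `(Z,ξ) ↦ (ψ(Z), ξ·φ(Z))`; in particular the latter is a
biholomorphism of the disc bundle `D` onto itself. -/
theorem typeI_circle_bundle_rigidity (p q : ℕ) (hpq : 2 ≤ min p q)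
    (U : Set ((Fin p → Fin q → ℂ) × ℂ)) (hUopen : IsOpen U) (hUconn : IsConnected U)
    (hUS : (U ∩ circTypeI p q).Nonempty)
    (F : ((Fin p → Fin q → ℂ) × ℂ) → ((Fin p → Fin q → ℂ) × ℂ))
    (hF : DifferentiableOn ℂ F U)
    (hFnc : ¬ ∃ c, Set.EqOn F (fun _ => c) U)
    (hFmap : Set.MapsTo F (U ∩ circTypeI p q) (circTypeI p q)) :
    ∃ (ψ : (Fin p → Fin q → ℂ) → (Fin p → Fin q → ℂ)) (φ : (Fin p → Fin q → ℂ) → ℂ),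
      Biholo ψ (typeIDomain p q) (typeIDomain p q) ∧
      DifferentiableOn ℂ φ (typeIDomain p q) ∧
      (∀ Z ∈ typeIDomain p q, φ Z ≠ 0) ∧
      (∀ Z ∈ typeIDomain p q, genNormI (ψ Z) = Complex.normSq (φ Z) * genNormI Z) ∧
      (∃ V : Set ((Fin p → Fin q → ℂ) × ℂ), IsOpen V ∧ V.Nonempty ∧ V ⊆ U ∧
        Set.EqOn F (fun P => (ψ P.1, P.2 * φ P.1)) V) ∧
      Biholo (fun P : (Fin p → Fin q → ℂ) × ℂ => (ψ P.1, P.2 * φ P.1))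
        (discTypeI p q) (discTypeI p q) := by
  have : Nontrivial (Fin p) := Fin.nontrivial_iff_two_le.2 (hpq.trans (min_le_left p q))
  have : Nontrivial (Fin q) := Fin.nontrivial_iff_two_le.2 (hpq.trans (min_le_right p q))
  obtain ⟨P₁, f, φ₁, hP₁, hgerm, hform⟩ :=
    exists_bundle_form hUopen hUconn.isPreconnected hUS hF hFnc hFmap
  obtain ⟨ψ, ψ', φ, h, heq⟩ := hgerm.exists_isNormAut hP₁.2.1
  refine ⟨ψ, φ, h.biholo, h.diff_factor, h.factor_ne_zero, h.norm_eq, ?_, h.biholo_bundleMap⟩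
  have hev : ∀ᶠ P in 𝓝 P₁, P ∈ U ∧ F P = (ψ P.1, P.2 * φ P.1) := by
    filter_upwards [hUopen.mem_nhds hP₁.1, hform, continuousAt_fst.eventually heq]
      with P hPU hFP ⟨hψ, hφ⟩
    exact ⟨hPU, by rw [hFP, bundleMap, hψ, hφ]⟩
  obtain ⟨V, hV, hVo, hPV⟩ := eventually_nhds_iff.1 hev
  exact ⟨V, hVo, ⟨P₁, hPV⟩, fun P hP => (hV P hP).1, fun P hP => (hV P hP).2⟩
end
end

section
/- Let n ≥ 1 and let k₁,…,kₙ be positive integers; set ρ(z,w) = ∏_{j=1}^n (1 − z_j w_j)^{k_j} for z,w ∈ ℂⁿ. Let U ⊆ ℂⁿ be a nonempty open set, let b be a nonconstant polynomial in the n+1 variables (w,η) ∈ ℂⁿ × ℂ, and let V be a nonempty subset of the zero set Z(b) = {(w,η) : b(w,η)=0} that is relatively open in Z(b) and satisfies η ≠ 0 for every (w,η) ∈ V. Then the set W = {(z, ρ(z,w)/η) : z ∈ U, (w,η) ∈ V} ⊆ ℂⁿ × ℂ has nonempty interior in ℂ^{n+1}. -/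
noncomputable section

open Complex

/-- The complexified generic norm `ρ(z,w) = ∏_j (1 − z_j w_j)^{k_j}` of the polydisc. -/
def rhoC {n : ℕ} (k : Fin n → ℕ) (z w : Fin n → ℂ) : ℂ :=
  ∏ j, (1 - z j * w j) ^ (k j)

/-- The zero set in `ℂⁿ × ℂ` of a polynomial `b` in the variables `(w, η)`. -/
def zeroSet {n : ℕ} (b : MvPolynomial (Fin n ⊕ Unit) ℂ) : Set ((Fin n → ℂ) × ℂ) :=
  {P | MvPolynomial.eval (Sum.elim P.1 (fun _ => P.2)) b = 0}

/-!
A point `(z, c)` is the reflection of the points `(w, ρ(z,w)/c)`, which form a graph over the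
`w`-space, so it lies in the swept set as soon as this graph meets `V`. The graph belonging to
`(z₀, ρ(z₀,w₀)/η₀)` meets `V` at `(w₀, η₀)`, and unless it lies entirely in the hypersurface, the
intersection persists for nearby `(z, c)`, by Hurwitz's theorem on a complex line through `w₀`.
Some `z₀ ∈ U` makes the graph leave the hypersurface: if the hypersurface does not contain the
whole line over `w`, and `ρ(z,w)/ρ(z,w₀)` is a nonconstant function of `z`, then the values of this
quotient on `U` contain an open set, whereas the `η` with `(w, η)` on the hypersurface are isolated.
-/

open Bornology Filter Function Metric Set Topology

section PersistenceOfZeros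

lemma exists_zero_of_norm_lt_of_forall_mem_frontier_le {E : Type*} [NormedAddCommGroup E]
    [NormedSpace ℂ E] [Nontrivial E] {g : E → ℂ} {D : Set E} {a : E} {ε : ℝ} (hD : IsBounded D)
    (ha : a ∈ D) (hg : DiffContOnCl ℂ g D) (hga : ‖g a‖ < ε)
    (hε : ∀ x ∈ frontier D, ε ≤ ‖g x‖) : ∃ x ∈ closure D, g x = 0 := by
  by_contra! hne
  have hε₀ : 0 < ε := (norm_nonneg _).trans_lt hga
  have hinv : ‖g⁻¹ a‖ ≤ ε⁻¹ :=
    norm_le_of_forall_mem_frontier_norm_le hD (hg.inv hne)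
      (fun x hx => by simpa using inv_anti₀ hε₀ (hε x hx)) (subset_closure ha)
  rw [Pi.inv_apply, norm_inv] at hinv
  exact hga.not_ge ((inv_le_inv₀ (norm_pos_iff.2 (hne a (subset_closure ha))) hε₀).1 hinv)

lemma eventually_ne_zero_of_differentiable {g : ℂ → ℂ} (hg : Differentiable ℂ g) (hne : g ≠ 0)
    (a : ℂ) : ∀ᶠ t in 𝓝[≠] a, g t ≠ 0 := by
  have han : AnalyticOnNhd ℂ g univ := fun t _ => hg.analyticAt t
  exact (hg.analyticAt a).eventually_eq_zero_or_eventually_ne_zero.resolve_left fun h =>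
    hne (han.eq_of_eventuallyEq analyticOnNhd_const h)

variable {X : Type*} [TopologicalSpace X] {x₀ : X}

/-- Hurwitz's theorem, via the minimum modulus principle rather than by counting zeros. -/
lemma nhds_le_map_fst_nhdsWithin_zeros_complex {G : X × ℂ → ℂ} {t₀ : ℂ}
    (hcont : ∀ t, ContinuousAt G (x₀, t)) (hdiff : ∀ x, Differentiable ℂ fun t => G (x, t))
    (hzero : G (x₀, t₀) = 0) (hne : ∃ t, G (x₀, t) ≠ 0) :
    𝓝 x₀ ≤ map Prod.fst (𝓝[G ⁻¹' {0}] (x₀, t₀)) := by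
  rw [le_map_iff]
  intro S hS
  obtain ⟨N, hN, hNS⟩ := mem_nhdsWithin_iff_exists_mem_nhds_inter.1 hS
  obtain ⟨A, hA, B, hB, hAB⟩ := mem_nhds_prod_iff.1 hN
  have hisolated : ∀ᶠ t in 𝓝[≠] t₀, G (x₀, t) ≠ 0 :=
    eventually_ne_zero_of_differentiable (hdiff x₀)
      (fun h => hne.elim fun t ht => ht (congrFun h t)) t₀
  obtain ⟨r, hr, hrB⟩ := nhds_basis_closedBall.mem_iff.1
    (inter_mem hB (eventually_nhdsWithin_iff.1 hisolated))
  have hsphere : ∀ t ∈ sphere t₀ r, G (x₀, t) ≠ 0 := fun t ht =>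
    (hrB (sphere_subset_closedBall ht)).2 (ne_of_mem_sphere ht hr.ne')
  obtain ⟨ε, hε₀, hε⟩ : ∃ ε > 0, ∀ t ∈ sphere t₀ r, ε < ‖G (x₀, t)‖ := by
    obtain ⟨t₁, ht₁, hmin⟩ := (isCompact_sphere t₀ r).exists_isMinOn
      (NormedSpace.sphere_nonempty.2 hr.le) (hdiff x₀).continuous.norm.continuousOn
    obtain ⟨ε, hε₀, hε⟩ := exists_between (norm_pos_iff.2 (hsphere t₁ ht₁))
    exact ⟨ε, hε₀, fun t ht => hε.trans_le (hmin ht)⟩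
  have hlarge : ∀ᶠ x in 𝓝 x₀, ∀ t ∈ sphere t₀ r, ε ≤ ‖G (x, t)‖ :=
    (isCompact_sphere t₀ r).eventually_forall_of_forall_eventually fun t ht =>
      ((hcont t).norm.eventually (lt_mem_nhds (hε t ht))).mono fun _ => le_of_lt
  have hsmall : ∀ᶠ x in 𝓝 x₀, ‖G (x, t₀)‖ < ε :=
    (Continuous.prodMk_left t₀).continuousAt.eventually
      ((hcont t₀).norm.eventually (gt_mem_nhds (by simpa [hzero] using hε₀)))
  filter_upwards [hA, hlarge, hsmall] with x hxA hxlarge hxsmall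
  obtain ⟨t, ht, hGt⟩ := exists_zero_of_norm_lt_of_forall_mem_frontier_le isBounded_ball
    (mem_ball_self hr) (hdiff x).diffContOnCl hxsmall (by rwa [frontier_ball t₀ hr.ne'])
  rw [closure_ball t₀ hr.ne'] at ht
  exact ⟨(x, t), hNS ⟨hAB ⟨hxA, (hrB ht).1⟩, hGt⟩, rfl⟩

lemma nhds_le_map_fst_nhdsWithin_zeros {F : Type*} [NormedAddCommGroup F] [NormedSpace ℂ F]
    {G : X × F → ℂ} {w₀ : F} (hcont : ∀ w, ContinuousAt G (x₀, w))
    (hdiff : ∀ x, Differentiable ℂ fun w => G (x, w)) (hzero : G (x₀, w₀) = 0)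
    (hne : ∃ w, G (x₀, w) ≠ 0) : 𝓝 x₀ ≤ map Prod.fst (𝓝[G ⁻¹' {0}] (x₀, w₀)) := by
  obtain ⟨w, hw⟩ := hne
  let line : ℂ → F := fun t => w₀ + t • (w - w₀)
  have hline : Differentiable ℂ line := by fun_prop
  have hline₀ : line 0 = w₀ := by simp [line]
  have hline₁ : line 1 = w := by simp [line]
  let L : X × ℂ → X × F := Prod.map id line
  have hL : Continuous L := continuous_id.prodMap hline.continuous
  have hL₀ : L (x₀, 0) = (x₀, w₀) := Prod.ext rfl hline₀
  calc 𝓝 x₀ ≤ map Prod.fst (𝓝[(G ∘ L) ⁻¹' {0}] (x₀, 0)) :=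
        nhds_le_map_fst_nhdsWithin_zeros_complex
          (fun t => (hcont (line t)).comp (f := L) hL.continuousAt)
          (fun x => (hdiff x).comp hline) (by rwa [comp_apply, hL₀])
          ⟨1, by simpa [L, hline₁] using hw⟩
    _ = map Prod.fst (map L (𝓝[L ⁻¹' (G ⁻¹' {0})] (x₀, 0))) := by rw [map_map]; rfl
    _ ≤ map Prod.fst (𝓝[G ⁻¹' {0}] (x₀, w₀)) := by
        rw [← hL₀]
        exact map_mono (hL.continuousWithinAt.tendsto_nhdsWithin (mapsTo_preimage _ _))

end PersistenceOfZeros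

section Quotients

variable {E : Type*} [NormedAddCommGroup E] [NormedSpace ℂ E]

lemma exists_mem_ne_zero_of_isOpen {F : Type*} [NormedAddCommGroup F] [NormedSpace ℂ F]
    {v : E → F} (hv : AnalyticOnNhd ℂ v univ) (hne : v ≠ 0)
    {U : Set E} (hU : IsOpen U) (hU₀ : U.Nonempty) : ∃ z ∈ U, v z ≠ 0 := by
  by_contra! h
  obtain ⟨z, hz⟩ := hU₀
  exact hne (hv.eq_of_eventuallyEq analyticOnNhd_const (eventually_of_mem (hU.mem_nhds hz) h))

lemma exists_isOpen_subset_image_div {u v : E → ℂ} (hu : AnalyticOnNhd ℂ u univ)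
    (hv : AnalyticOnNhd ℂ v univ) (hind : LinearIndependent ℂ ![v, u]) {U : Set E}
    (hU : IsOpen U) (hU₀ : U.Nonempty) :
    ∃ D : Set ℂ, IsOpen D ∧ D.Nonempty ∧ D ⊆ (fun z => u z / v z) '' (U ∩ {z | v z ≠ 0}) := by
  have hv₀ : v ≠ 0 := hind.ne_zero 0
  obtain ⟨z₁, hz₁, hvz₁⟩ := exists_mem_ne_zero_of_isOpen hv hv₀ hU hU₀
  have hopen : IsOpen (U ∩ {z | v z ≠ 0}) :=
    hU.inter (isOpen_ne_fun hv.continuous continuous_const)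
  obtain ⟨r, hr, hball⟩ := isOpen_iff.1 hopen z₁ ⟨hz₁, hvz₁⟩
  have hquot : AnalyticOnNhd ℂ (fun z => u z / v z) (ball z₁ r) :=
    (hu.mono (subset_univ _)).div (hv.mono (subset_univ _)) fun z hz => (hball hz).2
  obtain ⟨c, hc⟩ | hmap := hquot.is_constant_or_isOpen (convex_ball z₁ r).isPreconnected
  · have hcv : c • v =ᶠ[𝓝 z₁] u := by
      filter_upwards [ball_mem_nhds z₁ hr] with z hz
      exact ((div_eq_iff (hball hz).2).1 (hc z hz)).symm
    exact absurd ((hv.const_smul (c := c)).eq_of_eventuallyEq hu hcv)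
      ((LinearIndependent.pair_iff' hv₀).1 hind c)
  · exact ⟨_, hmap _ Subset.rfl isOpen_ball, (nonempty_ball.2 hr).image _, image_mono hball⟩

end Quotients

section Reflection

variable {E F : Type*}

/-- The reflection map `(z, (w, η)) ↦ R_z(w, η) = (z, ρ(z,w)/η)`, with the variable `z` kept as
part of the argument. -/
def reflection (ρ : E → F → ℂ) (x : E × (F × ℂ)) : E × ℂ :=
  (x.1, ρ x.1 x.2.1 / x.2.2)

/-- For `x = (z, c)`, the point `(z, (w, ρ(z,w)/c))` that the reflection map sends back to
`x`, provided that `ρ(z,w) ≠ 0`; otherwise its image is `(z, 0)`. -/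
def reflectionLift (ρ : E → F → ℂ) (p : (E × ℂ) × F) : E × (F × ℂ) :=
  (p.1.1, p.2, ρ p.1.1 p.2 / p.1.2)

lemma reflection_reflectionLift {ρ : E → F → ℂ} {p : (E × ℂ) × F} (h : ρ p.1.1 p.2 ≠ 0) :
    reflection ρ (reflectionLift ρ p) = p.1 :=
  Prod.ext rfl (div_div_cancel₀ h)

lemma reflectionLift_reflection {ρ : E → F → ℂ} {z : E} {w : F} {η : ℂ} (h : ρ z w ≠ 0) :
    reflectionLift ρ (reflection ρ (z, w, η), w) = (z, w, η) :=
  Prod.ext rfl (Prod.ext rfl (div_div_cancel₀ h))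

lemma differentiable_snd_reflectionLift [NormedAddCommGroup F] [NormedSpace ℂ F]
    {ρ : E → F → ℂ} {x : E × ℂ} (hρ : Differentiable ℂ (ρ x.1)) :
    Differentiable ℂ fun w => (reflectionLift ρ (x, w)).2 :=
  differentiable_id.prodMk (by simpa only [div_eq_mul_inv] using hρ.mul_const x.2⁻¹)

section TopologicalParameter

variable [TopologicalSpace E] {ρ : E → F → ℂ}

lemma continuousAt_reflectionLift [TopologicalSpace F] (hρ : Continuous (uncurry ρ))
    {p : (E × ℂ) × F} (hp : p.1.2 ≠ 0) : ContinuousAt (reflectionLift ρ) p := by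
  have hρp : Continuous fun q : (E × ℂ) × F => ρ q.1.1 q.2 :=
    hρ.comp (continuous_fst.fst.prodMk continuous_snd)
  exact continuousAt_fst.fst.prodMk
    (continuousAt_snd.prodMk (hρp.continuousAt.div continuousAt_fst.snd hp))

variable [NormedAddCommGroup F] [NormedSpace ℂ F] {f : F × ℂ → ℂ}

lemma nhds_reflection_le_map (hρ : Continuous (uncurry ρ)) (hρ_diff : ∀ z, Differentiable ℂ (ρ z))
    (hf : Differentiable ℂ f) {z₀ : E} {w₀ : F} {η₀ : ℂ} (hρ₀ : ρ z₀ w₀ ≠ 0) (hη₀ : η₀ ≠ 0)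
    (hf₀ : f (w₀, η₀) = 0)
    (hne : ∃ w, f (reflectionLift ρ (reflection ρ (z₀, w₀, η₀), w)).2 ≠ 0) :
    𝓝 (reflection ρ (z₀, w₀, η₀)) ≤
      map (reflection ρ) (𝓝[univ ×ˢ (f ⁻¹' {0})] (z₀, w₀, η₀)) := by
  set x₀ : E × ℂ := reflection ρ (z₀, w₀, η₀)
  have hlift₀ : reflectionLift ρ (x₀, w₀) = (z₀, w₀, η₀) := reflectionLift_reflection hρ₀
  have hlift (w : F) : ContinuousAt (reflectionLift ρ) (x₀, w) :=
    continuousAt_reflectionLift hρ (div_ne_zero hρ₀ hη₀)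
  let G : (E × ℂ) × F → ℂ := fun p => f (reflectionLift ρ p).2
  have hpersist : 𝓝 x₀ ≤ map Prod.fst (𝓝[G ⁻¹' {0}] (x₀, w₀)) :=
    nhds_le_map_fst_nhdsWithin_zeros
      (fun w => hf.continuous.continuousAt.comp (hlift w).snd)
      (fun x => hf.comp (differentiable_snd_reflectionLift (hρ_diff x.1)))
      (by simpa only [G, hlift₀] using hf₀) hne
  have hsection : Prod.fst =ᶠ[𝓝[G ⁻¹' {0}] (x₀, w₀)] reflection ρ ∘ reflectionLift ρ := by
    have hρ_ne : ∀ᶠ p in 𝓝 (x₀, w₀), ρ p.1.1 p.2 ≠ 0 :=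
      (hρ.comp (continuous_fst.fst.prodMk continuous_snd)).continuousAt.eventually_ne hρ₀
    filter_upwards [nhdsWithin_le_nhds hρ_ne] with p hp
    exact (reflection_reflectionLift hp).symm
  calc 𝓝 x₀ ≤ map Prod.fst (𝓝[G ⁻¹' {0}] (x₀, w₀)) := hpersist
    _ = map (reflection ρ) (map (reflectionLift ρ) (𝓝[G ⁻¹' {0}] (x₀, w₀))) := by
        rw [map_congr hsection, map_map]
    _ ≤ map (reflection ρ) (𝓝[univ ×ˢ (f ⁻¹' {0})] (z₀, w₀, η₀)) := by
        rw [← hlift₀]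
        exact map_mono ((hlift w₀).continuousWithinAt.tendsto_nhdsWithin fun _ hp => ⟨trivial, hp⟩)

end TopologicalParameter

variable [NormedAddCommGroup E] [NormedSpace ℂ E] [NormedAddCommGroup F] [NormedSpace ℂ F]
  {ρ : E → F → ℂ} {f : F × ℂ → ℂ}

lemma exists_mem_apply_reflectionLift_ne_zero (hρ : ∀ w, AnalyticOnNhd ℂ (ρ · w) univ)
    (hf : Differentiable ℂ f) {w₀ w : F} {η₀ η : ℂ} (hη₀ : η₀ ≠ 0)
    (hind : LinearIndependent ℂ ![(ρ · w₀), (ρ · w)]) (hfw : f (w, η) ≠ 0) {U : Set E}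
    (hU : IsOpen U) (hU₀ : U.Nonempty) :
    ∃ z ∈ U, ρ z w₀ ≠ 0 ∧ f (reflectionLift ρ (reflection ρ (z, w₀, η₀), w)).2 ≠ 0 := by
  obtain ⟨D, hD, hD₀, hDU⟩ := exists_isOpen_subset_image_div (hρ w) (hρ w₀) hind hU hU₀
  have hg : Differentiable ℂ fun t => f (w, t * η₀) := by fun_prop
  have hg₀ : (fun t => f (w, t * η₀)) ≠ 0 := fun h =>
    hfw (by simpa [div_mul_cancel₀ η hη₀] using congrFun h (η / η₀))
  obtain ⟨t, ht, hft⟩ := exists_mem_ne_zero_of_isOpen (fun t _ => hg.analyticAt t) hg₀ hD hD₀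
  obtain ⟨z, ⟨hzU, hρz⟩, rfl⟩ := hDU ht
  refine ⟨z, hzU, hρz, ?_⟩
  simpa only [reflectionLift, reflection, div_div_eq_mul_div, div_mul_eq_mul_div] using hft

theorem reflection_sweeps_open_set_general (hρ : AnalyticOnNhd ℂ (uncurry ρ) univ)
    (hf : Differentiable ℂ f) (hf_ne : f ≠ 0) {P : F × ℂ} (hfP : f P = 0) (hηP : P.2 ≠ 0)
    (hind : Dense {w | LinearIndependent ℂ ![(ρ · P.1), (ρ · w)]})
    {U : Set E} (hU : IsOpen U) (hU₀ : U.Nonempty) {V : Set (F × ℂ)}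
    (hV : V ∈ 𝓝[f ⁻¹' {0}] P) :
    (interior (reflection ρ '' (U ×ˢ V))).Nonempty := by
  obtain ⟨w₀, η₀⟩ := P
  have hopen : IsOpen (Prod.fst '' {Q : F × ℂ | f Q ≠ 0}) :=
    isOpenMap_fst _ (isOpen_ne_fun hf.continuous continuous_const)
  obtain ⟨_, hw, ⟨w, η⟩, hfw, rfl⟩ :=
    hind.exists_mem_open hopen ((Function.ne_iff.1 hf_ne).elim fun Q hQ => ⟨Q.1, Q, hQ, rfl⟩)
  have hρ_left (w' : F) : AnalyticOnNhd ℂ (ρ · w') univ := fun z _ =>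
    (hρ (z, w') trivial).comp₂ analyticAt_id analyticAt_const
  have hρ_right (z : E) : Differentiable ℂ (ρ z) := fun w' =>
    (hρ (z, w') trivial).differentiableAt.comp (g := uncurry ρ) w' (by fun_prop)
  obtain ⟨z₀, hz₀, hρ₀, hne⟩ :=
    exists_mem_apply_reflectionLift_ne_zero hρ_left hf hηP hw hfw hU hU₀
  have hUV : U ×ˢ V ∈ 𝓝[univ ×ˢ (f ⁻¹' {0})] (z₀, w₀, η₀) :=
    nhdsWithin_prod (mem_nhdsWithin_of_mem_nhds (hU.mem_nhds hz₀)) hV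
  exact ⟨reflection ρ (z₀, w₀, η₀), mem_interior_iff_mem_nhds.2
    (nhds_reflection_le_map hρ.continuous hρ_right hf hρ₀ hηP hfP ⟨w, hne⟩ (image_mem_map hUV))⟩

end Reflection

section Polydisc

variable {n : ℕ} {k : Fin n → ℕ}

lemma analyticOnNhd_uncurry_rhoC : AnalyticOnNhd ℂ (uncurry (rhoC k)) univ := by
  intro p _
  have hfst (j : Fin n) : AnalyticAt ℂ (fun q : (Fin n → ℂ) × (Fin n → ℂ) => q.1 j) p :=
    analyticAt_pi_iff.1 analyticAt_fst j
  have hsnd (j : Fin n) : AnalyticAt ℂ (fun q : (Fin n → ℂ) × (Fin n → ℂ) => q.2 j) p :=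
    analyticAt_pi_iff.1 analyticAt_snd j
  change AnalyticAt ℂ (fun q : (Fin n → ℂ) × (Fin n → ℂ) => ∏ j, (1 - q.1 j * q.2 j) ^ k j) p
  exact Finset.analyticAt_fun_prod _ fun j _ =>
    (analyticAt_const.fun_sub ((hfst j).fun_mul (hsnd j))).fun_pow (k j)

lemma rhoC_single_left (w : Fin n → ℂ) (i : Fin n) (t : ℂ) :
    rhoC k (Pi.single i t) w = (1 - t * w i) ^ k i := by
  rw [rhoC, Finset.prod_eq_single i (fun j _ hj => by simp [hj]) (by simp), Pi.single_eq_same]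

lemma linearIndependent_one_sub_mul_pow {K : Type*} [Field K] {a b : K} (hab : a ≠ b) {m : ℕ}
    (hm : m ≠ 0) : LinearIndependent K ![fun t => (1 - t * a) ^ m, fun t => (1 - t * b) ^ m] := by
  rw [LinearIndependent.pair_iff]
  intro r s h
  have heval (t : K) : r * (1 - t * a) ^ m + s * (1 - t * b) ^ m = 0 := congrFun h t
  have hrs : r + s = 0 := by simpa using heval 0
  obtain rfl | ha := eq_or_ne a 0
  · have hr : r = 0 := by simpa [inv_mul_cancel₀ hab.symm, hm] using heval b⁻¹
    exact ⟨hr, by simpa [hr] using hrs⟩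
  · have hne : 1 - a⁻¹ * b ≠ 0 := fun h₀ =>
      hab (by rw [← mul_one a, sub_eq_zero.1 h₀, mul_inv_cancel_left₀ ha])
    have hs : s = 0 := by simpa [inv_mul_cancel₀ ha, hm, hne] using heval a⁻¹
    exact ⟨by simpa [hs] using hrs, hs⟩

lemma linearIndependent_rhoC {i : Fin n} (hi : k i ≠ 0) {w w' : Fin n → ℂ} (hw : w i ≠ w' i) :
    LinearIndependent ℂ ![(rhoC k · w), (rhoC k · w')] := by
  refine LinearIndependent.of_comp (LinearMap.funLeft ℂ ℂ (Pi.single i)) ?_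
  have hrestrict : LinearMap.funLeft ℂ ℂ (Pi.single i) ∘ ![(rhoC k · w), (rhoC k · w')] =
      ![fun t => (1 - t * w i) ^ k i, fun t => (1 - t * w' i) ^ k i] := by
    ext j t
    fin_cases j <;> exact rhoC_single_left _ i t
  rw [hrestrict]
  exact linearIndependent_one_sub_mul_pow hw hi

lemma dense_linearIndependent_rhoC (hk : k ≠ 0) (w₀ : Fin n → ℂ) :
    Dense {w | LinearIndependent ℂ ![(rhoC k · w₀), (rhoC k · w)]} := by
  obtain ⟨i, hi⟩ := Function.ne_iff.1 hk
  exact ((dense_compl_singleton (w₀ i)).preimage (isOpenMap_eval i)).mono fun w hw =>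
    linearIndependent_rhoC hi (Ne.symm hw)

lemma differentiable_eval_sumElim (b : MvPolynomial (Fin n ⊕ Unit) ℂ) : Differentiable ℂ
    fun P : (Fin n → ℂ) × ℂ => MvPolynomial.eval (Sum.elim P.1 fun _ => P.2) b := by
  have heval : Differentiable ℂ fun x => MvPolynomial.eval x b :=
    differentiableOn_univ.1 (AnalyticOnNhd.eval_mvPolynomial b).differentiableOn
  refine heval.comp (differentiable_pi.2 ?_)
  rintro (j | _) <;> simp only [Sum.elim_inl, Sum.elim_inr] <;> fun_prop

lemma eval_sumElim_ne_zero {b : MvPolynomial (Fin n ⊕ Unit) ℂ} (hb : b ≠ 0) :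
    (fun P : (Fin n → ℂ) × ℂ => MvPolynomial.eval (Sum.elim P.1 fun _ => P.2) b) ≠ 0 := by
  refine fun h => hb (MvPolynomial.funext fun x => ?_)
  have hx : Sum.elim (fun j => x (Sum.inl j)) (fun _ => x (Sum.inr ())) = x := by
    ext (j | j) <;> rfl
  simpa only [hx, Pi.zero_apply, map_zero] using congrFun h (fun j => x (Sum.inl j), x (Sum.inr ()))

end Polydisc

/-- Lemma 3.3 of the paper, specialized to the polydisc: the set
`W = {(z, ρ(z,w)/η) : z ∈ U, (w,η) ∈ V}` has nonempty interior, whenever `U` is a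
nonempty open subset of `ℂⁿ` and `V` is a nonempty relatively open subset of the zero set
of a nonconstant polynomial `b(w,η)` on which `η ≠ 0`. -/
theorem reflection_sweeps_open_set (n : ℕ) (hn : 1 ≤ n)
    (k : Fin n → ℕ) (hk : ∀ j, 0 < k j)
    (U : Set (Fin n → ℂ)) (hUopen : IsOpen U) (hUne : U.Nonempty)
    (b : MvPolynomial (Fin n ⊕ Unit) ℂ) (hb : ¬ ∃ c : ℂ, b = MvPolynomial.C c)
    (V : Set ((Fin n → ℂ) × ℂ)) (hVne : V.Nonempty)
    (hVopen : ∃ O : Set ((Fin n → ℂ) × ℂ), IsOpen O ∧ V = zeroSet b ∩ O)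
    (hVeta : ∀ P ∈ V, P.2 ≠ 0) :
    (interior ((fun x : (Fin n → ℂ) × ((Fin n → ℂ) × ℂ) =>
      ((x.1, rhoC k x.1 x.2.1 / x.2.2) : (Fin n → ℂ) × ℂ)) '' (U ×ˢ V))).Nonempty := by
  obtain ⟨O, hO, rfl⟩ := hVopen
  obtain ⟨P, hP⟩ := hVne
  have hk₀ : k ≠ 0 := Function.ne_iff.2 ⟨⟨0, hn⟩, (hk _).ne'⟩
  have hb₀ : b ≠ 0 := fun h => hb ⟨0, by rw [h, map_zero]⟩
  exact reflection_sweeps_open_set_general analyticOnNhd_uncurry_rhoC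
    (differentiable_eval_sumElim b) (eval_sumElim_ne_zero hb₀) hP.1 (hVeta P hP)
    (dense_linearIndependent_rhoC hk₀ P.1) hUopen hUne
    (inter_mem_nhdsWithin _ (hO.mem_nhds hP.2))
end
end
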